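/- Let A be a unital prime AF-algebra, 𝔄 = ⊗_{n=−∞}^{∞} A the two-sided infinite (minimal) tensor product of copies of A, and α the shift automorphism of 𝔄. Then the α-invariant pure states of 𝔄 are weak*-dense in the set of α-invariant states of 𝔄. -/

import Mathlib

open scoped ComplexOrder

/-- A state on a C*-algebra: a positive linear functional of norm one. -/
def IsState {A : Type*} [CStarAlgebra A] (φ : A →L[ℂ] ℂ) : Prop :=
  (∀ x : A, 0 ≤ φ (star x * x)) ∧ ‖φ‖ = 1

/-- A pure state: an extreme point of the state space. -/
def IsPureState {A : Type*} [CStarAlgebra A] (φ : A →L[ℂ] ℂ) : Prop :=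
  IsState φ ∧ ∀ (ψ₁ ψ₂ : A →L[ℂ] ℂ) (t : ℝ), IsState ψ₁ → IsState ψ₂ →
    0 < t → t < 1 → φ = t • ψ₁ + (1 - t) • ψ₂ → ψ₁ = φ ∧ ψ₂ = φ

/-- A prime C*-algebra: any two nonzero closed two-sided ideals have nonzero intersection. -/
def IsPrimeCStar (A : Type*) [CStarAlgebra A] : Prop :=
  ∀ I J : TwoSidedIdeal A, IsClosed (I : Set A) → IsClosed (J : Set A) →
    I ≠ ⊥ → J ≠ ⊥ → I ⊓ J ≠ ⊥

/-- An AF-algebra: the norm closure of an increasing union of finite-dimensional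
C*-subalgebras. -/
def IsAF (A : Type*) [CStarAlgebra A] : Prop :=
  ∃ S : ℕ → StarSubalgebra ℂ A, Monotone S ∧ (∀ n, FiniteDimensional ℂ (S n)) ∧
    Dense (⋃ n, (S n : Set A))

/-- A model of the two-sided infinite *minimal* tensor product `⊗_{n=-∞}^∞ A` of copies of a
unital C*-algebra `A`, together with the shift automorphism.  It is presented by commuting
unital embeddings `e n : A → T`, `n ∈ ℤ`, with dense combined range; the existence of product
states and the fact that product states separate the positive cone single out the *minimal*
tensor product among all C*-algebras generated by commuting copies of `A`. -/
structure ShiftTensorModel (A : Type*) [CStarAlgebra A] (T : Type*) [CStarAlgebra T] where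
  e : ℤ → A →⋆ₐ[ℂ] T
  inj : ∀ n, Function.Injective (e n)
  commutes : ∀ m n : ℤ, m ≠ n → ∀ x y : A, e m x * e n y = e n y * e m x
  generating : (StarAlgebra.adjoin ℂ (⋃ n : ℤ, Set.range (e n))).topologicalClosure = ⊤
  shift : T ≃⋆ₐ[ℂ] T
  shift_apply : ∀ n x, shift (e n x) = e (n + 1) x
  prodState : ∀ φ : ℤ → (A →L[ℂ] ℂ), (∀ n, IsState (φ n)) →
    ∃ Φ : T →L[ℂ] ℂ, IsState Φ ∧ ∀ (l : List ℤ), l.Nodup → ∀ a : ℤ → A,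
      Φ ((l.map fun i => e i (a i)).prod) = (l.map fun i => φ i (a i)).prod
  minimality : ∀ w : T, (∃ y : T, w = star y * y) → w ≠ 0 →
    ∃ (φ : ℤ → (A →L[ℂ] ℂ)) (Φ : T →L[ℂ] ℂ), (∀ n, IsState (φ n)) ∧ IsState Φ ∧ Φ w ≠ 0 ∧
      ∀ (l : List ℤ), l.Nodup → ∀ a : ℤ → A,
        Φ ((l.map fun i => e i (a i)).prod) = (l.map fun i => φ i (a i)).prod

section StateFacts
variable {A : Type*} [CStarAlgebra A]

/-- Positivity of a functional on elements of the form `star x * x`. -/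
def IsPos (φ : A →L[ℂ] ℂ) : Prop := ∀ x : A, 0 ≤ φ (star x * x)

/-- The seminorm square of the GNS construction. -/
noncomputable def sqNorm (φ : A →L[ℂ] ℂ) (x : A) : ℝ := (φ (star x * x)).re

theorem IsPos.preInner {φ : A →L[ℂ] ℂ} (h : IsPos φ) :
    (∀ x, φ (star x) = star (φ x)) ∧
      (∀ x y, ‖φ (star x * y)‖ ≤ √(sqNorm φ x) * √(sqNorm φ y)) ∧
      ∀ x y, sqNorm φ (x * y) ≤ ‖x‖ ^ 2 * sqNorm φ y := by
  let _ := CStarAlgebra.spectralOrder A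
  have := CStarAlgebra.spectralOrderedRing A
  let f : A →ₚ[ℂ] ℂ := PositiveLinearMap.mk₀ φ.toLinearMap (by
    intro x hx
    obtain ⟨y, rfl⟩ := CStarAlgebra.nonneg_iff_eq_star_mul_self.mp hx
    exact h y)
  have hf : ∀ x, f x = φ x := fun _ => rfl
  refine ⟨fun x => ?_, fun x y => ?_, fun x y => ?_⟩
  · rw [← hf, ← hf, map_star]
  · have := norm_inner_le_norm (𝕜 := ℂ) (f.toPreGNS x) (f.toPreGNS y)
    rwa [f.preGNS_inner_def, f.preGNS_norm_def, f.preGNS_norm_def] at this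
  · have h1 : star y * star x * (x * y) ≤ ‖x‖ ^ 2 • star y * y := by
      rw [← mul_assoc, mul_assoc _ (star x), sq, ← CStarRing.norm_star_mul_self (x := x),
        smul_mul_assoc]
      exact CStarAlgebra.star_left_conjugate_le_norm_smul
    have h2 := OrderHomClass.mono f h1
    rw [hf, hf, smul_mul_assoc, ← Complex.coe_smul, map_smul, Complex.le_def] at h2
    simpa [sqNorm, ← Complex.ofReal_pow] using h2.1

theorem IsPos.map_star {φ : A →L[ℂ] ℂ} (h : IsPos φ) (x : A) : φ (star x) = star (φ x) :=
  h.preInner.1 x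

theorem IsPos.norm_le {φ : A →L[ℂ] ℂ} (h : IsPos φ) (x y : A) :
    ‖φ (star x * y)‖ ≤ √(sqNorm φ x) * √(sqNorm φ y) := h.preInner.2.1 x y

theorem IsPos.sqNorm_mul_le {φ : A →L[ℂ] ℂ} (h : IsPos φ) (x y : A) :
    sqNorm φ (x * y) ≤ ‖x‖ ^ 2 * sqNorm φ y := h.preInner.2.2 x y

theorem IsPos.sqNorm_nonneg {φ : A →L[ℂ] ℂ} (h : IsPos φ) (x : A) : 0 ≤ sqNorm φ x :=
  (Complex.le_def.mp (h x)).1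

theorem IsPos.coe_sqNorm {φ : A →L[ℂ] ℂ} (h : IsPos φ) (x : A) :
    (sqNorm φ x : ℂ) = φ (star x * x) := by
  have := (Complex.le_def.mp (h x)).2
  apply Complex.ext <;> simp [sqNorm]
  simpa using this

theorem IsPos.norm_mul_le {φ : A →L[ℂ] ℂ} (h : IsPos φ) (x y z : A) :
    ‖φ (star y * (x * z))‖ ≤ ‖x‖ * √(sqNorm φ y) * √(sqNorm φ z) := by
  have h1 := h.norm_le y (x * z)
  have h2 := Real.sqrt_le_sqrt (h.sqNorm_mul_le x z)
  rw [Real.sqrt_mul (by positivity), Real.sqrt_sq (norm_nonneg _)] at h2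
  calc _ ≤ _ := h1
    _ ≤ √(sqNorm φ y) * (‖x‖ * √(sqNorm φ z)) := by gcongr
    _ = _ := by ring

theorem sqNorm_one (φ : A →L[ℂ] ℂ) : sqNorm φ 1 = (φ 1).re := by simp [sqNorm]

theorem isState_iff {φ : A →L[ℂ] ℂ} : IsState φ ↔ IsPos φ ∧ φ 1 = 1 := by
  constructor
  · rintro ⟨h, hn⟩
    have h : IsPos φ := h
    refine ⟨h, ?_⟩
    have h1 := h.coe_sqNorm 1
    rw [star_one, one_mul] at h1
    rw [← h1]
    have h0 := h.sqNorm_nonneg 1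
    have hnt : Nontrivial A := by
      by_contra hc
      rw [not_nontrivial_iff_subsingleton] at hc
      have : φ = 0 := by ext x; rw [Subsingleton.elim x 0]; simp
      simp [this] at hn
    have hle : sqNorm φ 1 ≤ 1 := by
      have := φ.le_opNorm 1
      rw [← h1, hn] at this
      simpa [abs_of_nonneg h0] using this
    have hge : ‖φ‖ ≤ sqNorm φ 1 := by
      refine φ.opNorm_le_bound h0 fun x => ?_
      have := h.norm_mul_le x 1 1
      simp only [star_one, one_mul, mul_one] at this
      rwa [mul_assoc, Real.mul_self_sqrt h0, mul_comm] at this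
    rw [hn] at hge
    norm_cast
    linarith
  · rintro ⟨h, h1⟩
    refine ⟨h, ?_⟩
    have hs : sqNorm φ 1 = 1 := by simp [sqNorm, h1]
    have hnt : Nontrivial A := by
      by_contra hc
      rw [not_nontrivial_iff_subsingleton] at hc
      rw [Subsingleton.elim (1 : A) 0] at h1
      simp at h1
    refine le_antisymm (φ.opNorm_le_bound zero_le_one fun x => ?_) ?_
    · have := h.norm_mul_le x 1 1
      simpa [hs] using this
    · have := φ.le_opNorm 1
      simpa [h1] using this

theorem IsState.pos {φ : A →L[ℂ] ℂ} (h : IsState φ) : IsPos φ := h.1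
theorem IsState.map_one {φ : A →L[ℂ] ℂ} (h : IsState φ) : φ 1 = 1 := (isState_iff.mp h).2
theorem IsState.norm_apply_le {φ : A →L[ℂ] ℂ} (h : IsState φ) (x : A) : ‖φ x‖ ≤ ‖x‖ := by
  simpa [h.2] using φ.le_opNorm x
theorem IsState.sqNorm_one {φ : A →L[ℂ] ℂ} (h : IsState φ) : sqNorm φ 1 = 1 := by
  simp [sqNorm, h.map_one]
theorem IsState.nontrivial {φ : A →L[ℂ] ℂ} (h : IsState φ) : Nontrivial A := by
  by_contra hc
  rw [not_nontrivial_iff_subsingleton] at hc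
  have := h.map_one
  rw [Subsingleton.elim (1 : A) 0] at this
  simp at this

/-- A state taking value one on a projection is compressed by it. -/
theorem IsState.compress {φ : A →L[ℂ] ℂ} (h : IsState φ) {p : A} (hs : star p = p)
    (hp : p * p = p) (h1 : φ p = 1) (x : A) : φ (x * p) = φ x ∧ φ (p * x) = φ x := by
  have hz : sqNorm φ (1 - p) = 0 := by
    simp [sqNorm, hs, mul_sub, sub_mul, hp, h.map_one, h1]
  have key : ∀ x, φ (x * p) = φ x := by
    intro x
    have := h.pos.norm_le (star x) (1 - p)
    rw [hz, Real.sqrt_zero, mul_zero, star_star, mul_sub, map_sub, mul_one] at this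
    exact (sub_eq_zero.mp (norm_le_zero_iff.mp this)).symm
  refine ⟨key x, ?_⟩
  have := key (star x)
  rw [← hs, ← star_mul, h.pos.map_star, h.pos.map_star] at this
  exact star_injective this

end StateFacts

section Prime
variable {A : Type*} [CStarAlgebra A]

theorem eq_zero_of_mul_star_mul {z : A} (h : z * star z * z = 0) : z = 0 := by
  have h1 : star (star z * z) * (star z * z) = 0 := by
    rw [star_mul, star_star, mul_assoc (star z), ← mul_assoc z, h, mul_zero]
  exact CStarRing.star_mul_self_eq_zero_iff _ |>.mp (CStarRing.star_mul_self_eq_zero_iff _ |>.mp h1)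

theorem IsPrimeCStar.exists_mul_mul_ne_zero (hA : IsPrimeCStar A) {a b : A} (ha : a ≠ 0)
    (hb : b ≠ 0) : ∃ c, a * c * b ≠ 0 := by
  by_contra! hab
  let I : TwoSidedIdeal A := TwoSidedIdeal.mk' {x | ∀ c, x * c * b = 0}
    (by simp) (fun {x y} hx hy c => by simp [add_mul, hx c, hy c])
    (fun {x} hx c => by simp [hx c]) (fun {x y} hy c => by rw [mul_assoc x, mul_assoc x, hy, mul_zero])
    (fun {x y} hx c => by rw [mul_assoc x]; exact hx _)
  let J : TwoSidedIdeal A := TwoSidedIdeal.mk' {y | ∀ x ∈ I, ∀ c, x * c * y = 0}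
    (by simp) (fun {x y} hx hy z hz c => by simp [mul_add, hx z hz c, hy z hz c])
    (fun {x} hx z hz c => by simp [hx z hz c])
    (fun {x y} hy z hz c => by rw [← mul_assoc, mul_assoc z]; exact hy z hz _)
    (fun {x y} hx z hz c => by rw [← mul_assoc, hx z hz, zero_mul])
  have hI : ∀ x, x ∈ I ↔ ∀ c, x * c * b = 0 := fun x => TwoSidedIdeal.mem_mk' ..
  have hJ : ∀ y, y ∈ J ↔ ∀ x ∈ I, ∀ c, x * c * y = 0 := fun x => TwoSidedIdeal.mem_mk' ..
  have hIc : IsClosed (I : Set A) := by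
    have : (I : Set A) = ⋂ c, {x | x * c * b = 0} := by ext x; simp [hI]
    rw [this]
    exact isClosed_iInter fun c => isClosed_eq (by fun_prop) (by fun_prop)
  have hJc : IsClosed (J : Set A) := by
    have : (J : Set A) = ⋂ x ∈ I, ⋂ c, {y | x * c * y = 0} := by ext x; simp [hJ]
    rw [this]
    exact isClosed_biInter fun x _ => isClosed_iInter fun c =>
      isClosed_eq (by fun_prop) (by fun_prop)
  have haI : a ∈ I := (hI a).2 hab
  have hbJ : b ∈ J := (hJ b).2 fun x hx c => (hI x).1 hx c
  refine hA I J hIc hJc ?_ ?_ ?_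
  · rintro h; rw [h] at haI; exact ha ((TwoSidedIdeal.mem_bot A).mp haI)
  · rintro h; rw [h] at hbJ; exact hb ((TwoSidedIdeal.mem_bot A).mp hbJ)
  · rw [eq_bot_iff]
    intro z hz
    rw [TwoSidedIdeal.mem_inf] at hz
    exact (TwoSidedIdeal.mem_bot A).mpr
      (eq_zero_of_mul_star_mul ((hJ z).1 hz.2 z hz.1 (star z)))
end Prime

section MinProj
variable {A : Type*} [CStarAlgebra A]

/-- The set of compressions `p x p`, `x ∈ S`. -/
noncomputable def cornerSpace (S : StarSubalgebra ℂ A) (p : A) : Submodule ℂ A :=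
  (Subalgebra.toSubmodule S.toSubalgebra).map (LinearMap.mulLeftRight ℂ (p, p))

theorem mem_cornerSpace {S : StarSubalgebra ℂ A} {p y : A} :
    y ∈ cornerSpace S p ↔ ∃ x ∈ S, p * x * p = y := by
  simp [cornerSpace]

/-- A minimal (nonzero) projection of a star subalgebra. -/
structure IsMinProj (S : StarSubalgebra ℂ A) (p : A) : Prop where
  mem : p ∈ S
  star_eq : star p = p
  mul_self : p * p = p
  ne_zero : p ≠ 0
  scalar : ∀ x ∈ S, ∃ c : ℂ, p * x * p = c • p

theorem finite_spectrum_of_mem (S : StarSubalgebra ℂ A) [FiniteDimensional ℂ S] {h : A}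
    (hS : h ∈ S) : (spectrum ℂ h).Finite := by
  nontriviality A
  have h1 : IsIntegral ℂ h := by
    have := (Algebra.IsIntegral.isIntegral (R := ℂ) (⟨h, hS⟩ : S)).map S.subtype
    simpa using this
  obtain ⟨p, hp, hp0⟩ := h1
  have hp1 : Polynomial.aeval h p = 0 := hp0
  refine (p.roots.toFinset.finite_toSet).subset fun μ hμ => ?_
  have := spectrum.subset_polynomial_aeval h p ⟨μ, hμ, rfl⟩
  rw [hp1, spectrum.zero_eq] at this
  simpa [hp.ne_zero] using this

theorem finite_real_spectrum_of_mem (S : StarSubalgebra ℂ A) [FiniteDimensional ℂ S] {h : A}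
    (hS : h ∈ S) : (spectrum ℝ h).Finite := by
  have := finite_spectrum_of_mem S hS
  have h2 : spectrum ℝ h = (algebraMap ℝ ℂ) ⁻¹' spectrum ℂ h :=
    (spectrum.preimage_algebraMap ℂ).symm
  rw [h2]
  exact this.preimage (FaithfulSMul.algebraMap_injective ℝ ℂ).injOn

theorem isClosed_of_finiteDimensional (S : StarSubalgebra ℂ A) [FiniteDimensional ℂ S] :
    IsClosed (S : Set A) := by
  have : FiniteDimensional ℂ (Subalgebra.toSubmodule S.toSubalgebra) := ‹FiniteDimensional ℂ S›
  exact (Subalgebra.toSubmodule S.toSubalgebra).closed_of_finiteDimensional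

/-- Spectral projections split a nonscalar compression. -/
theorem exists_proj_of_not_scalar (S : StarSubalgebra ℂ A) [FiniteDimensional ℂ S] {q h : A}
    (hh : h ∈ S) (hsa : IsSelfAdjoint h) (hq : star q = q) (hqh : q * h = h)
    (hns : ∀ c : ℂ, h ≠ c • q) :
    ∃ p ∈ S, star p = p ∧ p * p = p ∧ q * p = p ∧ p ≠ 0 ∧ p ≠ q := by
  have : IsClosed (S : Set A) := isClosed_of_finiteDimensional S
  have hfin := finite_real_spectrum_of_mem S hh
  have hcont : ∀ f : ℝ → ℝ, ContinuousOn f (spectrum ℝ h) := fun f => hfin.continuousOn f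
  have hex : ∃ l ∈ spectrum ℝ h, l ≠ 0 := by
    by_contra! hc
    apply hns 0
    rw [zero_smul, ← cfc_id ℝ h, cfc_congr (f := id) (g := fun _ => 0) (fun x hx => hc x hx), cfc_const_zero]
  obtain ⟨l, hl, hl0⟩ := hex
  let f : ℝ → ℝ := fun x => if x = l then 1 else 0
  have hhf : h * cfc f h = l • cfc f h := by
    conv_lhs => rw [← cfc_id ℝ h]
    rw [cfc_id ℝ h]
    nth_rw 1 [← cfc_id ℝ h]
    rw [← cfc_mul _ _ h (hcont _) (hcont _), ← cfc_smul l f h (hcont _)]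
    refine cfc_congr fun x hx => ?_
    by_cases hx : x = l <;> simp [f, hx]
  have hqp : q * cfc f h = cfc f h := by
    have : cfc f h = l⁻¹ • (h * cfc f h) := by rw [hhf, smul_smul, inv_mul_cancel₀ hl0, one_smul]
    rw [this, mul_smul_comm, ← mul_assoc, hqh]
  refine ⟨cfc f h, cfc_mem (𝕜' := ℂ) f hh, ?_, ?_, hqp, ?_, ?_⟩
  · exact (cfc_predicate f h : IsSelfAdjoint _)
  · rw [← cfc_mul _ _ h (hcont _) (hcont _)]
    refine cfc_congr fun x hx => ?_
    by_cases hx : x = l <;> simp [f, hx]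
  · intro h0
    have := cfc_map_spectrum f h hsa (hcont _)
    have h1 : (1 : ℝ) ∈ spectrum ℝ (cfc f h) := by
      rw [this]; exact ⟨l, hl, by simp [f]⟩
    rw [h0] at h1
    have : Nontrivial A := ⟨⟨h, 0, by simpa using hns 0⟩⟩
    rw [spectrum.zero_eq] at h1
    simp at h1
  · intro h0
    have hhq : h * q = h := by
      have := congrArg star hqh
      rwa [star_mul, hq, hsa.star_eq] at this
    rw [h0, hhq] at hhf
    exact hns l (by rw [hhf]; simp)

theorem exists_minProj (S : StarSubalgebra ℂ A) [FiniteDimensional ℂ S] {q y : A} (hqS : q ∈ S)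
    (hq : star q = q) (hqq : q * q = q) (hy : y * q ≠ 0) :
    ∃ p, IsMinProj S p ∧ p * q = p ∧ q * p = p ∧ y * p ≠ 0 := by
  induction hn : Module.finrank ℂ (cornerSpace S q) using Nat.strong_induction_on
    generalizing q with
  | _ n ih =>
  by_cases hmin : ∀ x ∈ S, ∃ c : ℂ, q * x * q = c • q
  · exact ⟨q, ⟨hqS, hq, hqq, fun h => hy (by simp [h]), hmin⟩, hqq, hqq, hy⟩
  have hh : ∃ h ∈ S, IsSelfAdjoint h ∧ ∀ c : ℂ, q * h * q ≠ c • q := by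
    by_contra! hc
    apply hmin
    intro x hx
    obtain ⟨c, hc1⟩ := hc (realPart x) (by
      rw [realPart_apply_coe, ← Complex.coe_smul]
      exact S.smul_mem (add_mem hx (star_mem hx)) _) (realPart x).2
    obtain ⟨d, hd⟩ := hc (imaginaryPart x) (by
      rw [imaginaryPart_apply_coe, ← Complex.coe_smul]
      exact S.smul_mem (S.smul_mem (sub_mem hx (star_mem hx)) _) _) (imaginaryPart x).2
    refine ⟨c + Complex.I * d, ?_⟩
    conv_lhs => rw [← realPart_add_I_smul_imaginaryPart x]
    rw [mul_add, add_mul, hc1, mul_smul_comm, smul_mul_assoc, hd, add_smul, mul_smul]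
  obtain ⟨h, hS, hsa, hns⟩ := hh
  obtain ⟨p, hpS, hps, hpp, hqp, hp0, hpq⟩ := exists_proj_of_not_scalar S (q := q) (h := q * h * q)
    (mul_mem (mul_mem hqS hS) hqS) (by
      simp [IsSelfAdjoint, star_mul, hq, hsa.star_eq, mul_assoc]) hq
    (by rw [← mul_assoc, ← mul_assoc, hqq]) hns
  have hpq' : p * q = p := by
    have := congrArg star hqp
    rwa [star_mul, hq, hps] at this
  have : FiniteDimensional ℂ (Subalgebra.toSubmodule S.toSubalgebra) := ‹FiniteDimensional ℂ S›
  have hfd : FiniteDimensional ℂ (cornerSpace S q) := by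
    unfold cornerSpace; infer_instance
  have key : ∀ r ∈ S, star r = r → r * r = r → q * r = r → r * q = r → r ≠ q → y * r ≠ 0 →
      ∃ p, IsMinProj S p ∧ p * q = p ∧ q * p = p ∧ y * p ≠ 0 := by
    intro r hrS hr hrr hqr hrq hne hyr
    have hlt : cornerSpace S r < cornerSpace S q := by
      refine lt_of_le_of_ne ?_ ?_
      · intro z hz
        obtain ⟨x, hx, rfl⟩ := mem_cornerSpace.mp hz
        refine mem_cornerSpace.mpr ⟨r * x * r, mul_mem (mul_mem hrS hx) hrS, ?_⟩
        rw [← mul_assoc, ← mul_assoc, hqr, mul_assoc _ r q, hrq]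
      · intro heq
        have : q ∈ cornerSpace S q := mem_cornerSpace.mpr ⟨q, hqS, by rw [hqq, hqq]⟩
        rw [← heq] at this
        obtain ⟨x, hx, hxe⟩ := mem_cornerSpace.mp this
        apply hne
        rw [← hqr, ← hxe, mul_assoc _ r r, hrr]
    obtain ⟨p, hp, h1, h2, h3⟩ := ih _ (by rw [← hn]; exact Submodule.finrank_lt_finrank_of_lt hlt)
      hrS hr hrr hyr rfl
    exact ⟨p, hp, by rw [← h1, mul_assoc, hrq], by rw [← h2, ← mul_assoc, hqr], h3⟩
  by_cases hyp : y * p = 0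
  · refine key (q - p) (sub_mem hqS hpS) (by simp [hq, hps]) ?_ ?_ ?_ ?_ ?_
    · simp [mul_sub, sub_mul, hqq, hpp, hqp, hpq']
    · simp [mul_sub, hqq, hqp]
    · simp [sub_mul, hqq, hpq']
    · simpa using hp0
    · rw [mul_sub, hyp, sub_zero]; exact hy
  · exact key p hpS hps hpp hqp hpq' hpq hyp
end MinProj

section Faithful
variable {A : Type*} [CStarAlgebra A]

/-- Elements of `B` annihilating the left ideal `S p`. -/
def annSpace (B S : StarSubalgebra ℂ A) (p : A) : Submodule ℂ A where
  carrier := {b | b ∈ B ∧ ∀ x ∈ S, b * x * p = 0}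
  zero_mem' := ⟨zero_mem _, by simp⟩
  add_mem' := fun ha hb => ⟨add_mem ha.1 hb.1, fun x hx => by
    rw [add_mul, add_mul, ha.2 x hx, hb.2 x hx, add_zero]⟩
  smul_mem' := fun c b hb => ⟨B.smul_mem hb.1 c, fun x hx => by
    rw [smul_mul_assoc, smul_mul_assoc, hb.2 x hx, smul_zero]⟩

theorem annSpace_mono {B S S' : StarSubalgebra ℂ A} {p p' : A} (hBS : B ≤ S) (hSS : S ≤ S')
    (hp : IsMinProj S p) (hp0 : p' ≠ 0) (hpp : p * p' = p') :
    annSpace B S' p' ≤ annSpace B S p := by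
  rintro b ⟨hb, hb'⟩
  refine ⟨hb, fun s hs => ?_⟩
  obtain ⟨c, hc⟩ := hp.scalar (star (b * s) * (b * s))
    (mul_mem (star_mem (mul_mem (hBS hb) hs)) (mul_mem (hBS hb) hs))
  have h1 : c • p' = 0 := by
    have := congrArg (· * p') hc
    simp only [smul_mul_assoc, hpp] at this
    rw [← this]
    rw [mul_assoc, hpp, mul_assoc, mul_assoc, hb' s (hSS hs), mul_zero, mul_zero]
  have hc0 : c = 0 := by simpa [hp0] using h1
  rw [hc0, zero_smul] at hc
  rw [← CStarRing.star_mul_self_eq_zero_iff, star_mul, hp.star_eq]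
  simpa only [mul_assoc] using hc

variable {S : ℕ → StarSubalgebra ℂ A} (hmono : Monotone S) (hfd : ∀ n, FiniteDimensional ℂ (S n))
  (hdense : Dense (⋃ n, (S n : Set A))) (hprime : IsPrimeCStar A)
include hmono hfd hdense hprime

theorem exists_faithful_minProj_aux (k : ℕ) {m : ℕ} (hkm : k ≤ m) {p : A}
    (hp : IsMinProj (S m) p) :
    ∃ m' ≥ m, ∃ p', IsMinProj (S m') p' ∧ p * p' = p' ∧
      ∀ b ∈ S k, (∀ x ∈ S m', b * x * p' = 0) → b = 0 := by
  induction hn : Module.finrank ℂ (annSpace (S k) (S m) p) using Nat.strong_induction_on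
    generalizing m p with
  | _ n ih =>
  by_cases hJ : ∀ b ∈ S k, (∀ x ∈ S m, b * x * p = 0) → b = 0
  · exact ⟨m, le_rfl, p, hp, hp.mul_self, hJ⟩
  push Not at hJ
  obtain ⟨b, hb, hb', hb0⟩ := hJ
  obtain ⟨c, hc⟩ := hprime.exists_mul_mul_ne_zero hb0 hp.ne_zero
  have hopen : IsOpen {c | b * c * p ≠ 0} := isOpen_ne_fun (by fun_prop) (by fun_prop)
  obtain ⟨c, hc, hcS⟩ := hdense.inter_open_nonempty _ hopen ⟨c, hc⟩
  obtain ⟨l, hl⟩ := Set.mem_iUnion.mp hcS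
  have := hfd (max l m)
  obtain ⟨p', hp', h1, h2, h3⟩ := exists_minProj (S (max l m))
    (hmono (le_max_right _ _) hp.mem) hp.star_eq hp.mul_self hc
  have hlt : annSpace (S k) (S (max l m)) p' < annSpace (S k) (S m) p := by
    refine lt_of_le_of_ne
      (annSpace_mono (hmono hkm) (hmono (le_max_right _ _)) hp hp'.ne_zero h2) fun heq => ?_
    have : b ∈ annSpace (S k) (S m) p := ⟨hb, hb'⟩
    rw [← heq] at this
    exact h3 (this.2 c (hmono (le_max_left _ _) hl))
  have hk : FiniteDimensional ℂ (Subalgebra.toSubmodule (S k).toSubalgebra) := hfd k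
  have : FiniteDimensional ℂ (annSpace (S k) (S m) p) :=
    Submodule.finiteDimensional_of_le (S₂ := Subalgebra.toSubmodule (S k).toSubalgebra)
      fun x hx => hx.1
  obtain ⟨m', hm', p'', hp'', h4, h5⟩ := ih _
    (by rw [← hn]; exact Submodule.finrank_lt_finrank_of_lt hlt)
    (hkm.trans (le_max_right _ _)) hp' rfl
  exact ⟨m', (le_max_right _ _).trans hm', p'', hp'', by rw [← h4, ← mul_assoc, h2], h5⟩

theorem exists_faithful_minProj (k m : ℕ) {p : A} (hp : IsMinProj (S m) p) :
    ∃ m' ≥ k, ∃ p', IsMinProj (S m') p' ∧ p * p' = p' ∧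
      ∀ b ∈ S k, (∀ x ∈ S m', b * x * p' = 0) → b = 0 := by
  have := hfd (max k m)
  obtain ⟨q, hq, h1, h2, -⟩ := exists_minProj (S (max k m)) (y := 1)
    (hmono (le_max_right _ _) hp.mem) hp.star_eq hp.mul_self (by simpa using hp.ne_zero)
  obtain ⟨m', hm', p', hp', h3, h4⟩ :=
    exists_faithful_minProj_aux hmono hfd hdense hprime k (le_max_left _ _) hq
  exact ⟨m', (le_max_left _ _).trans hm', p', hp', by rw [← h3, ← mul_assoc, h2], h4⟩

theorem exists_faithful_seq [Nontrivial A] : ∃ (m : ℕ → ℕ) (p : ℕ → A),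
    (∀ j, j ≤ m j) ∧ (∀ j, IsMinProj (S (m j)) (p j)) ∧ (∀ j, p j * p (j + 1) = p (j + 1)) ∧
    ∀ j, ∀ b ∈ S j, (∀ x ∈ S (m j), b * x * p j = 0) → b = 0 := by
  have := hfd 0
  obtain ⟨p₀, hp₀, -⟩ := exists_minProj (S 0) (q := 1) (y := 1) (one_mem _) (by simp) (by simp)
    (by simp)
  choose f hfk g hg hg1 hg2 using fun (k m : ℕ) (p : A) (hp : IsMinProj (S m) p) =>
    exists_faithful_minProj hmono hfd hdense hprime k m hp
  let X := {x : ℕ × A // IsMinProj (S x.1) x.2}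
  let step : ℕ → X → X := fun k x => ⟨(f k x.1.1 x.1.2 x.2, g k x.1.1 x.1.2 x.2), hg _ _ _ _⟩
  let F : ℕ → X := fun n => Nat.rec (step 0 ⟨(0, p₀), hp₀⟩) (fun j x => step (j + 1) x) n
  have hF : ∀ j, F (j + 1) = step (j + 1) (F j) := fun _ => rfl
  have hF' : ∀ j, ∃ x, F j = step j x := by
    rintro (_ | j)
    · exact ⟨_, rfl⟩
    · exact ⟨_, hF j⟩
  refine ⟨fun j => (F j).1.1, fun j => (F j).1.2, fun j => ?_, fun j => (F j).2, fun j => ?_,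
    fun j => ?_⟩
  · obtain ⟨x, hx⟩ := hF' j
    beta_reduce
    rw [hx]; exact hfk _ _ _ _
  · beta_reduce
    rw [hF]; exact hg1 _ _ _ _
  · obtain ⟨x, hx⟩ := hF' j
    beta_reduce
    rw [hx]; exact hg2 _ _ _ _
end Faithful

section NegPart
variable {A : Type*} [CStarAlgebra A]

theorem IsSelfAdjoint.exists_neg_part {h : A} (hsa : IsSelfAdjoint h) :
    ∃ r s : A, star r = r ∧ star s = s ∧ h + r * r = s * s ∧
      (r * r) * h * (r * r) = -((r * r) * (r * r) * (r * r)) ∧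
      ∀ B : StarSubalgebra ℂ A, IsClosed (B : Set A) → h ∈ B → r ∈ B := by
  let f : ℝ → ℝ := fun x => √(max (-x) 0)
  let g : ℝ → ℝ := fun x => √(max x 0)
  have hf : ContinuousOn f (spectrum ℝ h) := by fun_prop
  have hg : ContinuousOn g (spectrum ℝ h) := by fun_prop
  have hff : ∀ x, f x * f x = max (-x) 0 := fun x => Real.mul_self_sqrt (le_max_right _ _)
  have hgg : ∀ x, g x * g x = max x 0 := fun x => Real.mul_self_sqrt (le_max_right _ _)
  have hc : cfc f h * cfc f h = cfc (fun x : ℝ => max (-x) 0) h := by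
    rw [← cfc_mul f f h hf hf]; exact cfc_congr fun x _ => hff x
  have hc1 : ContinuousOn (fun x : ℝ => max (-x) 0) (spectrum ℝ h) := by fun_prop
  have hid : cfc (id : ℝ → ℝ) h = h := cfc_id ℝ h
  refine ⟨cfc f h, cfc g h, (cfc_predicate f h : IsSelfAdjoint _),
    (cfc_predicate g h : IsSelfAdjoint _), ?_, ?_, ?_⟩
  · rw [hc, ← cfc_mul g g h hg hg]
    nth_rw 1 [← hid]
    rw [← cfc_add h id (fun x : ℝ => max (-x) 0) (by fun_prop) hc1]
    refine cfc_congr fun x _ => ?_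
    rw [hgg]
    rcases le_total x 0 with hx | hx <;> simp [hx]
  · rw [hc]
    nth_rw 2 [← hid]
    rw [← cfc_mul _ _ h hc1 (by fun_prop), ← cfc_mul _ _ h (by fun_prop) hc1,
      ← cfc_mul _ _ h hc1 hc1, ← cfc_mul _ _ h (by fun_prop) hc1, ← cfc_neg]
    refine cfc_congr fun x _ => ?_
    rcases le_total x 0 with hx | hx <;> simp [hx]
  · intro B hB hBh
    exact cfc_mem (𝕜' := ℂ) f hBh
end NegPart

/-- A state excised by a sequence of projections in a dense star subalgebra, and detecting
positivity. -/
structure ExcisedState (A : Type*) [CStarAlgebra A] where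
  D : StarSubalgebra ℂ A
  dense : Dense (D : Set A)
  ω : A →L[ℂ] ℂ
  isState : IsState ω
  p : ℕ → A
  p_mem : ∀ m, p m ∈ D
  p_star : ∀ m, star (p m) = p m
  p_mul : ∀ m, p m * p m = p m
  ω_p : ∀ m, ω (p m) = 1
  excise : ∀ a ∈ D, ∀ᶠ m in Filter.atTop, p m * a * p m = ω a • p m
  detects : ∀ a, (∀ y ∈ D, 0 ≤ (ω (star y * (a * y))).re) →
    ∀ φ : A →L[ℂ] ℂ, IsState φ → 0 ≤ (φ a).re

section Construct
variable {A : Type*} [CStarAlgebra A]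

theorem norm_proj_eq_one {p : A} (h1 : star p = p) (h2 : p * p = p) (h0 : p ≠ 0) : ‖p‖ = 1 := by
  have := CStarRing.norm_star_mul_self (x := p)
  rw [h1, h2] at this
  have h3 : ‖p‖ ≠ 0 := norm_ne_zero_iff.mpr h0
  field_simp at this
  exact this.symm

theorem nonneg_of_star_mul_self_eq_smul {p x : A} {c : ℂ} (h1 : star p = p) (h2 : p * p = p)
    (h0 : p ≠ 0) (hx : star x * x = c • p) : 0 ≤ c := by
  let _ := CStarAlgebra.spectralOrder A
  have := CStarAlgebra.spectralOrderedRing A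
  have hpos : 0 ≤ c • p := by rw [← hx]; exact star_mul_self_nonneg x
  have hreal : star c = c := by
    have h : star (c • p) = c • p := by rw [← hx]; simp
    rw [star_smul, h1] at h
    have : (star c - c) • p = 0 := by rw [sub_smul, h, sub_self]
    simpa [h0, sub_eq_zero] using this
  obtain ⟨r, rfl⟩ : ∃ r : ℝ, (r : ℂ) = c := Complex.conj_eq_iff_real.mp hreal |>.imp fun _ h => h.symm
  have : 0 ≤ r := by
    by_contra hr
    push Not at hr
    have h3 : star ((√(-r) : ℂ) • p) * ((√(-r) : ℂ) • p) = -((r : ℂ) • p) := by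
      rw [star_smul, h1, smul_mul_smul_comm, h2]
      simp only [Complex.star_def, Complex.conj_ofReal]
      rw [← Complex.ofReal_mul, Real.mul_self_sqrt (by linarith)]
      simp
    have h4 : 0 ≤ -((r : ℂ) • p) := by rw [← h3]; exact star_mul_self_nonneg _
    have h5 : (r : ℂ) • p = 0 := le_antisymm (by simpa using h4) hpos
    simp [h0, hr.ne] at h5
  exact_mod_cast this

theorem exists_excisedState [Nontrivial A] (hprime : IsPrimeCStar A) (hAF : IsAF A) :
    Nonempty (ExcisedState A) := by
  obtain ⟨S, hmono, hfd, hdense⟩ := hAF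
  obtain ⟨m, p, hm, hp, hdec, hfaith⟩ := exists_faithful_seq hmono hfd hdense hprime
  let D : StarSubalgebra ℂ A := ⨆ n, S n
  have hDc : (D : Set A) = ⋃ n, (S n : Set A) :=
    StarSubalgebra.coe_iSup_of_directed hmono.directed_le
  have hD : ∀ x, x ∈ D ↔ ∃ n, x ∈ S n := fun x => by
    rw [← SetLike.mem_coe, hDc, Set.mem_iUnion]; rfl
  have hDd : Dense (D : Set A) := by rw [hDc]; exact hdense
  have hpp : ∀ j k, j ≤ k → p j * p k = p k := by
    intro j k hjk
    induction k, hjk using Nat.le_induction with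
    | base => exact (hp j).mul_self
    | succ k hk ih => rw [← hdec k, ← mul_assoc, ih]
  have hpp' : ∀ j k, j ≤ k → p k * p j = p k := by
    intro j k hjk
    have := congrArg star (hpp j k hjk)
    rwa [star_mul, (hp j).star_eq, (hp k).star_eq] at this
  have hex : ∀ a : D, ∃ c : ℂ, ∀ᶠ j in Filter.atTop, p j * a * p j = c • p j := by
    rintro ⟨a, ha⟩
    obtain ⟨n, hn⟩ := (hD a).mp ha
    obtain ⟨c, hc⟩ := (hp n).scalar a (hmono (hm n) hn)
    refine ⟨c, Filter.eventually_atTop.mpr ⟨n, fun j hj => ?_⟩⟩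
    calc p j * a * p j = p j * (p n * a * p n) * p j := by
          rw [← mul_assoc, ← mul_assoc, hpp' n j hj, mul_assoc _ (p n), hpp n j hj]
      _ = c • p j := by
          rw [hc, mul_smul_comm, smul_mul_assoc, hpp' n j hj, (hp j).mul_self]
  choose c hc using hex
  have huniq : ∀ (a : D) (d : ℂ), (∀ᶠ j in Filter.atTop, p j * a * p j = d • p j) → c a = d := by
    intro a d hd
    obtain ⟨j, hj1, hj2⟩ := ((hc a).and hd).exists
    rw [hj1] at hj2
    have : (c a - d) • p j = 0 := by rw [sub_smul, hj2, sub_self]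
    simpa [(hp j).ne_zero, sub_eq_zero] using this
  let DM : Submodule ℂ A := Subalgebra.toSubmodule D.toSubalgebra
  let f₀ : DM →ₗ[ℂ] ℂ :=
    { toFun := c
      map_add' := fun a b => huniq _ _ (by
        filter_upwards [hc a, hc b] with j h1 h2
        rw [add_smul, ← h1, ← h2, ← add_mul, ← mul_add]; rfl)
      map_smul' := fun r a => huniq _ _ (by
        filter_upwards [hc a] with j h1
        rw [smul_eq_mul, mul_smul, RingHom.id_apply, ← h1, ← smul_mul_assoc, ← mul_smul_comm]
        rfl) }
  have hbd : ∀ a : DM, ‖f₀ a‖ ≤ 1 * ‖a‖ := by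
    intro a
    obtain ⟨j, hj⟩ := (hc a).exists
    have hn := norm_proj_eq_one (hp j).star_eq (hp j).mul_self (hp j).ne_zero
    have h1 : ‖c a • p j‖ = ‖c a‖ := by rw [norm_smul, hn, mul_one]
    change ‖c a‖ ≤ _
    rw [← h1, ← hj]
    calc _ ≤ ‖p j * (a : A)‖ * ‖p j‖ := norm_mul_le _ _
      _ ≤ ‖p j‖ * ‖(a : A)‖ * ‖p j‖ := by gcongr; exact norm_mul_le _ _
      _ = _ := by rw [hn]; simp
  obtain ⟨ω, hω, -⟩ := exists_extension_norm_eq DM (f₀.mkContinuous 1 hbd)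
  have hωc : ∀ a (ha : a ∈ D), ∀ᶠ j in Filter.atTop, p j * a * p j = ω a • p j := by
    intro a ha
    have h1 : ω a = c ⟨a, ha⟩ := hω ⟨a, ha⟩
    rw [h1]; exact hc ⟨a, ha⟩
  have hωu : ∀ a ∈ D, ∀ d : ℂ, (∀ᶠ j in Filter.atTop, p j * a * p j = d • p j) → ω a = d := by
    intro a ha d hd
    have h1 : ω a = c ⟨a, ha⟩ := hω ⟨a, ha⟩
    rw [h1]; exact huniq ⟨a, ha⟩ d hd
  have hpD : ∀ j, p j ∈ D := fun j => (hD _).mpr ⟨_, (hp j).mem⟩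
  have hpos : IsPos ω := by
    have hcl : IsClosed {x : A | 0 ≤ ω (star x * x)} :=
      isClosed_le continuous_const (by fun_prop)
    intro x
    suffices hsub : (D : Set A) ⊆ {x : A | 0 ≤ ω (star x * x)} from
      hcl.closure_subset_iff.mpr hsub (hDd x)
    intro x hx
    obtain ⟨j, hj⟩ := (hωc _ (mul_mem (star_mem hx) hx)).exists
    refine nonneg_of_star_mul_self_eq_smul (hp j).star_eq (hp j).mul_self (hp j).ne_zero
      (x := x * p j) ?_
    rw [← hj, star_mul, (hp j).star_eq]
    simp only [mul_assoc]
  have hone : ω 1 = 1 := hωu 1 (one_mem _) 1 (Filter.Eventually.of_forall fun j => by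
    rw [mul_one, (hp j).mul_self, one_smul])
  have hst : IsState ω := isState_iff.mpr ⟨hpos, hone⟩
  have hωp : ∀ j, ω (p j) = 1 := fun j => hωu _ (hpD j) 1
    (Filter.eventually_atTop.mpr ⟨j, fun k hk => by
      rw [hpp' j k hk, (hp k).mul_self, one_smul]⟩)
  have hdet : ∀ a, IsSelfAdjoint a → (∀ y ∈ D, 0 ≤ (ω (star y * (a * y))).re) →
      ∀ φ : A →L[ℂ] ℂ, IsState φ → 0 ≤ (φ a).re := by
    intro a ha hay φ hφ
    refine le_of_forall_pos_le_add fun ε hε => ?_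
    let δ := ε / 4
    have hδ : 0 < δ := by positivity
    obtain ⟨b, hb, hbD⟩ := hDd.exists_dist_lt a hδ
    obtain ⟨k, hk⟩ := (hD b).mp hb
    let ak : A := (realPart b : A)
    have hakS : ak ∈ S k := by
      change ((realPart b : selfAdjoint A) : A) ∈ S k
      rw [realPart_apply_coe, ← Complex.coe_smul]
      exact (S k).smul_mem (add_mem hk (star_mem hk)) _
    have hak : ‖ak - a‖ ≤ δ := by
      have h1 : ak - a = (realPart (b - a) : A) := by
        rw [map_sub]; simp [ak, ha.coe_realPart]
      rw [h1]
      calc _ ≤ ‖b - a‖ := realPart.norm_le _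
        _ ≤ δ := by rw [← dist_eq_norm, dist_comm]; exact hbD.le
    let h : A := ak + ((2 * δ : ℝ) : ℂ) • 1
    have hhS : h ∈ S k := add_mem hakS ((S k).smul_mem (one_mem _) _)
    have hhsa : IsSelfAdjoint h := by
      refine IsSelfAdjoint.add (realPart b).2 ?_
      rw [IsSelfAdjoint, star_smul, star_one]; simp
    obtain ⟨r, s, hr, hs, h1, h2, h3⟩ := hhsa.exists_neg_part
    have := hfd k
    have hrS : r ∈ S k := h3 (S k) (isClosed_of_finiteDimensional _) hhS
    have hy : ∀ y ∈ D, δ * sqNorm ω y ≤ (ω (star y * (h * y))).re := by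
      intro y hy
      have e1 : star y * (h * y) = star y * (a * y) + star y * ((ak - a) * y)
          + ((2 * δ : ℝ) : ℂ) • (star y * y) := by
        simp only [h, add_mul, sub_mul, mul_add, mul_sub, smul_mul_assoc, one_mul, mul_smul_comm]
        abel
      have e2 := hpos.norm_mul_le (ak - a) y y
      rw [mul_assoc, Real.mul_self_sqrt (hpos.sqNorm_nonneg y)] at e2
      have e3 := mul_le_mul_of_nonneg_right hak (hpos.sqNorm_nonneg y)
      have e4 := (abs_le.mp (Complex.abs_re_le_norm (ω (star y * ((ak - a) * y))))).1
      rw [e1, map_add, map_add, map_smul, ← hpos.coe_sqNorm]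
      have e5 := hay y hy
      simp only [Complex.add_re, smul_eq_mul, ← Complex.ofReal_mul, Complex.ofReal_re]
      linarith
    have hr0 : r * r = 0 := by
      refine hfaith k _ (mul_mem hrS hrS) fun x hx => ?_
      set z := r * r * x with hz
      have hkm := hmono (hm k)
      have hzS : z ∈ S (m k) := mul_mem (mul_mem (hkm hrS) (hkm hrS)) hx
      have hzD : z ∈ D := (hD _).mpr ⟨_, hzS⟩
      have e1 := hy z hzD
      have e2 : star z * (h * z) = - (star (r * (r * (r * x))) * (r * (r * (r * x)))) := by
        have : star z * (h * z) = star x * ((r * r) * h * (r * r)) * x := by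
          simp only [hz, star_mul, hr, mul_assoc]
        rw [this, h2]
        simp only [star_mul, hr, mul_assoc, mul_neg, neg_mul]
      rw [e2, map_neg, Complex.neg_re] at e1
      have e3 := hpos.sqNorm_nonneg (r * (r * (r * x)))
      have e4 := hpos.sqNorm_nonneg z
      have e5 : sqNorm ω z = 0 := by
        unfold sqNorm at e3 e1 e4 ⊢
        nlinarith
      obtain ⟨μ, hμ⟩ := (hp k).scalar (star z * z) (mul_mem (star_mem hzS) hzS)
      have e6 : ω (p k * (star z * z) * p k) = 0 := by
        rw [(hst.compress (hp k).star_eq (hp k).mul_self (hωp k) _).1,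
          (hst.compress (hp k).star_eq (hp k).mul_self (hωp k) _).2, ← hpos.coe_sqNorm, e5]
        rfl
      rw [hμ, map_smul, hωp, smul_eq_mul, mul_one] at e6
      rw [e6, zero_smul] at hμ
      rw [← CStarRing.star_mul_self_eq_zero_iff, star_mul, (hp k).star_eq]
      simpa only [mul_assoc] using hμ
    rw [hr0, add_zero] at h1
    have e1 : 0 ≤ (φ h).re := by
      have := hφ.pos.sqNorm_nonneg s
      rw [h1]; rwa [sqNorm, hs] at this
    have e2 : φ a = φ h - φ (ak - a) - ((2 * δ : ℝ) : ℂ) := by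
      simp only [h, map_add, map_sub, map_smul, hφ.map_one, smul_eq_mul, mul_one]; ring
    have e3 := (abs_le.mp (Complex.abs_re_le_norm (φ (ak - a)))).2
    have e4 := hφ.norm_apply_le (ak - a)
    rw [e2, Complex.sub_re, Complex.sub_re, Complex.ofReal_re]
    have : ε = 4 * δ := by simp only [δ]; ring
    linarith
  refine ⟨⟨D, hDd, ω, hst, p, hpD, fun j => (hp j).star_eq, fun j => (hp j).mul_self, hωp, hωc,
    fun a hay φ hφ => ?_⟩⟩
  have hre : ∀ ψ : A →L[ℂ] ℂ, IsPos ψ → ∀ y : A,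
      (ψ (star y * ((realPart a : A) * y))).re = (ψ (star y * (a * y))).re := by
    intro ψ hψ y
    have : star y * ((realPart a : A) * y) =
        ((1 / 2 : ℝ) : ℂ) • (star y * (a * y) + star (star y * (a * y))) := by
      rw [realPart_apply_coe, ← Complex.coe_smul]
      simp only [star_mul, star_star, mul_add, add_mul, smul_mul_assoc, mul_smul_comm, mul_assoc]
      norm_num
    rw [this, map_smul, map_add, hψ.map_star, smul_eq_mul, Complex.re_ofReal_mul, Complex.add_re,
      Complex.star_def, Complex.conj_re]
    ring
  have := hdet _ (realPart a).2 (fun y hy => by rw [hre ω hpos]; exact hay y hy) φ hφ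
  have h1 := hre φ hφ.pos 1
  simp only [star_one, one_mul, mul_one] at h1
  rwa [h1] at this
end Construct

namespace ShiftTensorModel
variable {A : Type*} [CStarAlgebra A] {T : Type*} [CStarAlgebra T] (M : ShiftTensorModel A T)

theorem commute_e {i j : ℤ} (h : i ≠ j) (x y : A) : Commute (M.e i x) (M.e j y) :=
  M.commutes i j h x y

/-- The elementary tensor with entries `a i` at the sites `i ∈ J`. -/
def el (J : Finset ℤ) (a : ℤ → A) : T :=
  J.noncommProd (fun i => M.e i (a i)) fun _ _ _ _ h => M.commute_e h _ _

@[simp] theorem el_empty (a : ℤ → A) : M.el ∅ a = 1 := rfl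

theorem el_insert {J : Finset ℤ} {i : ℤ} (hi : i ∉ J) (a : ℤ → A) :
    M.el (insert i J) a = M.e i (a i) * M.el J a :=
  Finset.noncommProd_insert_of_notMem J i _ _ hi

theorem el_insert' {J : Finset ℤ} {i : ℤ} (hi : i ∉ J) (a : ℤ → A) :
    M.el (insert i J) a = M.el J a * M.e i (a i) :=
  Finset.noncommProd_insert_of_notMem' J i _ _ hi

theorem el_singleton (i : ℤ) (a : ℤ → A) : M.el {i} a = M.e i (a i) := by
  rw [← insert_empty_eq, el_insert _ (by simp), el_empty, mul_one]

theorem el_congr {J : Finset ℤ} {a b : ℤ → A} (h : ∀ i ∈ J, a i = b i) :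
    M.el J a = M.el J b :=
  Finset.noncommProd_congr rfl (fun i hi => by rw [h i hi]) _

theorem el_mul (J : Finset ℤ) (a b : ℤ → A) :
    M.el J (fun i => a i * b i) = M.el J a * M.el J b := by
  have := Finset.noncommProd_mul_distrib (s := J) (fun i => M.e i (a i)) (fun i => M.e i (b i))
    (fun _ _ _ _ h => M.commute_e h _ _) (fun _ _ _ _ h => M.commute_e h _ _)
    (fun _ _ _ _ h => M.commute_e h _ _)
  rw [el, el, el, ← this]
  exact Finset.noncommProd_congr rfl (fun i hi => by simp) _

theorem el_one (J : Finset ℤ) : M.el J (fun _ => 1) = 1 := by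
  induction J using Finset.induction_on with
  | empty => simp
  | insert i J hi ih => rw [el_insert _ hi, ih, map_one, one_mul]

theorem el_union {J K : Finset ℤ} (h : Disjoint J K) (a : ℤ → A) :
    M.el (J ∪ K) a = M.el J a * M.el K a :=
  Finset.noncommProd_union_of_disjoint h _ _

theorem el_extend {J K : Finset ℤ} (h : J ⊆ K) (a : ℤ → A) :
    M.el K (fun i => if i ∈ J then a i else 1) = M.el J a := by
  rw [← Finset.union_sdiff_of_subset h, el_union _ Finset.disjoint_sdiff,
    M.el_congr (b := a) (J := J) (fun i hi => by simp [hi]),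
    M.el_congr (b := fun _ => 1) (J := K \ J) (fun i hi => by simp at hi; simp [hi]), el_one,
    mul_one]

theorem commute_el {J : Finset ℤ} {i : ℤ} (hi : i ∉ J) (x : A) (a : ℤ → A) :
    Commute (M.e i x) (M.el J a) :=
  Finset.noncommProd_commute _ _ _ _ fun j hj => M.commute_e (by rintro rfl; exact hi hj) _ _

theorem el_commute_el {J K : Finset ℤ} (h : Disjoint J K) (a b : ℤ → A) :
    Commute (M.el J a) (M.el K b) :=
  Finset.noncommProd_commute _ _ _ _ fun _ hj =>
    (M.commute_el (Finset.disjoint_right.mp h hj) _ _).symm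

theorem star_el (J : Finset ℤ) (a : ℤ → A) : star (M.el J a) = M.el J (fun i => star (a i)) := by
  induction J using Finset.induction_on with
  | empty => simp
  | insert i J hi ih => rw [el_insert _ hi, el_insert' _ hi, star_mul, ih, map_star]

theorem el_smul (J : Finset ℤ) (c : ℤ → ℂ) (a : ℤ → A) :
    M.el J (fun i => c i • a i) = (∏ i ∈ J, c i) • M.el J a := by
  induction J using Finset.induction_on with
  | empty => simp
  | insert i J hi ih =>
    rw [el_insert _ hi, el_insert _ hi, ih, Finset.prod_insert hi, map_smul, smul_mul_smul_comm]

theorem el_toFinset {l : List ℤ} (hl : l.Nodup) (a : ℤ → A) :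
    M.el l.toFinset a = (l.map fun i => M.e i (a i)).prod :=
  Finset.noncommProd_toFinset l _ _ hl

/-- `Φ` is the product state with factors `φ`. -/
structure IsProd (φ : ℤ → (A →L[ℂ] ℂ)) (Φ : T →L[ℂ] ℂ) : Prop where
  factor : ∀ i, IsState (φ i)
  isState : IsState Φ
  apply_el : ∀ J a, Φ (M.el J a) = ∏ i ∈ J, φ i (a i)

theorem isProd_of_list {φ : ℤ → (A →L[ℂ] ℂ)} {Φ : T →L[ℂ] ℂ} (h1 : ∀ i, IsState (φ i))
    (h2 : IsState Φ) (h : ∀ (l : List ℤ), l.Nodup → ∀ a : ℤ → A,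
      Φ ((l.map fun i => M.e i (a i)).prod) = (l.map fun i => φ i (a i)).prod) :
    M.IsProd φ Φ := by
  refine ⟨h1, h2, fun J a => ?_⟩
  have := h J.toList J.nodup_toList a
  rw [← M.el_toFinset J.nodup_toList, Finset.toList_toFinset] at this
  rw [this, Finset.prod_map_toList]

theorem exists_isProd {φ : ℤ → (A →L[ℂ] ℂ)} (h : ∀ i, IsState (φ i)) : ∃ Φ, M.IsProd φ Φ := by
  obtain ⟨Φ, h1, h2⟩ := M.prodState φ h
  exact ⟨Φ, M.isProd_of_list h h1 h2⟩

variable (D : StarSubalgebra ℂ A)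

/-- The algebra generated by the copies of `D` at the sites in `S`. -/
def loc (S : Set ℤ) : StarSubalgebra ℂ T :=
  StarAlgebra.adjoin ℂ (⋃ i ∈ S, M.e i '' D)

variable {D}

theorem loc_mono {S S' : Set ℤ} (h : S ⊆ S') : M.loc D S ≤ M.loc D S' :=
  StarAlgebra.adjoin_mono (Set.biUnion_mono h fun _ _ => le_rfl)

theorem e_mem_loc {S : Set ℤ} {i : ℤ} (hi : i ∈ S) {a : A} (ha : a ∈ D) : M.e i a ∈ M.loc D S :=
  StarAlgebra.subset_adjoin _ _ (Set.mem_biUnion hi ⟨a, ha, rfl⟩)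

theorem el_mem_loc {S : Set ℤ} {J : Finset ℤ} (hJ : ↑J ⊆ S) {a : ℤ → A} (ha : ∀ i ∈ J, a i ∈ D) :
    M.el J a ∈ M.loc D S := by
  induction J using Finset.induction_on with
  | empty => exact one_mem _
  | insert i J hi ih =>
    rw [el_insert _ hi]
    rw [Finset.coe_insert, Set.insert_subset_iff] at hJ
    exact mul_mem (M.e_mem_loc hJ.1 (ha i (Finset.mem_insert_self _ _)))
      (ih hJ.2 fun j hj => ha j (Finset.mem_insert_of_mem hj))

theorem mem_span_of_mem_loc {S : Set ℤ} {x : T} (hx : x ∈ M.loc D S) :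
    x ∈ Submodule.span ℂ {x | ∃ (J : Finset ℤ) (a : ℤ → A), ↑J ⊆ S ∧ (∀ i, a i ∈ D) ∧
      x = M.el J a} := by
  set X := {x | ∃ (J : Finset ℤ) (a : ℤ → A), ↑J ⊆ S ∧ (∀ i, a i ∈ D) ∧ x = M.el J a}
  have hmul : Submodule.span ℂ X * Submodule.span ℂ X ≤ Submodule.span ℂ X := by
    rw [Submodule.span_mul_span, Submodule.span_le]
    rintro _ ⟨_, ⟨J, a, hJ, ha, rfl⟩, _, ⟨K, b, hK, hb, rfl⟩, rfl⟩
    refine Submodule.subset_span ⟨J ∪ K, fun i => (if i ∈ J then a i else 1) *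
      (if i ∈ K then b i else 1), by simp [hJ, hK], fun i => ?_, ?_⟩
    · refine mul_mem ?_ ?_ <;> split_ifs
      exacts [ha i, one_mem _, hb i, one_mem _]
    · rw [el_mul, el_extend _ Finset.subset_union_left, el_extend _ Finset.subset_union_right]
  have hone : (1 : T) ∈ Submodule.span ℂ X :=
    Submodule.subset_span ⟨∅, fun _ => 1, by simp, fun _ => one_mem _, by simp⟩
  induction hx using StarAlgebra.adjoin_induction with
  | mem x hx =>
    obtain ⟨i, hi, a, ha, rfl⟩ := Set.mem_iUnion₂.mp hx
    exact Submodule.subset_span ⟨{i}, fun _ => a, by simpa using hi, fun _ => ha,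
      by rw [el_singleton]⟩
  | algebraMap r => rw [Algebra.algebraMap_eq_smul_one]; exact Submodule.smul_mem _ _ hone
  | add x y _ _ hx hy => exact add_mem hx hy
  | mul x y _ _ hx hy => exact hmul (Submodule.mul_mem_mul hx hy)
  | star x hx' hx =>
    clear hx'
    induction hx using Submodule.span_induction with
    | mem x hx =>
      obtain ⟨J, a, hJ, ha, rfl⟩ := hx
      exact Submodule.subset_span ⟨J, _, hJ, fun i => star_mem (ha i), M.star_el J a⟩
    | zero => simp
    | add x y _ _ hx hy => rw [star_add]; exact add_mem hx hy
    | smul c x _ hx => rw [star_smul]; exact Submodule.smul_mem _ _ hx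

theorem loc_induction {S : Set ℤ} {P : T → Prop}
    (hel : ∀ (J : Finset ℤ) (a : ℤ → A), ↑J ⊆ S → (∀ i, a i ∈ D) → P (M.el J a))
    (hadd : ∀ x y, P x → P y → P (x + y)) (hsmul : ∀ (c : ℂ) x, P x → P (c • x)) :
    ∀ x ∈ M.loc D S, P x := by
  intro x hx
  have := M.mem_span_of_mem_loc hx
  clear hx
  induction this using Submodule.span_induction with
  | mem x hx =>
    obtain ⟨J, a, hJ, ha, rfl⟩ := hx
    exact hel J a hJ ha
  | zero =>
    have := hsmul 0 _ (hel ∅ (fun _ => 1) (by simp) fun _ => one_mem _)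
    simpa using this
  | add x y _ _ hx hy => exact hadd _ _ hx hy
  | smul c x _ hx => exact hsmul _ _ hx
end ShiftTensorModel

namespace ShiftTensorModel
variable {A : Type*} [CStarAlgebra A] {T : Type*} [CStarAlgebra T] (M : ShiftTensorModel A T)
  {D : StarSubalgebra ℂ A}

theorem loc_commute {S S' : Set ℤ} (h : Disjoint S S') {x y : T} (hx : x ∈ M.loc D S)
    (hy : y ∈ M.loc D S') : x * y = y * x := by
  refine M.loc_induction (P := fun y => x * y = y * x) ?_ ?_ ?_ y hy
  · intro J a hJ ha
    refine M.loc_induction (P := fun x => x * M.el J a = M.el J a * x) ?_ ?_ ?_ x hx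
    · intro K b hK hb
      exact M.el_commute_el (Finset.disjoint_coe.mp (h.mono hK hJ)) _ _
    · intro x y hx hy; rw [add_mul, mul_add, hx, hy]
    · intro c x hx; rw [smul_mul_assoc, mul_smul_comm, hx]
  · intro y z hy hz; rw [add_mul, mul_add, hy, hz]
  · intro c y hy; rw [smul_mul_assoc, mul_smul_comm, hy]

variable {M} in
theorem IsProd.map_mul {φ : ℤ → (A →L[ℂ] ℂ)} {Φ : T →L[ℂ] ℂ} (hΦ : M.IsProd φ Φ) {S S' : Set ℤ}
    (h : Disjoint S S') {x y : T} (hx : x ∈ M.loc D S) (hy : y ∈ M.loc D S') :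
    Φ (x * y) = Φ x * Φ y := by
  refine M.loc_induction (P := fun y => Φ (x * y) = Φ x * Φ y) ?_ ?_ ?_ y hy
  · intro K b hK hb
    refine M.loc_induction (P := fun x => Φ (x * M.el K b) = Φ x * Φ (M.el K b)) ?_ ?_ ?_ x hx
    · intro J a hJ ha
      have hJK : Disjoint J K := Finset.disjoint_coe.mp (h.mono hJ hK)
      have h1 : M.el J a = M.el J (fun i => if i ∈ J then a i else b i) :=
        M.el_congr fun i hi => by simp [hi]
      have h2 : M.el K b = M.el K (fun i => if i ∈ J then a i else b i) :=
        M.el_congr fun i hi => by simp [Finset.disjoint_right.mp hJK hi]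
      rw [h1, h2, ← M.el_union hJK, hΦ.apply_el, hΦ.apply_el, hΦ.apply_el,
        Finset.prod_union hJK]
    · intro x y hx hy; rw [add_mul, map_add, hx, hy, map_add, add_mul]
    · intro c x hx; rw [smul_mul_assoc, map_smul, hx, map_smul, smul_mul_assoc]
  · intro y z hy hz; rw [mul_add, map_add, hy, hz, map_add, mul_add]
  · intro c y hy; rw [mul_smul_comm, map_smul, hy, map_smul, mul_smul_comm]

variable {M} in
theorem IsProd.apply_e {φ : ℤ → (A →L[ℂ] ℂ)} {Φ : T →L[ℂ] ℂ} (hΦ : M.IsProd φ Φ) (i : ℤ) (a : A) :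
    Φ (M.e i a) = φ i a := by
  rw [← M.el_singleton i (fun _ => a), hΦ.apply_el, Finset.prod_singleton]

theorem exists_Ico_of_mem_loc {S : Set ℤ} {x : T} (hx : x ∈ M.loc D S) :
    ∃ N : ℕ, x ∈ M.loc D (Set.Ico (-N : ℤ) N) := by
  refine M.loc_induction (P := fun x => ∃ N : ℕ, x ∈ M.loc D (Set.Ico (-N : ℤ) N)) ?_ ?_ ?_ x hx
  · intro J a hJ ha
    obtain ⟨N, hN⟩ : ∃ N : ℕ, (J : Set ℤ) ⊆ Set.Ico (-N : ℤ) N := by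
      refine ⟨(∑ i ∈ J, i.natAbs) + 1, fun i hi => ?_⟩
      have := Finset.single_le_sum (f := Int.natAbs) (fun _ _ => Nat.zero_le _) hi
      have h1 : i.natAbs < (∑ i ∈ J, i.natAbs) + 1 := by omega
      constructor <;> omega
    exact ⟨N, M.el_mem_loc hN fun i _ => ha i⟩
  · rintro x y ⟨N, hx⟩ ⟨K, hy⟩
    refine ⟨max N K, add_mem (M.loc_mono ?_ hx) (M.loc_mono ?_ hy)⟩ <;>
    · apply Set.Ico_subset_Ico <;> push_cast <;> omega
  · rintro c x ⟨N, hx⟩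
    exact ⟨N, (M.loc D _).smul_mem hx c⟩

theorem dense_loc (hD : Dense (D : Set A)) : Dense (M.loc D Set.univ : Set T) := by
  have h1 : StarAlgebra.adjoin ℂ (⋃ n : ℤ, Set.range (M.e n)) ≤
      (M.loc D Set.univ).topologicalClosure := by
    refine StarAlgebra.adjoin_le ?_
    rw [Set.iUnion_subset_iff]
    rintro n _ ⟨a, rfl⟩
    have hc : Continuous (M.e n) := AddMonoidHomClass.continuous_of_bound (M.e n) 1 fun a => by
      simpa using NonUnitalStarAlgHom.norm_apply_le (M.e n) a
    have h2 : M.e n '' closure (D : Set A) ⊆ closure (M.e n '' D) := image_closure_subset_closure_image hc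
    have h3 : M.e n a ∈ closure (M.e n '' D) := h2 ⟨a, hD a, rfl⟩
    refine closure_mono ?_ h3
    rintro _ ⟨d, hd, rfl⟩
    exact M.e_mem_loc (Set.mem_univ n) hd
  have h2 : (StarAlgebra.adjoin ℂ (⋃ n : ℤ, Set.range (M.e n))).topologicalClosure ≤
      (M.loc D Set.univ).topologicalClosure :=
    StarSubalgebra.topologicalClosure_minimal h1 (StarSubalgebra.isClosed_topologicalClosure _)
  rw [M.generating] at h2
  intro x
  exact h2 (by trivial : x ∈ (⊤ : StarSubalgebra ℂ T))

/-- The translation by `c` sites. -/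
noncomputable def sh (c : ℤ) : T ≃⋆ₐ[ℂ] T := M.shift ^ c

theorem sh_one (x : T) : M.sh 1 x = M.shift x := by simp [sh]

theorem sh_zero (x : T) : M.sh 0 x = x := by simp [sh]

theorem sh_add (c d : ℤ) (x : T) : M.sh (c + d) x = M.sh c (M.sh d x) := by
  simp [sh, zpow_add]

theorem sh_e (c i : ℤ) (a : A) : M.sh c (M.e i a) = M.e (i + c) a := by
  have hneg : ∀ i, M.sh (-1) (M.e i a) = M.e (i - 1) a := by
    intro i
    have := M.shift_apply (i - 1) a
    rw [sub_add_cancel, ← sh_one] at this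
    rw [← this, ← sh_add]; simp [sh_zero]
  induction c using Int.induction_on generalizing i with
  | zero => simp [sh_zero]
  | succ c ih =>
    rw [sh_add, sh_one, M.shift_apply, ih, show i + 1 + c = i + (c + 1) by ring]
  | pred c ih =>
    rw [sub_eq_add_neg, sh_add, hneg, ih, show i - 1 + -c = i + (-c + -1 : ℤ) by ring]

theorem sh_mem {S S' : Set ℤ} (c : ℤ) (h : ∀ i ∈ S, i + c ∈ S') {x : T} (hx : x ∈ M.loc D S) :
    M.sh c x ∈ M.loc D S' := by
  have : M.loc D S ≤ (M.loc D S').comap (M.sh c : T →⋆ₐ[ℂ] T) := by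
    refine StarAlgebra.adjoin_le ?_
    rw [Set.iUnion₂_subset_iff]
    rintro i hi _ ⟨a, ha, rfl⟩
    have := M.sh_e c i a
    simp only [SetLike.mem_coe, StarSubalgebra.mem_comap]
    change M.sh c (M.e i a) ∈ _
    rw [this]
    exact M.e_mem_loc (h i hi) ha
  exact this hx

variable {M} in
theorem IsProd.map_sh {ω : A →L[ℂ] ℂ} {Ω : T →L[ℂ] ℂ} (hΩ : M.IsProd (fun _ => ω) Ω) (c : ℤ) (x : T) :
    Ω (M.sh c x) = Ω x := by
  have hcont : Continuous (M.sh c) :=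
    AddMonoidHomClass.continuous_of_bound (M.sh c) 1 fun a => by
      simpa using NonUnitalStarAlgHom.norm_apply_le (M.sh c) a
  have hd := M.dense_loc (D := ⊤) (by simp)
  have heq : Set.EqOn (fun x => Ω (M.sh c x)) Ω (M.loc ⊤ Set.univ) := by
    refine M.loc_induction (P := fun x => Ω (M.sh c x) = Ω x) ?_ ?_ ?_
    · intro J a hJ _
      clear hJ
      have h1 : M.sh c (M.el J a) = M.el (J.map (addRightEmbedding c)) (fun i => a (i - c)) := by
        induction J using Finset.induction_on with
        | empty => simp
        | insert i J hi ih =>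
          rw [el_insert _ hi, Finset.map_insert, el_insert _ (by simpa using hi), _root_.map_mul, ih,
            sh_e]
          simp
      rw [h1, hΩ.apply_el, hΩ.apply_el, Finset.prod_map]
      simp
    · intro x y hx hy; rw [_root_.map_add, _root_.map_add, hx, hy, _root_.map_add]
    · intro r x hx; rw [_root_.map_smul, _root_.map_smul, hx, _root_.map_smul]
  exact congrFun (Continuous.ext_on hd (by fun_prop) Ω.continuous heq) x
end ShiftTensorModel

theorem IsPos.re_realPart {A : Type*} [CStarAlgebra A] {ψ : A →L[ℂ] ℂ} (hψ : IsPos ψ) (a y : A) :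
    (ψ (star y * ((realPart a : A) * y))).re = (ψ (star y * (a * y))).re := by
  have : star y * ((realPart a : A) * y) =
      ((1 / 2 : ℝ) : ℂ) • (star y * (a * y) + star (star y * (a * y))) := by
    rw [realPart_apply_coe, ← Complex.coe_smul]
    simp only [star_mul, star_star, mul_add, add_mul, smul_mul_assoc, mul_smul_comm, mul_assoc]
    norm_num
  rw [this, map_smul, map_add, hψ.map_star, smul_eq_mul, Complex.re_ofReal_mul, Complex.add_re,
    Complex.star_def, Complex.conj_re]
  ring

namespace ShiftTensorModel
variable {A : Type*} [CStarAlgebra A] {T : Type*} [CStarAlgebra T] (M : ShiftTensorModel A T)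
  {D : StarSubalgebra ℂ A}

theorem exists_slice {φ : ℤ → (A →L[ℂ] ℂ)} (k : ℤ) {u : T} (hu : u ∈ M.loc D Set.univ) :
    ∃ b : A, ∀ (ρ : A →L[ℂ] ℂ) (Φ : T →L[ℂ] ℂ), M.IsProd (Function.update φ k ρ) Φ →
      ∀ x z, Φ (M.e k x * (u * M.e k z)) = ρ (x * (b * z)) := by
  refine M.loc_induction (P := fun u => ∃ b : A, ∀ (ρ : A →L[ℂ] ℂ) (Φ : T →L[ℂ] ℂ),
    M.IsProd (Function.update φ k ρ) Φ →
      ∀ x z, Φ (M.e k x * (u * M.e k z)) = ρ (x * (b * z))) ?_ ?_ ?_ u hu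
  · intro J a hJ ha
    clear hJ
    set a' : ℤ → A := fun i => if i ∈ J then a i else 1 with ha'
    refine ⟨(∏ i ∈ J.erase k, φ i (a i)) • a' k, fun ρ Φ hΦ x z => ?_⟩
    have h1 : M.el J a = M.el (insert k J) a' :=
      (M.el_extend (Finset.subset_insert k J) a).symm
    have h2 : ∀ x, M.e k x = M.el (insert k J) (Function.update 1 k x) := by
      intro x
      have := M.el_extend (J := {k}) (K := insert k J) (by simp) (Function.update 1 k x)
      rw [el_singleton, Function.update_self] at this
      rw [← this]
      refine M.el_congr fun i _ => ?_
      by_cases hi : i = k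
      · subst hi; simp
      · simp [hi]
    rw [h1, h2 x, h2 z, ← el_mul, ← el_mul, hΦ.apply_el, ← Finset.insert_erase
      (Finset.mem_insert_self k J), Finset.prod_insert (Finset.notMem_erase _ _)]
    have h3 : (insert k J).erase k = J.erase k := by ext; simp
    rw [h3, Finset.prod_congr rfl (g := fun i => φ i (a i))]
    · simp [mul_comm]
    · intro i hi
      rw [Finset.mem_erase] at hi
      simp [hi.1, hi.2, ha']
  · rintro u v ⟨b, hb⟩ ⟨c, hc⟩
    refine ⟨b + c, fun ρ Φ hΦ x z => ?_⟩
    simp only [add_mul, mul_add, map_add, hb ρ Φ hΦ, hc ρ Φ hΦ]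
  · rintro r u ⟨b, hb⟩
    refine ⟨r • b, fun ρ Φ hΦ x z => ?_⟩
    simp only [smul_mul_assoc, mul_smul_comm, map_smul, hb ρ Φ hΦ]

variable {M} in
theorem IsProd.eq_on_loc {φ φ' : ℤ → (A →L[ℂ] ℂ)} {Φ Φ' : T →L[ℂ] ℂ} (hΦ : M.IsProd φ Φ)
    (hΦ' : M.IsProd φ' Φ') {S : Set ℤ} (h : ∀ i ∈ S, φ i = φ' i) {x : T} (hx : x ∈ M.loc D S) :
    Φ x = Φ' x := by
  refine M.loc_induction (P := fun x => Φ x = Φ' x) ?_ ?_ ?_ x hx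
  · intro J a hJ _
    rw [hΦ.apply_el, hΦ'.apply_el]
    exact Finset.prod_congr rfl fun i hi => by rw [h i (hJ hi)]
  · intro x y hx hy; rw [map_add, map_add, hx, hy]
  · intro c x hx; rw [map_smul, map_smul, hx]

theorem detects_prod (E : ExcisedState A) {Ω : T →L[ℂ] ℂ} (hΩ : M.IsProd (fun _ => E.ω) Ω)
    {J : Finset ℤ} {t : T} (ht : t ∈ M.loc E.D (J : Set ℤ))
    (hpos : ∀ y ∈ M.loc E.D (J : Set ℤ), 0 ≤ (Ω (star y * (t * y))).re)
    {φ : ℤ → (A →L[ℂ] ℂ)} {Φ : T →L[ℂ] ℂ} (hΦ : M.IsProd φ Φ) :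
    ∀ y ∈ M.loc E.D (J : Set ℤ), 0 ≤ (Φ (star y * (t * y))).re := by
  have key : ∀ K : Finset ℤ, K ⊆ J → ∀ (φ : ℤ → (A →L[ℂ] ℂ)) (Φ : T →L[ℂ] ℂ), M.IsProd φ Φ →
      (∀ i ∉ K, φ i = E.ω) → ∀ y ∈ M.loc E.D (J : Set ℤ), 0 ≤ (Φ (star y * (t * y))).re := by
    intro K
    induction K using Finset.induction_on with
    | empty =>
      intro _ φ Φ hΦ h y hy
      rw [hΦ.eq_on_loc hΩ (fun i _ => h i (by simp)) (mul_mem (star_mem hy) (mul_mem ht hy))]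
      exact hpos y hy
    | insert k K hk ih =>
      intro hKJ φ Φ hΦ h y hy
      have hkJ : k ∈ J := hKJ (Finset.mem_insert_self k K)
      have hs : ∀ i, IsState (Function.update φ k E.ω i) := by
        intro i
        by_cases hi : i = k
        · subst hi; simpa using E.isState
        · simpa [hi] using hΦ.factor i
      obtain ⟨Φ₀, hΦ₀⟩ := M.exists_isProd hs
      have hu : star y * (t * y) ∈ M.loc E.D Set.univ :=
        M.loc_mono (Set.subset_univ _) (mul_mem (star_mem hy) (mul_mem ht hy))
      obtain ⟨b, hb⟩ := M.exists_slice (φ := φ) k hu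
      have h1 := hb (φ k) Φ (by simpa using hΦ) 1 1
      simp only [map_one, one_mul, mul_one] at h1
      rw [h1]
      refine E.detects b (fun x hx => ?_) _ (hΦ.factor k)
      rw [← hb _ _ hΦ₀]
      have h2 := ih ((Finset.subset_insert k K).trans hKJ) _ Φ₀ hΦ₀ (fun i hi => ?_)
        (y * M.e k x) (mul_mem hy (M.e_mem_loc hkJ hx))
      · simpa only [star_mul, map_star, mul_assoc] using h2
      · by_cases hik : i = k
        · subst hik; simp
        · simpa [hik] using h i (by simp [hik, hi])
  intro y hy
  have hs : ∀ i, IsState ((fun i => if i ∈ J then φ i else E.ω) i) := by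
    intro i
    by_cases hi : i ∈ J
    · simpa [hi] using hΦ.factor i
    · simpa [hi] using E.isState
  obtain ⟨Φ', hΦ'⟩ := M.exists_isProd hs
  rw [hΦ.eq_on_loc hΦ' (fun i hi => ?_) (mul_mem (star_mem hy) (mul_mem ht hy))]
  · exact key J le_rfl _ Φ' hΦ' (fun i hi => by simp [hi]) y hy
  · have : i ∈ J := hi
    simp [this]

theorem eq_zero_of_prod {w : T} (h : ∀ φ Φ, M.IsProd φ Φ → Φ (star w * w) = 0) : w = 0 := by
  by_contra hw
  obtain ⟨φ, Φ, h1, h2, h3, h4⟩ := M.minimality (star w * w) ⟨w, rfl⟩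
    (by rwa [Ne, CStarRing.star_mul_self_eq_zero_iff])
  exact h3 (h φ Φ (M.isProd_of_list h1 h2 h4))

theorem detects (E : ExcisedState A) {Ω : T →L[ℂ] ℂ} (hΩ : M.IsProd (fun _ => E.ω) Ω)
    {J : Finset ℤ} {t : T} (ht : t ∈ M.loc E.D (J : Set ℤ))
    (hpos : ∀ y ∈ M.loc E.D (J : Set ℤ), 0 ≤ (Ω (star y * (t * y))).re)
    {φ : T →L[ℂ] ℂ} (hφ : IsState φ) : 0 ≤ (φ t).re := by
  have e1 := hφ.pos.re_realPart t 1
  simp only [star_one, one_mul, mul_one] at e1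
  rw [← e1]
  set h : T := (realPart t : T)
  have hsa : IsSelfAdjoint h := (realPart t).2
  have hloc : h ∈ M.loc E.D (J : Set ℤ) := by
    simp only [h, realPart_apply_coe]
    have := (M.loc E.D (J : Set ℤ)).smul_mem (add_mem ht (star_mem ht)) ((2⁻¹ : ℝ) : ℂ)
    rwa [Complex.coe_smul] at this
  obtain ⟨r, s, hr, hs, h1, h2, h3⟩ := hsa.exists_neg_part
  set B := (M.loc E.D (J : Set ℤ)).topologicalClosure
  have hrB : r ∈ B := h3 B (StarSubalgebra.isClosed_topologicalClosure _)
    ((M.loc E.D (J : Set ℤ)).le_topologicalClosure hloc)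
  have hcB : r * r ∈ B := mul_mem hrB hrB
  have hz : r * (r * r) = 0 := by
    refine M.eq_zero_of_prod fun ρ Φ hΦ => ?_
    have h4 : ∀ y ∈ B, 0 ≤ (Φ (star y * (h * y))).re := by
      intro y hy
      have hcl : IsClosed {y : T | 0 ≤ (Φ (star y * (h * y))).re} := by
        refine isClosed_le continuous_const ?_
        fun_prop
      refine closure_minimal (fun y hy => ?_) hcl hy
      rw [Set.mem_ofPred_eq, hΦ.isState.pos.re_realPart]
      exact M.detects_prod E hΩ ht hpos hΦ y hy
    have h5 := h4 _ hcB
    have h6 : star (r * r) * (h * (r * r)) = -(star (r * (r * r)) * (r * (r * r))) := by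
      rw [star_mul, hr, ← mul_assoc, h2]
      simp only [star_mul, hr, mul_assoc]
    rw [h6, map_neg, Complex.neg_re] at h5
    have h7 := hΦ.isState.pos.sqNorm_nonneg (r * (r * r))
    rw [← hΦ.isState.pos.coe_sqNorm]
    have : sqNorm Φ (r * (r * r)) = 0 := by unfold sqNorm at h7 ⊢; linarith
    rw [this]; rfl
  have hr0 : r * r = 0 := by
    have e : star (r * r) * (r * r) = 0 := by
      rw [star_mul, hr, mul_assoc, hz, mul_zero]
    exact CStarRing.star_mul_self_eq_zero_iff _ |>.mp e
  rw [hr0, add_zero] at h1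
  have := hφ.pos.sqNorm_nonneg s
  rwa [sqNorm, hs, ← h1] at this
end ShiftTensorModel

/-- A C*-algebra with local subalgebras indexed by sets of sites, a translation action, and a
translation invariant product state `Ω` that is excised by local projections and whose local
vector states determine positivity. -/
structure LocalSystem (T : Type*) [CStarAlgebra T] where
  loc : Set ℤ → StarSubalgebra ℂ T
  Ω : T →L[ℂ] ℂ
  sh : ℤ → T ≃⋆ₐ[ℂ] T
  Q : Finset ℤ → ℕ → T
  mono : ∀ {S S' : Set ℤ}, S ⊆ S' → loc S ≤ loc S'
  isState : IsState Ω
  commute : ∀ {S S' : Set ℤ}, Disjoint S S' → ∀ {x y : T}, x ∈ loc S → y ∈ loc S' → x * y = y * x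
  map_mul : ∀ {S S' : Set ℤ}, Disjoint S S' → ∀ {x y : T}, x ∈ loc S → y ∈ loc S' →
    Ω (x * y) = Ω x * Ω y
  sh_zero : ∀ x, sh 0 x = x
  sh_add : ∀ c d x, sh (c + d) x = sh c (sh d x)
  sh_mem : ∀ {S S' : Set ℤ} (c : ℤ), (∀ i ∈ S, i + c ∈ S') → ∀ {x}, x ∈ loc S → sh c x ∈ loc S'
  Ω_sh : ∀ c x, Ω (sh c x) = Ω x
  Q_mem : ∀ (J : Finset ℤ) m, Q J m ∈ loc (J : Set ℤ)
  Q_star : ∀ J m, star (Q J m) = Q J m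
  Q_mul : ∀ {J J' : Finset ℤ}, J ⊆ J' → ∀ m, Q J m * Q J' m = Q J' m
  Ω_Q : ∀ J m, Ω (Q J m) = 1
  excise : ∀ {J : Finset ℤ} {x : T}, x ∈ loc (J : Set ℤ) →
    ∀ᶠ m in Filter.atTop, Q J m * x * Q J m = Ω x • Q J m
  detects : ∀ {J : Finset ℤ} {t : T}, t ∈ loc (J : Set ℤ) →
    (∀ y ∈ loc (J : Set ℤ), 0 ≤ (Ω (star y * (t * y))).re) →
    ∀ φ : T →L[ℂ] ℂ, IsState φ → 0 ≤ (φ t).re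
  dense : Dense (loc Set.univ : Set T)
  exists_Ico : ∀ {x : T}, x ∈ loc Set.univ → ∃ N : ℕ, x ∈ loc (Set.Ico (-N : ℤ) N)

/-- A translation covariant family of one-site elements that are normalized and orthogonal to
the identity in the product state. -/
structure LocalSystem.Marker {T : Type*} [CStarAlgebra T] (L : LocalSystem T) where
  v : ℤ → T
  v_mem : ∀ u, v u ∈ L.loc {u}
  sh_v : ∀ c u, L.sh c (v u) = v (u + c)
  Ω_v : ∀ u, L.Ω (v u) = 0
  Ω_vv : ∀ u, L.Ω (star (v u) * v u) = 1

namespace ShiftTensorModel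
variable {A : Type*} [CStarAlgebra A] {T : Type*} [CStarAlgebra T] (M : ShiftTensorModel A T)

theorem eventually_excise (E : ExcisedState A) {Ω : T →L[ℂ] ℂ} (hΩ : M.IsProd (fun _ => E.ω) Ω)
    {J : Finset ℤ} {x : T} (hx : x ∈ M.loc E.D (J : Set ℤ)) :
    ∀ᶠ m in Filter.atTop, M.el J (fun _ => E.p m) * x * M.el J (fun _ => E.p m) =
      Ω x • M.el J (fun _ => E.p m) := by
  refine M.loc_induction (P := fun x => ∀ᶠ m in Filter.atTop,
    M.el J (fun _ => E.p m) * x * M.el J (fun _ => E.p m) =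
      Ω x • M.el J (fun _ => E.p m)) ?_ ?_ ?_ x hx
  · intro K a hK ha
    have hK : K ⊆ J := hK
    have h1 : ∀ᶠ m in Filter.atTop, ∀ i ∈ J, E.p m * a i * E.p m = E.ω (a i) • E.p m :=
      (Filter.eventually_all_finset J).mpr fun i _ => E.excise _ (ha i)
    filter_upwards [h1] with m hm
    rw [← M.el_extend hK, ← M.el_mul, ← M.el_mul, hΩ.apply_el, ← M.el_smul]
    refine M.el_congr fun i hi => ?_
    split_ifs with h
    · exact hm i hi
    · rw [mul_one, E.p_mul, E.isState.map_one, one_smul]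
  · intro x y hx hy
    filter_upwards [hx, hy] with m h1 h2
    rw [mul_add, add_mul, h1, h2, map_add, add_smul]
  · intro c x hx
    filter_upwards [hx] with m h1
    rw [mul_smul_comm, smul_mul_assoc, h1, map_smul, smul_smul, smul_eq_mul]

/-- The local system generated by an excised state. -/
noncomputable def localSystem (E : ExcisedState A) {Ω : T →L[ℂ] ℂ} (hΩ : M.IsProd (fun _ => E.ω) Ω) :
    LocalSystem T where
  loc := M.loc E.D
  Ω := Ω
  sh := M.sh
  Q J m := M.el J fun _ => E.p m
  mono := M.loc_mono
  isState := hΩ.isState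
  commute h _ _ := M.loc_commute h
  map_mul h _ _ := hΩ.map_mul h
  sh_zero := M.sh_zero
  sh_add := M.sh_add
  sh_mem c h _ := M.sh_mem c h
  Ω_sh := hΩ.map_sh
  Q_mem J m := M.el_mem_loc le_rfl fun _ _ => E.p_mem m
  Q_star J m := by rw [M.star_el]; simp only [E.p_star]
  Q_mul {J J'} h m := by
    rw [← M.el_extend h, ← M.el_mul]
    refine M.el_congr fun i _ => ?_
    split_ifs
    · exact E.p_mul m
    · exact one_mul _
  Ω_Q J m := by rw [hΩ.apply_el]; simp [E.ω_p]
  excise := M.eventually_excise E hΩ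
  detects ht h φ hφ := M.detects E hΩ ht h hφ
  dense := M.dense_loc E.dense
  exists_Ico := M.exists_Ico_of_mem_loc

/-- The marker given by an element orthogonal to the identity. -/
noncomputable def marker (E : ExcisedState A) {Ω : T →L[ℂ] ℂ} (hΩ : M.IsProd (fun _ => E.ω) Ω)
    {v : A} (hv : v ∈ E.D) (h0 : E.ω v = 0) (h1 : E.ω (star v * v) = 1) :
    (M.localSystem E hΩ).Marker where
  v u := M.e u v
  v_mem u := M.e_mem_loc (Set.mem_singleton u) hv
  sh_v c u := M.sh_e c u v
  Ω_v u := (hΩ.apply_e u v).trans h0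
  Ω_vv u := by
    rw [← map_star, ← _root_.map_mul]
    exact (hΩ.apply_e u _).trans h1

theorem isPureState_of_trivial (M : ShiftTensorModel A T) (E : ExcisedState A)
    (h : ∀ v ∈ E.D, E.ω v = 0 → E.ω (star v * v) ≠ 1) {φ : T →L[ℂ] ℂ} (hφ : IsState φ) :
    IsPureState φ := by
  have h1 : ∀ a ∈ E.D, E.ω (star (a - E.ω a • 1) * (a - E.ω a • 1)) = 0 := by
    intro a ha
    set b := a - E.ω a • (1 : A) with hb
    have hbD : b ∈ E.D := sub_mem ha (E.D.smul_mem (one_mem _) _)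
    have hb0 : E.ω b = 0 := by simp [hb, E.isState.map_one]
    rw [← E.isState.pos.coe_sqNorm]
    by_contra hne
    have hn : 0 ≤ sqNorm E.ω b := E.isState.pos.sqNorm_nonneg b
    have hne' : sqNorm E.ω b ≠ 0 := by exact_mod_cast hne
    refine h (((√(sqNorm E.ω b))⁻¹ : ℝ) • b) ?_ ?_ ?_
    · rw [← Complex.coe_smul]; exact E.D.smul_mem hbD _
    · rw [← Complex.coe_smul, map_smul, hb0, smul_zero]
    · rw [← Complex.coe_smul, star_smul, smul_mul_smul_comm, map_smul, ← E.isState.pos.coe_sqNorm,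
        Complex.star_def, Complex.conj_ofReal, smul_eq_mul]
      norm_cast
      rw [← mul_inv, Real.mul_self_sqrt hn, inv_mul_cancel₀ hne']
  have h2 : ∀ a ∈ E.D, a = E.ω a • 1 := by
    intro a ha
    set b := a - E.ω a • (1 : A) with hb
    suffices b = 0 from sub_eq_zero.mp this
    have hbD : b ∈ E.D := sub_mem ha (E.D.smul_mem (one_mem _) _)
    have hbb : E.ω (star b * b) = 0 := h1 a ha
    have hy : ∀ y ∈ E.D, E.ω (star y * (star b * b * y)) = 0 := by
      intro y hy
      have e0 : ∀ z ∈ E.D, sqNorm E.ω (z - E.ω z • 1) = 0 := by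
        intro z hz
        have := h1 z hz
        rw [← E.isState.pos.coe_sqNorm] at this
        exact_mod_cast this
      have e1 : sqNorm E.ω (b * y) = 0 := by
        have e2 : b * y = b * (y - E.ω y • 1) + E.ω y • b := by
          rw [mul_sub, mul_smul_comm, mul_one]; abel
        have e3 := E.isState.pos.sqNorm_mul_le b (y - E.ω y • 1)
        rw [e0 y hy, mul_zero] at e3
        have e4 : sqNorm E.ω (b * (y - E.ω y • 1)) = 0 :=
          le_antisymm e3 (E.isState.pos.sqNorm_nonneg _)
        have e5 : sqNorm E.ω b = 0 := by
          rw [← E.isState.pos.coe_sqNorm] at hbb; exact_mod_cast hbb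
        have e6 : ∀ x z, sqNorm E.ω x = 0 → E.ω (star x * z) = 0 := by
          intro x z hx
          have := E.isState.pos.norm_le x z
          rw [hx, Real.sqrt_zero, zero_mul] at this
          exact norm_le_zero_iff.mp this
        rw [sqNorm, e2, star_add, add_mul, map_add, e6 _ _ e4, star_smul, smul_mul_assoc, map_smul,
          e6 _ _ e5]
        simp
      have e7 := E.isState.pos.coe_sqNorm (b * y)
      rw [e1] at e7
      rw [← mul_assoc, ← mul_assoc, ← star_mul, mul_assoc, ← e7]; rfl
    have hst : ∀ ρ : A →L[ℂ] ℂ, IsState ρ → ρ (star b * b) = 0 := by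
      intro ρ hρ
      have e1 := E.detects (-(star b * b)) (fun y hy' => by
        rw [neg_mul, mul_neg, map_neg, hy y hy']; simp) ρ hρ
      rw [map_neg, Complex.neg_re] at e1
      have e2 := hρ.pos.sqNorm_nonneg b
      rw [← hρ.pos.coe_sqNorm]
      have : sqNorm ρ b = 0 := by unfold sqNorm at e2 ⊢; linarith
      rw [this]; rfl
    refine M.inj 0 ?_
    rw [map_zero]
    refine M.eq_zero_of_prod fun ρ Φ hΦ => ?_
    rw [← map_star, ← _root_.map_mul, hΦ.apply_e]
    exact hst _ (hΦ.factor 0)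
  have h3 : ∀ x ∈ M.loc E.D Set.univ, ∃ c : ℂ, x = c • 1 := by
    refine M.loc_induction ?_ ?_ ?_
    · intro J a _ ha
      refine ⟨∏ i ∈ J, E.ω (a i), ?_⟩
      rw [← M.el_one J, ← M.el_smul]
      exact M.el_congr fun i _ => h2 _ (ha i)
    · rintro x y ⟨c, rfl⟩ ⟨d, rfl⟩; exact ⟨c + d, by rw [add_smul]⟩
    · rintro r x ⟨c, rfl⟩; exact ⟨r * c, by rw [mul_smul]⟩
  have h4 : ∀ ψ : T →L[ℂ] ℂ, IsState ψ → ψ = φ := by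
    intro ψ hψ
    refine DFunLike.coe_injective (Continuous.ext_on (M.dense_loc E.dense) ψ.continuous
      φ.continuous fun x hx => ?_)
    obtain ⟨c, rfl⟩ := h3 x hx
    rw [map_smul, map_smul, hψ.map_one, hφ.map_one]
  exact ⟨hφ, fun ψ₁ ψ₂ _ h₁ h₂ _ _ _ => ⟨h4 _ h₁, h4 _ h₂⟩⟩
end ShiftTensorModel

section Averages
variable {E : Type*} [NormedAddCommGroup E] [NormedSpace ℝ E]

/-- The arithmetic means of finite nonempty lists in `V`. -/
def uniformMeans (V : Set E) : Set E :=
  {p | ∃ l : List E, l ≠ [] ∧ (∀ x ∈ l, x ∈ V) ∧ p = (l.length : ℝ)⁻¹ • l.sum}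

theorem subset_uniformMeans (V : Set E) : V ⊆ uniformMeans V := fun x hx =>
  ⟨[x], by simp, by simpa using hx, by simp⟩

theorem convex_closure_uniformMeans (V : Set E) : Convex ℝ (closure (uniformMeans V)) := by
  rw [convex_iff_forall_pos]
  intro f hf g hg s t hs ht hst
  have key : ∀ f ∈ uniformMeans V, ∀ g ∈ uniformMeans V,
      s • f + t • g ∈ closure (uniformMeans V) := by
    rintro _ ⟨l, hl, hlV, rfl⟩ _ ⟨k, hk, hkV, rfl⟩
    set f := (l.length : ℝ)⁻¹ • l.sum
    set g := (k.length : ℝ)⁻¹ • k.sum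
    have hl0 : (l.length : ℝ) ≠ 0 := by simpa using hl
    have hk0 : (k.length : ℝ) ≠ 0 := by simpa using hk
    have hlim : Filter.Tendsto (fun N : ℕ => (1 - (⌊t * N⌋₊ : ℝ) / N) • f + ((⌊t * N⌋₊ : ℝ) / N) • g)
        Filter.atTop (nhds (s • f + t • g)) := by
      have h1 : Filter.Tendsto (fun N : ℕ => (⌊t * N⌋₊ : ℝ) / N) Filter.atTop (nhds t) :=
        (tendsto_nat_floor_mul_div_atTop ht.le).comp tendsto_natCast_atTop_atTop
      have h2 : s = 1 - t := by linarith
      rw [h2]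
      exact ((h1.const_sub 1).smul_const f).add (h1.smul_const g)
    refine mem_closure_of_tendsto hlim ?_
    filter_upwards [Filter.eventually_gt_atTop 0] with N hN
    have hNR : (N : ℝ) ≠ 0 := by positivity
    set p := ⌊t * N⌋₊ with hp
    have hpN : p ≤ N := by
      rw [hp]
      refine Nat.floor_le_of_le ?_
      have : (0 : ℝ) ≤ N := by positivity
      nlinarith
    obtain ⟨q, hq⟩ : ∃ q, N = p + q := ⟨N - p, by omega⟩
    refine ⟨(List.replicate (q * k.length) l).flatten ++ (List.replicate (p * l.length) k).flatten,
      ?_, ?_, ?_⟩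
    · intro h
      have := congrArg List.length h
      simp only [List.length_append, List.length_flatten, List.map_replicate, List.sum_replicate,
        List.length_nil, smul_eq_mul] at this
      have hl1 : 0 < l.length := List.length_pos_iff.mpr hl
      have hk1 : 0 < k.length := List.length_pos_iff.mpr hk
      have : 0 < q * k.length * l.length + p * l.length * k.length := by
        have : q * k.length * l.length + p * l.length * k.length = N * (k.length * l.length) := by
          rw [hq]; ring
        rw [this]; positivity
      omega
    · intro x hx
      simp only [List.mem_append, List.mem_flatten, List.mem_replicate] at hx
      rcases hx with ⟨l', ⟨_, rfl⟩, hx⟩ | ⟨l', ⟨_, rfl⟩, hx⟩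
      exacts [hlV x hx, hkV x hx]
    · simp only [List.length_append, List.length_flatten, List.map_replicate, List.sum_replicate,
        smul_eq_mul, List.sum_append, List.sum_flatten, ← Nat.cast_smul_eq_nsmul ℝ]
      have e1 : ((q * k.length * l.length + p * l.length * k.length : ℕ) : ℝ) =
          N * (k.length * l.length) := by rw [hq]; push_cast; ring
      have hNq : (N : ℝ) = p + q := by exact_mod_cast hq
      have e2 : 1 - (p : ℝ) / N = q / N := by field_simp; linarith
      rw [e1, e2, smul_add, smul_smul, smul_smul]
      simp only [smul_smul]
      push_cast
      congr 2 <;> field_simp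
  have := map_mem_closure₂ (f := fun f g : E => s • f + t • g) (by fun_prop) hf hg
    (u := closure (uniformMeans V)) (fun a ha b hb => key a ha b hb)
  rwa [closure_closure] at this

theorem exists_mean_near {V : Set E} {p : E} (hp : p ∈ closure (uniformMeans V)) {ε : ℝ}
    (hε : 0 < ε) (K₀ : ℕ) : ∃ K : ℕ, K₀ ≤ K ∧ 0 < K ∧ ∃ f : Fin K → E, (∀ k, f k ∈ V) ∧
      ‖(K : ℝ)⁻¹ • ∑ k, f k - p‖ < ε := by
  obtain ⟨_, ⟨l, hl, hlV, rfl⟩, hd⟩ := Metric.mem_closure_iff.mp hp ε hε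
  set l' := (List.replicate (K₀ + 1) l).flatten with hl'
  have hl1 : 0 < l.length := List.length_pos_iff.mpr hl
  have hlen : l'.length = (K₀ + 1) * l.length := by
    simp [hl', List.length_flatten]
  refine ⟨l'.length, by rw [hlen]; nlinarith, by rw [hlen]; positivity, fun k => l'.get k,
    fun k => ?_, ?_⟩
  · have := List.get_mem l' k
    simp only [hl', List.mem_flatten, List.mem_replicate] at this
    obtain ⟨_, ⟨_, rfl⟩, h⟩ := this
    exact hlV _ h
  · have h1 : ∑ k, l'.get k = l'.sum := by simp
    have h2 : l'.sum = ((K₀ + 1 : ℕ) : ℝ) • l.sum := by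
      simp [hl', List.sum_flatten, ← Nat.cast_smul_eq_nsmul ℝ]
    rw [h1, h2, hlen, smul_smul, ← dist_eq_norm, dist_comm]
    convert hd using 3
    have : (l.length : ℝ) ≠ 0 := by positivity
    push_cast
    field_simp
end Averages

namespace LocalSystem
variable {T : Type*} [CStarAlgebra T] (L : LocalSystem T)

theorem exists_average {ι : Type*} [Fintype ι] {J : Finset ℤ} {x : ι → T}
    (hx : ∀ i, x i ∈ L.loc (J : Set ℤ)) {φ : T →L[ℂ] ℂ} (hφ : IsState φ) {ε : ℝ} (hε : 0 < ε)
    (K₀ : ℕ) : ∃ K : ℕ, K₀ ≤ K ∧ 0 < K ∧ ∃ ξ : Fin K → T,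
      (∀ k, ξ k ∈ L.loc (J : Set ℤ) ∧ sqNorm L.Ω (ξ k) = 1) ∧
      ∀ i, ‖((K : ℝ)⁻¹ : ℝ) • ∑ k, L.Ω (star (ξ k) * (x i * ξ k)) - φ (x i)‖ < ε := by
  classical
  set V : Set (ι → ℂ) := {f | ∃ ξ ∈ L.loc (J : Set ℤ), sqNorm L.Ω ξ = 1 ∧
    f = fun i => L.Ω (star ξ * (x i * ξ))} with hV
  have hmem : (fun i => φ (x i)) ∈ closure (uniformMeans V) := by
    by_contra hn
    obtain ⟨f, u, hf, hu⟩ := RCLike.geometric_hahn_banach_closed_point (𝕜 := ℂ)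
      (convex_closure_uniformMeans V) isClosed_closure hn
    have hexp : ∀ g : ι → ℂ, f g = ∑ i, g i * f (Pi.single i 1) := by
      intro g
      conv_lhs => rw [← Finset.univ_sum_single g, map_sum]
      refine Finset.sum_congr rfl fun i _ => ?_
      rw [← smul_eq_mul, ← map_smul, ← Pi.single_smul', smul_eq_mul, mul_one]
    set t : T := (u : ℂ) • 1 - ∑ i, f (Pi.single i 1) • x i with ht
    have htm : t ∈ L.loc (J : Set ℤ) :=
      sub_mem ((L.loc _).smul_mem (one_mem _) _) (sum_mem fun i _ => (L.loc _).smul_mem (hx i) _)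
    have hval : ∀ (ρ : T →L[ℂ] ℂ) y, ρ (star y * (t * y)) =
        u * ρ (star y * y) - f fun i => ρ (star y * (x i * y)) := by
      intro ρ y
      rw [hexp, ht]
      simp only [sub_mul, mul_sub, Finset.sum_mul, Finset.mul_sum, smul_mul_assoc, mul_smul_comm,
        one_mul, map_sub, map_sum, map_smul, smul_eq_mul]
      congr 1
      exact Finset.sum_congr rfl fun i _ => mul_comm _ _
    have hpos : ∀ y ∈ L.loc (J : Set ℤ), 0 ≤ (L.Ω (star y * (t * y))).re := by
      intro y hy
      have hn := L.isState.pos.sqNorm_nonneg y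
      rcases hn.eq_or_lt with h0 | h0
      · have := L.isState.pos.norm_le y (t * y)
        rw [← h0, Real.sqrt_zero, zero_mul] at this
        rw [norm_le_zero_iff.mp this]; simp
      · set r : ℝ := (√(sqNorm L.Ω y))⁻¹ with hr
        have hrr : r * r * sqNorm L.Ω y = 1 := by
          rw [hr, ← mul_inv, Real.mul_self_sqrt hn, inv_mul_cancel₀ h0.ne']
        have hsc : ∀ z, L.Ω (star ((r : ℂ) • y) * (z * ((r : ℂ) • y))) =
            ((r * r : ℝ) : ℂ) * L.Ω (star y * (z * y)) := by
          intro z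
          simp [star_smul, smul_smul, mul_assoc]
        have h1 : sqNorm L.Ω ((r : ℂ) • y) = 1 := by
          have := hsc 1
          rw [one_mul, one_mul, ← L.isState.pos.coe_sqNorm y] at this
          rw [sqNorm, this, ← Complex.ofReal_mul, Complex.ofReal_re, hrr]
        have h2 := hf _ (subset_closure (subset_uniformMeans V
          ⟨(r : ℂ) • y, (L.loc _).smul_mem hy _, h1, rfl⟩))
        have h3 := hval L.Ω ((r : ℂ) • y)
        rw [hsc t, ← L.isState.pos.coe_sqNorm, h1] at h3
        have h4 := congrArg Complex.re h3
        rw [Complex.re_ofReal_mul, Complex.sub_re, Complex.ofReal_one, mul_one,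
          Complex.ofReal_re] at h4
        have h5 : 0 < r * r := by
          by_contra hc
          have : r * r = 0 := le_antisymm (not_lt.mp hc) (mul_self_nonneg r)
          rw [this, zero_mul] at hrr; exact one_ne_zero hrr.symm
        have h6 : 0 < r * r * (L.Ω (star y * (t * y))).re := by
          rw [h4]; exact sub_pos.mpr h2
        exact (pos_of_mul_pos_right h6 h5.le).le
    have h1 := L.detects htm hpos φ hφ
    have h2 := hval φ 1
    simp only [star_one, one_mul, mul_one, hφ.map_one] at h2
    rw [h2, Complex.sub_re, Complex.ofReal_re] at h1
    exact absurd hu (not_lt.mpr (sub_nonneg.mp h1))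
  obtain ⟨K, hK, hK0, f, hf, hd⟩ := exists_mean_near hmem hε K₀
  choose ξ hξ h1 h2 using hf
  refine ⟨K, hK, hK0, ξ, fun k => ⟨hξ k, h1 k⟩, fun i => ?_⟩
  have := (norm_le_pi_norm _ i).trans_lt hd
  simp only [h2] at this
  simpa using this
end LocalSystem

section Pure
variable {T : Type*} [CStarAlgebra T]

/-- A family of orthogonal projections that approximately diagonalizes `a` to a scalar. -/
structure Diagonalizes {ι : Type*} [Fintype ι] (P : ι → T) (ψ : T →L[ℂ] ℂ) (a : T) (ε : ℝ) :
    Prop where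
  star_eq : ∀ s, star (P s) = P s
  mul_self : ∀ s, P s * P s = P s
  mul_ne : ∀ s s', s ≠ s' → P s * P s' = 0
  total : ψ (∑ s, P s) = 1
  off_diag : ∀ s s', s ≠ s' → P s * (a * P s') = 0
  diag : ∀ s, ∃ c : ℂ, P s * (a * P s) = c • P s ∧ ‖c - ψ a‖ ≤ ε

theorem Diagonalizes.norm_sub_le {ι : Type*} [Fintype ι] {P : ι → T} {ψ ρ : T →L[ℂ] ℂ} {a : T}
    {ε : ℝ} (h : Diagonalizes P ψ a ε) (hρ : IsState ρ) (hρP : ρ (∑ s, P s) = 1) :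
    ‖ρ a - ψ a‖ ≤ ε := by
  classical
  set Q := ∑ s, P s with hQ
  have hQs : star Q = Q := by rw [hQ, star_sum]; exact Finset.sum_congr rfl fun s _ => h.star_eq s
  have hdiag : ∀ b : T, (∀ s s', s ≠ s' → P s * (b * P s') = 0) →
      Q * (b * Q) = ∑ s, P s * (b * P s) := by
    intro b hb
    rw [hQ, Finset.sum_mul]
    refine Finset.sum_congr rfl fun s _ => ?_
    rw [Finset.mul_sum, Finset.mul_sum]
    exact Finset.sum_eq_single s (fun s' _ hs => hb s s' hs.symm) (by simp)
  have hQQ : Q * Q = Q := by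
    have := hdiag 1 fun s s' hs => by rw [one_mul, h.mul_ne s s' hs]
    simpa only [one_mul, h.mul_self] using this
  choose c hc hcε using h.diag
  have e1 : ρ a = ∑ s, c s * ρ (P s) := by
    have h1 := (hρ.compress hQs hQQ hρP (a * Q)).2
    rw [(hρ.compress hQs hQQ hρP a).1, hdiag a h.off_diag] at h1
    rw [← h1, map_sum]
    exact Finset.sum_congr rfl fun s _ => by rw [hc, map_smul, smul_eq_mul]
  have e2 : ∑ s, ρ (P s) = 1 := by rw [← map_sum]; exact hρP
  have e3 : ∀ s, ρ (P s) = (sqNorm ρ (P s) : ℂ) := by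
    intro s
    rw [hρ.pos.coe_sqNorm, h.star_eq, h.mul_self]
  have e4 : ∑ s, sqNorm ρ (P s) = 1 := by
    simp only [e3] at e2
    exact_mod_cast e2
  have e5 : ρ a - ψ a = ∑ s, (c s - ψ a) * ρ (P s) := by
    simp only [sub_mul, Finset.sum_sub_distrib, ← Finset.mul_sum, e2, mul_one, e1]
  rw [e5]
  calc _ ≤ ∑ s, ‖(c s - ψ a) * ρ (P s)‖ := norm_sum_le _ _
    _ ≤ ∑ s, ε * sqNorm ρ (P s) := by
        refine Finset.sum_le_sum fun s _ => ?_
        rw [norm_mul, e3, Complex.norm_real, Real.norm_of_nonneg (hρ.pos.sqNorm_nonneg _)]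
        exact mul_le_mul_of_nonneg_right (hcε s) (hρ.pos.sqNorm_nonneg _)
    _ = ε := by rw [← Finset.mul_sum, e4, mul_one]

theorem isPureState_of_diagonalizes {ι : Type*} [Fintype ι] {ψ : T →L[ℂ] ℂ} (hψ : IsState ψ)
    {W : Set T} (hW : Dense W) (h : ∀ a ∈ W, ∀ ε > 0, ∃ P : ι → T, Diagonalizes P ψ a ε) :
    IsPureState ψ := by
  refine ⟨hψ, fun ψ₁ ψ₂ t h₁ h₂ ht0 ht1 hψt => ?_⟩
  have hP : ∀ a ε (P : ι → T), Diagonalizes P ψ a ε → ψ₁ (∑ s, P s) = 1 ∧ ψ₂ (∑ s, P s) = 1 := by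
    intro a ε P hP
    have hre : ∀ ρ : T →L[ℂ] ℂ, IsState ρ → ∃ r : ℝ, ρ (∑ s, P s) = r ∧ r ≤ 1 := by
      classical
      intro ρ hρ
      set Q := ∑ s, P s with hQ
      have hQs : star Q = Q := by
        rw [hQ, star_sum]; exact Finset.sum_congr rfl fun s _ => hP.star_eq s
      have hQQ : Q * Q = Q := by
        rw [hQ, Finset.sum_mul]
        refine Finset.sum_congr rfl fun s _ => ?_
        rw [Finset.mul_sum, Finset.sum_eq_single s (fun s' _ hs => hP.mul_ne s s' hs.symm)
          (by simp), hP.mul_self]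
      refine ⟨sqNorm ρ Q, by rw [hρ.pos.coe_sqNorm, hQs, hQQ], ?_⟩
      have := hρ.pos.sqNorm_nonneg (1 - Q)
      have e : star (1 - Q) * (1 - Q) = 1 - Q := by
        rw [star_sub, star_one, hQs, mul_sub, sub_mul, sub_mul, hQQ]; simp
      rw [sqNorm, e, map_sub, hρ.map_one, Complex.sub_re, Complex.one_re] at this
      rw [sqNorm, hQs, hQQ]; linarith
    obtain ⟨r, hr, hr1⟩ := hre ψ₁ h₁
    obtain ⟨s, hs, hs1⟩ := hre ψ₂ h₂
    have e := hP.total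
    rw [hψt] at e
    simp only [ContinuousLinearMap.add_apply, ContinuousLinearMap.smul_apply, hr, hs,
      Complex.real_smul] at e
    have e' : t * r + (1 - t) * s = 1 := by exact_mod_cast e
    have hr2 : r = 1 := by nlinarith
    have hs2 : s = 1 := by nlinarith
    rw [hr, hs, hr2, hs2]; simp
  have heq : ∀ ρ : T →L[ℂ] ℂ, IsState ρ →
      (∀ a ε (P : ι → T), Diagonalizes P ψ a ε → ρ (∑ s, P s) = 1) → ρ = ψ := by
    intro ρ hρ hρP
    refine DFunLike.coe_injective (Continuous.ext_on hW ρ.continuous ψ.continuous fun a ha => ?_)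
    rw [← sub_eq_zero, ← norm_le_zero_iff]
    refine le_of_forall_pos_le_add fun ε hε => ?_
    obtain ⟨P, hPa⟩ := h a ha ε hε
    rw [zero_add]
    exact hPa.norm_sub_le hρ (hρP a ε P hPa)
  exact ⟨heq ψ₁ h₁ fun a ε P h => (hP a ε P h).1, heq ψ₂ h₂ fun a ε P h => (hP a ε P h).2⟩
end Pure

section Renewal
open Filter Topology

/-- The renewal sequence whose inter-arrival times are `R` and `R + 1` with equal probability. -/
structure IsRenewal (R : ℕ) (w : ℤ → ℝ) : Prop where
  neg : ∀ k < 0, w k = 0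
  zero : w 0 = 1
  step : ∀ k, 0 < k → w k = (w (k - R) + w (k - R - 1)) / 2

variable {R : ℕ} {w : ℤ → ℝ}

theorem IsRenewal.nonneg (h : IsRenewal R w) (hR : 0 < R) (k : ℤ) : 0 ≤ w k := by
  have : ∀ N : ℕ, ∀ k : ℤ, k < N → 0 ≤ w k := by
    intro N
    induction N with
    | zero => intro k hk; rw [h.neg k (by simpa using hk)]
    | succ N ih =>
      intro k hk
      rcases lt_trichotomy k 0 with h0 | rfl | h0
      · rw [h.neg k h0]
      · rw [h.zero]; norm_num
      · rw [h.step k h0]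
        have := ih (k - R) (by push_cast at hk; omega)
        have := ih (k - R - 1) (by push_cast at hk; omega)
        linarith
  exact this (k.toNat + 1) k (by push_cast; omega)

theorem IsRenewal.sum_eq_one (h : IsRenewal R w) (hR : 0 < R) (k : ℕ) :
    ∑ j ∈ Finset.range R, w (k - j) + w (k - R) / 2 = 1 := by
  obtain ⟨r, rfl⟩ : ∃ r, R = r + 1 := ⟨R - 1, by omega⟩
  induction k with
  | zero =>
    rw [Finset.sum_range_succ']
    rw [Finset.sum_eq_zero fun j _ => h.neg _ (by push_cast; omega),
      h.neg (((0 : ℕ) : ℤ) - ((r + 1 : ℕ) : ℤ)) (by push_cast; omega)]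
    simp [h.zero]
  | succ k ih =>
    rw [Finset.sum_range_succ] at ih
    rw [Finset.sum_range_succ', h.step _ (by push_cast; omega)]
    push_cast at ih ⊢
    have e : ∀ j : ℕ, ((k : ℤ) + 1 - (j + 1)) = k - j := fun j => by ring
    simp only [e]
    have e1 : (k : ℤ) + 1 - 0 - (r + 1) = k - r := by ring
    have e2 : (k : ℤ) - r - 1 = k - (r + 1) := by ring
    rw [e1, e2]
    linarith

theorem IsRenewal.le_one (h : IsRenewal R w) (hR : 0 < R) (k : ℤ) : w k ≤ 1 := by
  rcases lt_or_ge k 0 with h0 | h0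
  · rw [h.neg k h0]; norm_num
  · lift k to ℕ using h0
    have h1 := h.sum_eq_one hR k
    have h2 := Finset.single_le_sum (f := fun j : ℕ => w (k - j)) (s := Finset.range R)
      (fun j _ => h.nonneg hR _) (Finset.mem_range.mpr hR)
    simp only [Nat.cast_zero, sub_zero] at h2
    linarith [h.nonneg hR (k - R)]

theorem IsRenewal.tendsto_diff (h : IsRenewal R w) (hR : 0 < R) :
    Tendsto (fun k : ℤ => w (k + 1) - w k) atTop (𝓝 0) := by
  obtain ⟨r, rfl⟩ : ∃ r, R = r + 1 := ⟨R - 1, by omega⟩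
  set F : ℕ → ℝ := fun k => ∑ j ∈ Finset.range (r + 1), w (k - j) ^ 2 + w (k - (r + 1 : ℕ)) ^ 2 / 2
    with hF
  have hdiff : ∀ k : ℕ, F (k + 1) = F k - (w (k - r) - w (k - r - 1)) ^ 2 / 4 := by
    intro k
    have e : ∀ j : ℕ, ((k : ℤ) + 1 - (j + 1)) = k - j := fun j => by ring
    have e1 : (k : ℤ) + 1 - 0 - (r + 1) = k - r := by ring
    have e2 : (k : ℤ) - (r + 1) = k - r - 1 := by ring
    simp only [hF]
    rw [Finset.sum_range_succ', Finset.sum_range_succ, h.step _ (by push_cast; omega)]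
    push_cast
    simp only [e, e1, e2]
    ring
  have hanti : Antitone F := antitone_nat_of_succ_le fun k => by
    rw [hdiff]; linarith [sq_nonneg (w (k - r) - w (k - r - 1))]
  have hbdd : BddBelow (Set.range F) := ⟨0, by
    rintro _ ⟨k, rfl⟩
    exact add_nonneg (Finset.sum_nonneg fun _ _ => sq_nonneg _) (by positivity)⟩
  have hlim := tendsto_atTop_ciInf hanti hbdd
  have h1 : Tendsto (fun k : ℕ => (w (k - r) - w (k - r - 1)) ^ 2) atTop (𝓝 0) := by
    have h2 := (hlim.sub (hlim.comp (tendsto_add_atTop_nat 1))).const_mul 4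
    rw [sub_self, mul_zero] at h2
    refine h2.congr fun k => ?_
    simp only [Function.comp, hdiff]; ring
  have h2 : Tendsto (fun k : ℕ => w (k - r) - w (k - r - 1)) atTop (𝓝 0) := by
    have := h1.sqrt
    rw [Real.sqrt_zero] at this
    refine squeeze_zero_norm (fun k => ?_) this
    rw [Real.sqrt_sq_eq_abs, Real.norm_eq_abs]
  have h3 : Tendsto (fun k : ℤ => w (k - r) - w (k - r - 1)) atTop (𝓝 0) := by
    rw [← Nat.map_cast_int_atTop, tendsto_map'_iff]; exact h2
  refine (h3.comp (tendsto_atTop_add_const_right _ ((r : ℤ) + 1) tendsto_id)).congr fun k => ?_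
  simp only [Function.comp, id]
  congr 2 <;> ring_nf

theorem IsRenewal.tendsto (h : IsRenewal R w) (hR : 0 < R) :
    Tendsto w atTop (𝓝 (1 / (R + 1 / 2))) := by
  have h0 := h.tendsto_diff hR
  have h1 : ∀ j : ℕ, Tendsto (fun k : ℤ => w k - w (k - j)) atTop (𝓝 0) := by
    intro j
    induction j with
    | zero => simp
    | succ j ih =>
      have h2 := h0.comp (tendsto_atTop_add_const_right atTop (-(j : ℤ) - 1) tendsto_id)
      have := ih.add h2
      rw [add_zero] at this
      refine this.congr fun k => ?_
      simp only [Function.comp, id]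
      have e1 : k + (-(j : ℤ) - 1) + 1 = k - j := by ring
      have e2 : k + (-(j : ℤ) - 1) = k - (j + 1 : ℕ) := by push_cast; ring
      rw [e1, e2]; ring
  have h2 : Tendsto (fun k : ℤ => 1 + (∑ j ∈ Finset.range R, (w k - w (k - j)) +
      (w k - w (k - R)) / 2)) atTop (𝓝 (1 + (∑ j ∈ Finset.range R, 0 + 0 / 2))) :=
    ((tendsto_finsetSum _ fun j _ => h1 j).add ((h1 R).div_const 2)).const_add 1
  simp only [Finset.sum_const_zero, zero_div, add_zero] at h2
  have h3 := h2.div_const ((R : ℝ) + 1 / 2)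
  refine h3.congr' ?_
  filter_upwards [eventually_ge_atTop 0] with k hk
  lift k to ℕ using hk
  have := h.sum_eq_one hR k
  rw [Finset.sum_sub_distrib, Finset.sum_const, Finset.card_range, nsmul_eq_mul]
  have : 0 < (R : ℝ) + 1 / 2 := by positivity
  field_simp
  linarith
end Renewal

namespace LocalSystem
variable {T : Type*} [CStarAlgebra T] (L : LocalSystem T)

theorem sqNorm_smul (φ : T →L[ℂ] ℂ) (c : ℂ) (x : T) :
    sqNorm φ (c • x) = ‖c‖ ^ 2 * sqNorm φ x := by
  rw [sqNorm, star_smul, smul_mul_smul_comm, map_smul, Complex.star_def, smul_eq_mul,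
    Complex.conj_mul', sqNorm, ← Complex.ofReal_pow, Complex.re_ofReal_mul]

theorem sqNorm_mul {S S' : Set ℤ} (h : Disjoint S S') {x y : T} (hx : x ∈ L.loc S)
    (hy : y ∈ L.loc S') : sqNorm L.Ω (x * y) = sqNorm L.Ω x * sqNorm L.Ω y := by
  have : star (x * y) * (x * y) = (star x * x) * (star y * y) := by
    have h1 := L.commute h.symm (star_mem hy) (mul_mem (star_mem hx) hx)
    calc star (x * y) * (x * y) = star y * (star x * x) * y := by rw [star_mul]; noncomm_ring
      _ = _ := by rw [h1]; noncomm_ring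
  have h2 : (sqNorm L.Ω (x * y) : ℂ) = sqNorm L.Ω x * sqNorm L.Ω y := by
    rw [L.isState.pos.coe_sqNorm, L.isState.pos.coe_sqNorm, L.isState.pos.coe_sqNorm, this,
      L.map_mul h (mul_mem (star_mem hx) hx) (mul_mem (star_mem hy) hy)]
  exact_mod_cast h2

theorem sqNorm_sh (c : ℤ) (x : T) : sqNorm L.Ω (L.sh c x) = sqNorm L.Ω x := by
  rw [sqNorm, ← map_star, ← _root_.map_mul, L.Ω_sh, sqNorm]

/-- The product `f 0 * f 1 * ⋯ * f (N - 1)`. -/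
def chain (f : ℕ → T) : ℕ → T
  | 0 => 1
  | N + 1 => chain f N * f N

variable {L} {f : ℕ → T} {S : ℕ → Set ℤ}

theorem chain_mem (hf : ∀ j, f j ∈ L.loc (S j)) (N : ℕ) : chain f N ∈ L.loc (⋃ j < N, S j) := by
  induction N with
  | zero => exact one_mem _
  | succ N ih =>
    refine mul_mem (L.mono ?_ ih) (L.mono ?_ (hf N))
    · exact Set.biUnion_mono (fun j hj => Nat.lt_succ_of_lt hj) fun _ _ => le_rfl
    · exact Set.subset_biUnion_of_mem (u := S) (Nat.lt_succ_self N)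

theorem chain_disjoint (hS : Pairwise (Function.onFun Disjoint S)) (N : ℕ) :
    Disjoint (⋃ j < N, S j) (S N) := by
  rw [Set.disjoint_iUnion₂_left]
  exact fun j hj => hS hj.ne

theorem chain_factor (hf : ∀ j, f j ∈ L.loc (S j)) (hS : Pairwise (Function.onFun Disjoint S))
    {N j : ℕ} (hj : j < N) : ∃ z ∈ L.loc (S j)ᶜ, chain f N = f j * z := by
  induction N with
  | zero => omega
  | succ N ih =>
    rcases Nat.lt_succ_iff_lt_or_eq.mp hj with h | rfl
    · obtain ⟨z, hz, he⟩ := ih h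
      refine ⟨z * f N, mul_mem hz (L.mono ?_ (hf N)), by rw [chain, he, mul_assoc]⟩
      exact (hS h.ne).symm.subset_compl_right
    · exact ⟨chain f j, L.mono (chain_disjoint hS j).subset_compl_right (chain_mem hf j),
        L.commute (chain_disjoint hS j) (chain_mem hf j) (hf j)⟩

theorem sqNorm_chain (hf : ∀ j, f j ∈ L.loc (S j)) (hS : Pairwise (Function.onFun Disjoint S))
    (h1 : ∀ j, sqNorm L.Ω (f j) = 1) (N : ℕ) : sqNorm L.Ω (chain f N) = 1 := by
  induction N with
  | zero => exact L.isState.sqNorm_one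
  | succ N ih => rw [chain, L.sqNorm_mul (chain_disjoint hS N) (chain_mem hf N) (hf N), ih, h1,
      one_mul]

/-- A translation covariant family of tiles of length `R`, each starting with `n + 1` marked sites,
such that a tile has no other run of `n + 1` nontrivial sites. The tiles are normalized to have
squared norm `1 / 2`. -/
structure Tile (mk : L.Marker) (n R : ℕ) where
  τ : ℤ → T
  lt : n < R
  mem : ∀ i, τ i ∈ L.loc (Set.Ico i (i + R))
  sqNorm_τ : ∀ i, sqNorm L.Ω (τ i) = 1 / 2
  sh_τ : ∀ c i, L.sh c (τ i) = τ (i + c)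
  marked : ∀ i u : ℤ, i ≤ u → u ≤ i + n → ∃ z ∈ L.loc {u}ᶜ, τ i = mk.v u * z
  sep : ∀ i i' : ℤ, i < i' → i' < i + R → ∃ u, i' ≤ u ∧ u ≤ i' + n ∧ u < i + R ∧ τ i ∈ L.loc {u}ᶜ

/-- Sites occupied by the `j`-th factor of the tile at the origin. -/
def tileSites (n j : ℕ) : Set ℤ :=
  if j ≤ n then {(j : ℤ)} else Set.Ico (((j - n) * (n + 1) + 1 : ℕ) : ℤ) ((j - n + 1) * (n + 1) : ℕ)

theorem tileSites_disjoint (n : ℕ) : Pairwise (Function.onFun Disjoint (tileSites n)) := by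
  have key : ∀ j j', j < j' → Disjoint (tileSites n j) (tileSites n j') := by
    intro j j' h
    rw [Set.disjoint_left]
    intro x hx hx'
    simp only [tileSites] at hx hx'
    split_ifs at hx hx' with h1 h2 h2
    · simp at hx hx'; omega
    · simp only [Set.mem_singleton_iff, Set.mem_Ico] at hx hx'
      have : n + 1 ≤ (j' - n) * (n + 1) := Nat.le_mul_of_pos_left _ (by omega)
      omega
    · omega
    · simp only [Set.mem_Ico] at hx hx'
      have : (j - n + 1) * (n + 1) ≤ (j' - n) * (n + 1) := Nat.mul_le_mul_right _ (by omega)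
      omega
  intro j j' hne
  rcases lt_or_gt_of_ne hne with h | h
  exacts [key j j' h, (key j' j h).symm]

theorem tileSites_subset (n : ℕ) {K j : ℕ} (hj : j < n + 1 + K) {x : ℤ} (hx : x ∈ tileSites n j) :
    0 ≤ x ∧ x < (K + 1) * (n + 1) := by
  simp only [tileSites] at hx
  split_ifs at hx with h1
  · simp at hx
    constructor
    · omega
    · nlinarith
  · simp only [Set.mem_Ico] at hx
    have : (j - n + 1) * (n + 1) ≤ (K + 1) * (n + 1) := Nat.mul_le_mul_right _ (by omega)
    zify at this
    constructor
    · omega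
    · exact hx.2.trans_le (by exact_mod_cast this)

theorem mul_notMem_tileSites (n j k : ℕ) (hk : 0 < k) :
    ((k * (n + 1) : ℕ) : ℤ) ∉ tileSites n j := by
  intro hx
  simp only [tileSites] at hx
  split_ifs at hx with h1
  · have : n + 1 ≤ k * (n + 1) := Nat.le_mul_of_pos_left _ hk
    simp only [Set.mem_singleton_iff] at hx
    omega
  · simp only [Set.mem_Ico] at hx
    have h2 : (j - n) * (n + 1) < k * (n + 1) := by omega
    have h3 : k * (n + 1) < (j - n + 1) * (n + 1) := by omega
    have h4 := Nat.lt_of_mul_lt_mul_right h2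
    have h5 := Nat.lt_of_mul_lt_mul_right h3
    omega

theorem exists_tile (mk : L.Marker) (n K : ℕ) {ξ : ℕ → T} (hξ : ∀ k, ξ k ∈ L.loc (Set.Ico 0 n))
    (hξ1 : ∀ k, sqNorm L.Ω (ξ k) = 1) :
    ∃ t : Tile mk n ((K + 1) * (n + 1) + 1), ∀ k < K, ∀ i : ℤ,
      ∃ z ∈ L.loc (Set.Ico (i + ((k + 1) * (n + 1) + 1)) (i + ((k + 1) * (n + 1) + 1) + n))ᶜ,
        t.τ i = L.sh (i + ((k + 1) * (n + 1) + 1)) (ξ k) * z := by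
  set f : ℕ → T := fun j => if j ≤ n then mk.v j else
    L.sh (((j - n) * (n + 1) + 1 : ℕ) : ℤ) (ξ (j - n - 1)) with hfdef
  have hf : ∀ j, f j ∈ L.loc (tileSites n j) := by
    intro j
    simp only [hfdef, tileSites]
    split_ifs with h
    · exact mk.v_mem j
    · refine L.sh_mem _ (fun x hx => ?_) (hξ _)
      simp only [Set.mem_Ico] at hx ⊢
      have : (j - n + 1) * (n + 1) = (j - n) * (n + 1) + (n + 1) := by ring
      omega
  have hS := tileSites_disjoint n
  have h1 : ∀ j, sqNorm L.Ω (f j) = 1 := by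
    intro j
    simp only [hfdef]
    split_ifs with h
    · rw [sqNorm, mk.Ω_vv]; rfl
    · rw [L.sqNorm_sh, hξ1]
  set N := n + 1 + K with hN
  obtain ⟨s, hs⟩ : ∃ s : ℂ, ‖s‖ ^ 2 = 1 / 2 := by
    refine ⟨(√(1 / 2) : ℝ), ?_⟩
    rw [Complex.norm_real, Real.norm_eq_abs, sq_abs, Real.sq_sqrt (by norm_num)]
  set t₀ := s • chain f N with ht₀
  have hmem : t₀ ∈ L.loc (⋃ j < N, tileSites n j) :=
    (L.loc _).smul_mem (chain_mem hf N) s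
  refine ⟨⟨fun i => L.sh i t₀, by nlinarith, fun i => ?_, fun i => ?_, fun c i => ?_,
    fun i u hu hu' => ?_, fun i i' hi hi' => ?_⟩, fun k hk i => ?_⟩
  · refine L.sh_mem i (fun x hx => ?_) hmem
    obtain ⟨j, hj, hx⟩ := Set.mem_iUnion₂.mp hx
    have := tileSites_subset n hj hx
    rw [Set.mem_Ico]; push_cast
    constructor <;> linarith
  · rw [L.sqNorm_sh, ht₀, sqNorm_smul, sqNorm_chain hf hS h1 N, hs, mul_one]
  · rw [add_comm, L.sh_add]
  · obtain ⟨j, rfl⟩ : ∃ j : ℕ, u = i + j := ⟨(u - i).toNat, by omega⟩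
    have hj : j ≤ n := by omega
    obtain ⟨z, hz, he⟩ := chain_factor hf hS (show j < N by omega)
    refine ⟨s • L.sh i z, (L.loc _).smul_mem (L.sh_mem i (fun x hx => ?_) hz) s, ?_⟩
    · simp only [tileSites, hj, if_true, Set.mem_compl_iff, Set.mem_singleton_iff] at hx ⊢
      omega
    · change L.sh i (s • chain f N) = _
      rw [he, map_smul, _root_.map_mul, mul_smul_comm]
      simp only [hfdef, hj, if_true]
      rw [mk.sh_v, add_comm]
  · obtain ⟨d, rfl⟩ : ∃ d : ℕ, i' = i + d := ⟨(i' - i).toNat, by omega⟩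
    have hd0 : 0 < d := by omega
    set k := (d - 1) / (n + 1) + 1 with hk
    have e1 := Nat.div_add_mod (d - 1) (n + 1)
    have e2 := Nat.mod_lt (d - 1) (show 0 < n + 1 by omega)
    have e3 : k * (n + 1) = (n + 1) * ((d - 1) / (n + 1)) + (n + 1) := by rw [hk]; ring
    have e4 : d ≤ (K + 1) * (n + 1) := by
      have : (d : ℤ) < (((K + 1) * (n + 1) + 1 : ℕ) : ℤ) := by linarith
      omega
    have e5 : k ≤ K + 1 := by
      by_contra hc
      have : (K + 2) * (n + 1) ≤ k * (n + 1) := Nat.mul_le_mul_right _ (by omega)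
      have : (K + 2) * (n + 1) = (K + 1) * (n + 1) + (n + 1) := by ring
      omega
    have e6 : k * (n + 1) ≤ (K + 1) * (n + 1) := Nat.mul_le_mul_right _ e5
    refine ⟨i + (k * (n + 1) : ℕ), ?_, ?_, ?_, L.sh_mem i (fun x hx => ?_) hmem⟩
    · omega
    · omega
    · omega
    · obtain ⟨j, hj, hx⟩ := Set.mem_iUnion₂.mp hx
      rw [Set.mem_compl_singleton_iff]
      intro hxu
      refine mul_notMem_tileSites n j k (Nat.succ_pos _) ?_
      rwa [show ((k * (n + 1) : ℕ) : ℤ) = x by omega]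
  · obtain ⟨z, hz, he⟩ := chain_factor hf hS (show n + 1 + k < N by omega)
    have e0 : ¬ (n + 1 + k ≤ n) := by omega
    have e1 : n + 1 + k - n = k + 1 := by omega
    have e2 : n + 1 + k - n - 1 = k := by omega
    refine ⟨s • L.sh i z, (L.loc _).smul_mem (L.sh_mem i (fun x hx => ?_) hz) s, ?_⟩
    · rw [Set.mem_compl_iff] at hx ⊢
      refine fun hxu => hx ?_
      simp only [tileSites, e0, if_false, e1, Set.mem_Ico] at hxu ⊢
      push_cast
      have e3 : ((k : ℤ) + 1 + 1) * (n + 1) = (k + 1) * (n + 1) + (n + 1) := by ring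
      rw [e3]
      constructor <;> linarith
    · change L.sh i (s • chain f N) = _
      rw [he, map_smul, _root_.map_mul, mul_smul_comm]
      simp only [hfdef, e0, if_false, e1]
      rw [L.sh_add i]
      push_cast
      rfl
end LocalSystem

namespace LocalSystem.Tile
variable {T : Type*} [CStarAlgebra T] {L : LocalSystem T} {mk : L.Marker} {n R : ℕ}
  (t : Tile mk n R)

/-- The sum over all tilings of `[a, b)` by tiles of lengths `R` and `R + 1`, the last site of the
long tiles being empty. -/
noncomputable def V (a b : ℤ) : T :=
  have := t.lt
  if a < b then t.τ a * (V (a + R) b + V (a + R + 1) b) else if a = b then 1 else 0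
termination_by (b - a).toNat
decreasing_by all_goals omega

theorem V_of_gt {a b : ℤ} (h : b < a) : t.V a b = 0 := by
  rw [V, if_neg (by omega), if_neg (by omega)]

theorem V_self (a : ℤ) : t.V a a = 1 := by
  rw [V, if_neg (by omega), if_pos rfl]

theorem V_eq (a b : ℤ) :
    t.V a b = (if a = b then 1 else 0) + t.τ a * (t.V (a + R) b + t.V (a + R + 1) b) := by
  have := t.lt
  rcases lt_trichotomy a b with h | rfl | h
  · rw [V, if_pos h, if_neg h.ne, zero_add]
  · rw [V_self, if_pos rfl, V_of_gt _ (by omega), V_of_gt _ (by omega), add_zero, mul_zero,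
      add_zero]
  · rw [V_of_gt _ h, if_neg h.ne', V_of_gt _ (by omega), V_of_gt _ (by omega), add_zero, mul_zero,
      add_zero]

theorem V_of_lt {a b : ℤ} (h : a < b) :
    t.V a b = t.τ a * (t.V (a + R) b + t.V (a + R + 1) b) := by
  rw [V_eq, if_neg h.ne, zero_add]

/-- Induction on the length of an interval, in steps of the tile lengths. -/
theorem induction_length (t : Tile mk n R) {P : ℤ → Prop} (b : ℤ) (h : ∀ a, b < a → P a)
    (hs : ∀ a ≤ b, P (a + R) → P (a + R + 1) → P a) (a : ℤ) : P a := by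
  have := t.lt
  have key : ∀ N : ℕ, ∀ a, b - a < N → P a := by
    intro N
    induction N with
    | zero => intro a ha; exact h a (by simpa using ha)
    | succ N ih =>
      intro a ha
      rcases lt_or_ge b a with h' | h'
      · exact h a h'
      · exact hs a h' (ih _ (by omega)) (ih _ (by omega))
  exact key ((b - a).toNat + 1) a (by omega)

theorem V_eq_right (a b : ℤ) : t.V a b = (if a = b then 1 else 0) +
    (t.V a (b - R) * t.τ (b - R) + t.V a (b - R - 1) * t.τ (b - R - 1)) := by
  have := t.lt
  refine t.induction_length (P := fun a => t.V a b = (if a = b then 1 else 0) +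
    (t.V a (b - R) * t.τ (b - R) + t.V a (b - R - 1) * t.τ (b - R - 1))) b ?_ ?_ a
  · intro a ha
    rw [V_of_gt _ ha, if_neg ha.ne', V_of_gt _ (by omega), V_of_gt _ (by omega)]
    simp
  · intro a _ h1 h2
    have e1 : t.τ a * (if a + R = b then 1 else 0) = (if a = b - R then 1 else 0) * t.τ (b - R) := by
      by_cases h : a + R = b
      · rw [if_pos h, if_pos (by omega), one_mul, mul_one, ← h, add_sub_cancel_right]
      · rw [if_neg h, if_neg (by omega), zero_mul, mul_zero]
    have e2 : t.τ a * (if a + R + 1 = b then 1 else 0) =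
        (if a = b - R - 1 then 1 else 0) * t.τ (b - R - 1) := by
      by_cases h : a + R + 1 = b
      · rw [if_pos h, if_pos (by omega), one_mul, mul_one, ← h]
        congr 1; ring
      · rw [if_neg h, if_neg (by omega), zero_mul, mul_zero]
    rw [V_eq t a b, h1, h2, V_eq t a (b - R), V_eq t a (b - R - 1), add_mul, add_mul, ← e1, ← e2]
    noncomm_ring

theorem V_mem (a b : ℤ) : t.V a b ∈ L.loc (Set.Ico a b) := by
  have := t.lt
  refine t.induction_length (P := fun a => t.V a b ∈ L.loc (Set.Ico a b)) b ?_ ?_ a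
  · intro a ha
    rw [V_of_gt _ ha]
    exact zero_mem _
  · intro a ha h1 h2
    rcases ha.eq_or_lt with rfl | h
    · rw [V_self]; exact one_mem _
    · rw [V_of_lt t h]
      rcases lt_or_ge b (a + R) with h3 | h3
      · rw [V_of_gt _ h3, V_of_gt _ (by omega), add_zero, mul_zero]; exact zero_mem _
      · refine mul_mem (L.mono ?_ (t.mem a)) (add_mem (L.mono ?_ h1) (L.mono ?_ h2))
        · exact Set.Ico_subset_Ico_right h3
        · exact Set.Ico_subset_Ico_left (by omega)
        · exact Set.Ico_subset_Ico_left (by omega)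

theorem sh_V (c a b : ℤ) : L.sh c (t.V a b) = t.V (a + c) (b + c) := by
  have := t.lt
  refine t.induction_length (P := fun a => L.sh c (t.V a b) = t.V (a + c) (b + c)) b ?_ ?_ a
  · intro a ha
    rw [V_of_gt _ ha, map_zero, V_of_gt _ (by omega)]
  · intro a ha h1 h2
    rcases ha.eq_or_lt with rfl | h
    · rw [V_self, V_self, map_one]
    · rw [V_of_lt t h, V_of_lt t (by omega : a + c < b + c), _root_.map_mul, map_add, h1, h2, t.sh_τ]
      congr 3 <;> ring

/-- The squared norm of the sum over tilings of an interval of length `k`. -/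
noncomputable def w (k : ℤ) : ℝ := sqNorm L.Ω (t.V 0 k)

theorem sqNorm_V (a b : ℤ) : sqNorm L.Ω (t.V a b) = t.w (b - a) := by
  rw [w, ← L.sqNorm_sh a (t.V 0 _), sh_V t a 0, zero_add, sub_add_cancel]

end LocalSystem.Tile

namespace LocalSystem
variable {T : Type*} [CStarAlgebra T] {L : LocalSystem T}

/-- An element is marked at a site if it is the marker at this site times an element supported
elsewhere. -/
def Marker.IsMarked (mk : L.Marker) (u : ℤ) (x : T) : Prop := ∃ z ∈ L.loc {u}ᶜ, x = mk.v u * z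

variable {mk : L.Marker} {u : ℤ} {x y : T}

theorem Marker.IsMarked.mul_right (hx : mk.IsMarked u x) (hy : y ∈ L.loc {u}ᶜ) :
    mk.IsMarked u (x * y) := by
  obtain ⟨z, hz, rfl⟩ := hx
  exact ⟨z * y, mul_mem hz hy, mul_assoc _ _ _⟩

theorem Marker.IsMarked.mul_left (hx : mk.IsMarked u x) (hy : y ∈ L.loc {u}ᶜ) :
    mk.IsMarked u (y * x) := by
  obtain ⟨z, hz, rfl⟩ := hx
  refine ⟨y * z, mul_mem hy hz, ?_⟩
  rw [← mul_assoc, ← mul_assoc, L.commute disjoint_compl_left hy (mk.v_mem u)]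

/-- Two elements are separated at a site if one of them is marked there and the other one is
supported elsewhere. -/
def Marker.Sep (mk : L.Marker) (u : ℤ) (x y : T) : Prop :=
  (x ∈ L.loc {u}ᶜ ∧ mk.IsMarked u y) ∨ (mk.IsMarked u x ∧ y ∈ L.loc {u}ᶜ)

theorem Marker.Sep.symm (h : mk.Sep u x y) : mk.Sep u y x := by
  rcases h with h | h
  exacts [Or.inr h.symm, Or.inl h.symm]

theorem Marker.Sep.mul_left (h : mk.Sep u x y) {x' y' : T} (hx : x' ∈ L.loc {u}ᶜ)
    (hy : y' ∈ L.loc {u}ᶜ) : mk.Sep u (x' * x) (y' * y) := by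
  rcases h with ⟨h1, h2⟩ | ⟨h1, h2⟩
  exacts [Or.inl ⟨mul_mem hx h1, h2.mul_left hy⟩, Or.inr ⟨h1.mul_left hx, mul_mem hy h2⟩]

theorem Marker.Sep.mul_right (h : mk.Sep u x y) {x' y' : T} (hx : x' ∈ L.loc {u}ᶜ)
    (hy : y' ∈ L.loc {u}ᶜ) : mk.Sep u (x * x') (y * y') := by
  rcases h with ⟨h1, h2⟩ | ⟨h1, h2⟩
  exacts [Or.inl ⟨mul_mem h1 hx, h2.mul_right hy⟩, Or.inr ⟨h1.mul_right hx, mul_mem h2 hy⟩]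

/-- The structure of matrix elements between separated elements. -/
theorem Marker.Sep.eq_mul (h : mk.Sep u x y) {a : T} (ha : a ∈ L.loc {u}ᶜ) :
    (∃ z ∈ L.loc {u}ᶜ, star x * (a * y) = mk.v u * z) ∨
      ∃ z ∈ L.loc {u}ᶜ, star x * (a * y) = star (mk.v u) * z := by
  rcases h with ⟨h1, h2⟩ | ⟨h1, h2⟩
  · obtain ⟨z, hz, e⟩ := (h2.mul_left ha).mul_left (star_mem h1)
    exact Or.inl ⟨z, hz, e⟩
  · obtain ⟨z, hz, rfl⟩ := h1
    refine Or.inr ⟨star z * (a * y), mul_mem (star_mem hz) (mul_mem ha h2), ?_⟩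
    rw [star_mul, L.commute disjoint_compl_left (star_mem hz) (star_mem (mk.v_mem u)), mul_assoc]

theorem Marker.Sep.Ω_eq_zero (h : mk.Sep u x y) {a : T} (ha : a ∈ L.loc {u}ᶜ) :
    L.Ω (star x * (a * y)) = 0 := by
  rcases h.eq_mul ha with ⟨z, hz, e⟩ | ⟨z, hz, e⟩
  · rw [e, L.map_mul disjoint_compl_right (mk.v_mem u) hz, mk.Ω_v, zero_mul]
  · rw [e, L.map_mul disjoint_compl_right (star_mem (mk.v_mem u)) hz, L.isState.pos.map_star,
      mk.Ω_v, star_zero, zero_mul]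

theorem Marker.Sep.compress_eq_zero (h : mk.Sep u x y) {a : T} (ha : a ∈ L.loc {u}ᶜ) {m : ℕ}
    (hm : L.Q {u} m * mk.v u * L.Q {u} m = 0) {J J' : Finset ℤ} (hJ : u ∈ J) (hJ' : u ∈ J') :
    L.Q J m * (star x * (a * y)) * L.Q J' m = 0 := by
  set q := L.Q {u} m with hq
  have hqm : q ∈ L.loc {u} := by simpa using L.Q_mem {u} m
  have e1 : L.Q J m = L.Q J m * q := by
    have := congrArg star (L.Q_mul (Finset.singleton_subset_iff.mpr hJ) m)
    rw [star_mul, L.Q_star, L.Q_star] at this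
    exact this.symm
  have e2 : L.Q J' m = q * L.Q J' m := (L.Q_mul (Finset.singleton_subset_iff.mpr hJ') m).symm
  have hm' : q * star (mk.v u) * q = 0 := by
    have hq' : star q = q := L.Q_star {u} m
    rw [← star_zero, ← hm, star_mul, star_mul, hq', mul_assoc]
  have key : q * (star x * (a * y)) * q = 0 := by
    rcases h.eq_mul ha with ⟨z, hz, e⟩ | ⟨z, hz, e⟩
    · rw [e, mul_assoc, mul_assoc, L.commute disjoint_compl_left hz hqm, ← mul_assoc, ← mul_assoc,
        hm, zero_mul]
    · rw [e, mul_assoc, mul_assoc, L.commute disjoint_compl_left hz hqm, ← mul_assoc, ← mul_assoc,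
        hm', zero_mul]
  rw [e1, e2]
  calc _ = L.Q J m * (q * (star x * (a * y)) * q) * L.Q J' m := by simp only [mul_assoc]
    _ = 0 := by rw [key, mul_zero, zero_mul]

end LocalSystem

namespace LocalSystem
variable {T : Type*} [CStarAlgebra T] {L : LocalSystem T} {mk : L.Marker} {n R : ℕ}

theorem mem_loc_compl {x : T} {a b u : ℤ} (hx : x ∈ L.loc (Set.Ico a b)) (hu : u < a ∨ b ≤ u) :
    x ∈ L.loc {u}ᶜ := by
  refine L.mono (fun i hi => ?_) hx
  rw [Set.mem_Ico] at hi
  rw [Set.mem_compl_singleton_iff]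
  omega

theorem mem_Ico_of_subset {x : T} {a b a' b' : ℤ} (hx : x ∈ L.loc (Set.Ico a b)) (ha : a' ≤ a)
    (hb : b ≤ b') : x ∈ L.loc (Set.Ico a' b') :=
  L.mono (Set.Ico_subset_Ico ha hb) hx

theorem disjoint_Ico {a b c d : ℤ} (h : b ≤ c) : Disjoint (Set.Ico a b) (Set.Ico c d) :=
  Set.disjoint_left.mpr fun i hi hi' => by
    rw [Set.mem_Ico] at hi hi'
    omega

theorem apply_sum_sum {ι : Type*} [Fintype ι] (φ : T →L[ℂ] ℂ) (a : T) (X : ι → T)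
    (h : ∀ s s', s ≠ s' → φ (star (X s) * (a * X s')) = 0) :
    φ (star (∑ s, X s) * (a * ∑ s, X s)) = ∑ s, φ (star (X s) * (a * X s)) := by
  classical
  rw [star_sum, Finset.mul_sum, Finset.sum_mul_sum, map_sum]
  refine Finset.sum_congr rfl fun s _ => ?_
  rw [map_sum]
  exact Finset.sum_eq_single s (fun s' _ hs => h s s' hs.symm) fun hs =>
    absurd (Finset.mem_univ s) hs

theorem sqNorm_add {φ : T →L[ℂ] ℂ} (hφ : IsPos φ) {x y : T} (h : φ (star x * y) = 0) :
    sqNorm φ (x + y) = sqNorm φ x + sqNorm φ y := by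
  have h' : φ (star y * x) = 0 := by
    rw [← star_star (star y * x), hφ.map_star, star_mul, star_star, h, star_zero]
  simp only [sqNorm]
  rw [star_add, add_mul, mul_add, mul_add, map_add, map_add, map_add, h, h', add_zero, zero_add,
    Complex.add_re]

/-- Expectations factorize over adjacent intervals. -/
theorem Ω_sandwich {p q r s : ℤ} (hqr : q ≤ r) {x h z a : T} (hx : x ∈ L.loc (Set.Ico p q))
    (hh : h ∈ L.loc (Set.Ico q r)) (hz : z ∈ L.loc (Set.Ico r s)) (ha : a ∈ L.loc (Set.Ico q r)) :
    L.Ω (star (x * (h * z)) * (a * (x * (h * z)))) =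
      sqNorm L.Ω x * (L.Ω (star h * (a * h)) * sqNorm L.Ω z) := by
  set g := star h * (a * h) with hg
  have hgm : g ∈ L.loc (Set.Ico q r) := mul_mem (star_mem hh) (mul_mem ha hh)
  have hxx := mul_mem (star_mem hx) hx
  have hzz := mul_mem (star_mem hz) hz
  have e : star (x * (h * z)) * (a * (x * (h * z))) = star x * x * (g * (star z * z)) := by
    have e1 : a * x = x * a := L.commute (disjoint_Ico le_rfl).symm ha hx
    have e2 : star h * (star x * x) = star x * x * star h :=
      L.commute (disjoint_Ico le_rfl).symm (star_mem hh) hxx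
    have e3 : star z * (star x * x) = star x * x * star z :=
      L.commute (disjoint_Ico hqr).symm (star_mem hz) hxx
    have e4 : star z * g = g * star z := L.commute (disjoint_Ico le_rfl).symm (star_mem hz) hgm
    calc _ = star z * (star h * (star x * (a * x) * (h * z))) := by
          simp only [star_mul, mul_assoc]
      _ = star z * (star h * (star x * x) * a * (h * z)) := by rw [e1]; simp only [mul_assoc]
      _ = star z * (star x * x) * (star h * (a * h) * z) := by rw [e2]; simp only [mul_assoc]
      _ = star x * x * (star z * g * z) := by rw [e3]; simp only [mul_assoc, hg]
      _ = _ := by rw [e4]; simp only [mul_assoc]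
  have hd : Disjoint (Set.Ico p q) (Set.Ici q) := Set.disjoint_left.mpr fun i hi hi' =>
    (Set.mem_Ico.mp hi).2.not_ge hi'
  have h1 : g * (star z * z) ∈ L.loc (Set.Ici q) := mul_mem (L.mono Set.Ico_subset_Ici_self hgm)
    (L.mono (Set.Ico_subset_Ici_self.trans (Set.Ici_subset_Ici.mpr hqr)) hzz)
  rw [e, L.map_mul hd hxx h1, L.map_mul (disjoint_Ico le_rfl) hgm hzz, L.isState.pos.coe_sqNorm,
    L.isState.pos.coe_sqNorm]

namespace Tile
variable (t : Tile mk n R)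

theorem τ_marked {i u : ℤ} (h : i ≤ u) (h' : u ≤ i + n) : mk.IsMarked u (t.τ i) := t.marked i u h h'

theorem V_marked {a b : ℤ} (h : a < b) : mk.IsMarked a (t.V a b) := by
  have := t.lt
  rw [V_of_lt t h]
  refine (t.τ_marked le_rfl (by omega)).mul_right (add_mem ?_ ?_)
  · exact mem_loc_compl (t.V_mem _ _) (by omega)
  · exact mem_loc_compl (t.V_mem _ _) (by omega)

theorem sqNorm_V_add (a b : ℤ) :
    sqNorm L.Ω (t.V a b + t.V (a + 1) b) = t.w (b - a) + t.w (b - a - 1) := by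
  rw [sqNorm_add L.isState.pos, sqNorm_V, sqNorm_V, sub_sub]
  rcases lt_or_ge a b with h | h
  · rw [← one_mul (t.V (a + 1) b)]
    refine Marker.Sep.Ω_eq_zero (u := a) (mk := mk) (Or.inr ⟨t.V_marked h, ?_⟩) (one_mem _)
    exact mem_loc_compl (t.V_mem _ _) (by omega)
  · rw [V_of_gt t (show b < a + 1 by omega), mul_zero, map_zero]

theorem pos (t : Tile mk n R) : 0 < R := by have := t.lt; omega

theorem isRenewal : IsRenewal R t.w where
  neg k hk := by rw [w, V_of_gt t hk, sqNorm]; simp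
  zero := by rw [w, V_self, L.isState.sqNorm_one]
  step k hk := by
    rcases lt_or_ge k R with h | h
    · rw [w, w, w, V_of_lt t hk, V_of_gt t (show k < 0 + R by omega),
        V_of_gt t (show k < 0 + R + 1 by omega), V_of_gt t (show k - R < 0 by omega),
        V_of_gt t (show k - R - 1 < 0 by omega)]
      simp [sqNorm]
    · rw [w, V_of_lt t hk, L.sqNorm_mul (S := Set.Ico 0 (0 + R)) (S' := Set.Ico (0 + R) k)
        (disjoint_Ico le_rfl) (t.mem 0)
        (add_mem (t.V_mem _ _) (mem_Ico_of_subset (t.V_mem _ _) (by omega) le_rfl)),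
        t.sqNorm_τ, sqNorm_V_add]
      rw [zero_add]; ring

/-- The part of a tiling strictly to the right of the tile covering `q`, when that tile starts at
`q - o`. -/
noncomputable def Y (o : ℕ) (q b : ℤ) : T :=
  if o < R then t.V (q - o + R) b + t.V (q - o + R + 1) b else t.V (q + 1) b

/-- The left end of the support of `Y`. -/
def E (R o : ℕ) (q : ℤ) : ℤ := max (q - o + R) (q + 1)

theorem Y_mem {o : ℕ} (ho : o ≤ R) (q b : ℤ) : t.Y o q b ∈ L.loc (Set.Ico (E R o q) b) := by
  rw [Y, E]
  split_ifs with h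
  · refine add_mem (mem_Ico_of_subset (t.V_mem _ _) ?_ le_rfl)
      (mem_Ico_of_subset (t.V_mem _ _) ?_ le_rfl) <;> omega
  · exact mem_Ico_of_subset (t.V_mem _ _) (by omega) le_rfl

theorem sqNorm_Y_of_lt {o : ℕ} (ho : o < R) {q b : ℤ} (hb : q - o < b) :
    sqNorm L.Ω (t.Y o q b) = 2 * t.w (b - (q - o)) := by
  rw [Y, if_pos ho, sqNorm_V_add, t.isRenewal.step (b - (q - o)) (by omega), sub_add_eq_sub_sub b]
  ring

theorem sqNorm_Y_self (q b : ℤ) : sqNorm L.Ω (t.Y R q b) = t.w (b - q - 1) := by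
  rw [Y, if_neg (lt_irrefl _), sqNorm_V, sub_sub]

theorem V_decomp {a q b : ℤ} (ha : a ≤ q) (hb : q < b) :
    t.V a b = ∑ o ∈ Finset.range (R + 1), t.V a (q - o) * (t.τ (q - o) * t.Y o q b) := by
  induction q, ha using Int.leInduction with
  | base =>
    rw [Finset.sum_range_succ', Finset.sum_eq_zero, zero_add]
    · rw [Nat.cast_zero, sub_zero, V_self, one_mul, V_of_lt t hb, Y, if_pos t.pos, Nat.cast_zero,
        sub_zero]
    · intro o _
      rw [V_of_gt t (by omega), zero_mul]
  | succ q ha ih =>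
    rw [ih (by omega)]
    obtain ⟨r, rfl⟩ : ∃ r, R = r + 1 := ⟨R - 1, by have := t.pos; omega⟩
    rw [Finset.sum_range_succ, Finset.sum_range_succ, Finset.sum_range_succ' _ (r + 1),
      Finset.sum_range_succ _ r]
    have e1 : ∀ o ∈ Finset.range r, t.V a (q - o) * (t.τ (q - o) * t.Y o q b) =
        t.V a (q + 1 - (o + 1 : ℕ)) * (t.τ (q + 1 - (o + 1 : ℕ)) * t.Y (o + 1) (q + 1) b) := by
      intro o ho
      rw [Finset.mem_range] at ho
      rw [show q + 1 - ((o + 1 : ℕ) : ℤ) = q - o by push_cast; ring, Y, Y, if_pos (by omega),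
        if_pos (by omega), show q + 1 - ((o + 1 : ℕ) : ℤ) = q - o by push_cast; ring]
    rw [Finset.sum_congr rfl e1]
    have e2 : t.Y r q b = t.V (q + 1) b + t.V (q + 1 + 1) b := by
      rw [Y, if_pos (by omega)]
      rw [show q - (r : ℤ) + (r + 1 : ℕ) = q + 1 by push_cast; ring]
    have e3 : t.Y (r + 1) q b = t.V (q + 1) b := by rw [Y, if_neg (by omega)]
    have e4 : t.Y (r + 1) (q + 1) b = t.V (q + 1 + 1) b := by rw [Y, if_neg (by omega)]
    have e5 : t.τ (q + 1) * t.Y 0 (q + 1) b = t.V (q + 1) b := by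
      rw [V_of_lt t hb, Y, if_pos (by omega), Nat.cast_zero, sub_zero]
    have e6 : t.V a (q + 1) = t.V a (q - r) * t.τ (q - r) +
        t.V a (q - (r + 1 : ℕ)) * t.τ (q - (r + 1 : ℕ)) := by
      rw [V_eq_right t a (q + 1), if_neg (by omega), zero_add]
      simp only [show q + 1 - ((r + 1 : ℕ) : ℤ) = q - r by push_cast; ring,
        show q - (r : ℤ) - 1 = q - (r + 1 : ℕ) by push_cast; ring]
    rw [e2, e3, e4, Nat.cast_zero, sub_zero, e5, e6,
      show q + 1 - ((r + 1 : ℕ) : ℤ) = q - r by push_cast; ring]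
    noncomm_ring

theorem exists_sep {o o' : ℕ} (h : o' < o) (ho : o ≤ R) (q : ℤ) : ∃ u, q - o' ≤ u ∧
    u ≤ q - o' + n ∧ u < E R o q ∧ t.τ (q - o) ∈ L.loc {u}ᶜ := by
  rw [E]
  rcases lt_or_ge (q - o' : ℤ) (q - o + R) with h1 | h1
  · obtain ⟨u, h2, h3, h4, h5⟩ := t.sep (q - o) (q - o') (by omega) h1
    exact ⟨u, h2, h3, by omega, h5⟩
  · exact ⟨q, by omega, by omega, by omega, mem_loc_compl (t.mem _) (by omega)⟩

end Tile
end LocalSystem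

namespace LocalSystem.Tile
open Filter Topology
variable {T : Type*} [CStarAlgebra T] {L : LocalSystem T} {mk : L.Marker} {n R : ℕ}
  (t : Tile mk n R)

/-- The part of a tiling between the tile covering `q₁` and the tile covering `q₂`, including these
tiles, when they start at `q₁ - s.1` and `q₂ - s.2`. -/
noncomputable def H (q₁ q₂ : ℤ) (s : Fin (R + 1) × Fin (R + 1)) : T :=
  t.τ (q₁ - (s.1 : ℕ)) * (t.Y s.1 q₁ (q₂ - (s.2 : ℕ)) * t.τ (q₂ - (s.2 : ℕ)))

theorem V_eq_sum {a b q₁ q₂ : ℤ} (ha : a ≤ q₁) (hq : q₁ + 2 * R + n + 2 ≤ q₂) (hb : q₂ < b) :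
    t.V a b = ∑ s : Fin (R + 1) × Fin (R + 1),
      t.V a (q₁ - (s.1 : ℕ)) * (t.H q₁ q₂ s * t.Y s.2 q₂ b) := by
  rw [t.V_decomp (show a ≤ q₂ by omega) hb, Finset.sum_range, Fintype.sum_prod_type_right]
  refine Finset.sum_congr rfl fun o' _ => ?_
  have := o'.2
  rw [t.V_decomp ha (show q₁ < q₂ - (o' : ℕ) by omega), Finset.sum_range, Finset.sum_mul]
  refine Finset.sum_congr rfl fun o _ => ?_
  simp only [H, mul_assoc]

theorem H_mem {q₁ q₂ : ℤ} (hq : q₁ + 2 * R + n + 2 ≤ q₂) (s : Fin (R + 1) × Fin (R + 1)) :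
    t.H q₁ q₂ s ∈ L.loc (Set.Ico (q₁ - (s.1 : ℕ)) (E R s.2 q₂)) := by
  have h1 := s.1.2
  have h2 := s.2.2
  have hE : ∀ k : ℕ, ∀ q, q + 1 ≤ E R k q ∧ q - k + R ≤ E R k q ∧ (E R k q = q - k + R ∨
      E R k q = q + 1) := fun k q => by rw [E]; omega
  have := hE s.1 q₁
  have := hE s.2 q₂
  refine mul_mem (mem_Ico_of_subset (t.mem _) le_rfl ?_) (mul_mem
    (mem_Ico_of_subset (t.Y_mem (by omega) _ _) ?_ ?_) (mem_Ico_of_subset (t.mem _) ?_ ?_)) <;>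
    omega

theorem exists_sep_H_aux {q₁ q₂ : ℤ} (hq : q₁ + 2 * R + n + 2 ≤ q₂)
    {s s' : Fin (R + 1) × Fin (R + 1)} (h : s'.1 < s.1 ∨ (s.1 = s'.1 ∧ s'.2 < s.2)) :
    ∃ u, u ∈ Set.Ico (q₁ - (s.1 : ℕ)) (E R s.2 q₂) ∧ u ∈ Set.Ico (q₁ - (s'.1 : ℕ)) (E R s'.2 q₂) ∧
      (u ≤ q₁ + n ∨ q₂ - R ≤ u) ∧ mk.Sep u (t.H q₁ q₂ s) (t.H q₁ q₂ s') := by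
  obtain ⟨o, p⟩ := s
  obtain ⟨o', p'⟩ := s'
  have h1 := o.2
  have h2 := o'.2
  have h3 := p.2
  have h4 := p'.2
  have h5 := t.lt
  have hE : ∀ k : Fin (R + 1), ∀ q, q + 1 ≤ E R k q ∧ q - (k : ℕ) + R ≤ E R k q ∧
      E R k q ≤ q + R := fun k q => by rw [E]; omega
  simp only [H, Set.mem_Ico] at h ⊢
  rcases h with h | ⟨rfl, h⟩
  · obtain ⟨u, e1, e2, e3, e4⟩ := t.exists_sep (show (o' : ℕ) < o from h) (by omega) q₁
    have e5 : (o' : ℕ) < o := h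
    have := hE o q₁
    have := hE o' q₁
    have := hE p q₂
    have := hE p' q₂
    refine ⟨u, by omega, by omega, by omega, Or.inl ⟨mul_mem e4 (mul_mem ?_ ?_),
      (t.τ_marked e1 e2).mul_right (mul_mem ?_ ?_)⟩⟩
    · exact mem_loc_compl (t.Y_mem (by omega) _ _) (by omega)
    · exact mem_loc_compl (t.mem _) (by omega)
    · exact mem_loc_compl (t.Y_mem (by omega) _ _) (by omega)
    · exact mem_loc_compl (t.mem _) (by omega)
  · obtain ⟨u, e1, e2, e3, e4⟩ := t.exists_sep (show (p' : ℕ) < p from h) (by omega) q₂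
    have e5 : (p' : ℕ) < p := h
    have := hE o q₁
    have := hE p q₂
    have := hE p' q₂
    refine ⟨u, by omega, by omega, by omega, Or.inl ⟨mul_mem ?_ (mul_mem ?_ e4),
      ((t.τ_marked e1 e2).mul_left ?_).mul_left ?_⟩⟩
    · exact mem_loc_compl (t.mem _) (by omega)
    · exact mem_loc_compl (t.Y_mem (by omega) _ _) (by omega)
    · exact mem_loc_compl (t.Y_mem (by omega) _ _) (by omega)
    · exact mem_loc_compl (t.mem _) (by omega)

theorem exists_sep_H {q₁ q₂ : ℤ} (hq : q₁ + 2 * R + n + 2 ≤ q₂)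
    {s s' : Fin (R + 1) × Fin (R + 1)} (h : s ≠ s') :
    ∃ u, u ∈ Set.Ico (q₁ - (s.1 : ℕ)) (E R s.2 q₂) ∧ u ∈ Set.Ico (q₁ - (s'.1 : ℕ)) (E R s'.2 q₂) ∧
      (u ≤ q₁ + n ∨ q₂ - R ≤ u) ∧ mk.Sep u (t.H q₁ q₂ s) (t.H q₁ q₂ s') := by
  have h' : (s'.1 < s.1 ∨ (s.1 = s'.1 ∧ s'.2 < s.2)) ∨ (s.1 < s'.1 ∨ (s'.1 = s.1 ∧ s.2 < s'.2)) := by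
    rcases lt_trichotomy s.1 s'.1 with h1 | h1 | h1
    · exact Or.inr (Or.inl h1)
    · rcases lt_trichotomy s.2 s'.2 with h2 | h2 | h2
      · exact Or.inr (Or.inr ⟨h1.symm, h2⟩)
      · exact absurd (Prod.ext h1 h2) h
      · exact Or.inl (Or.inr ⟨h1, h2⟩)
    · exact Or.inl (Or.inl h1)
  rcases h' with h' | h'
  · exact t.exists_sep_H_aux hq h'
  · obtain ⟨u, e1, e2, e3, e4⟩ := t.exists_sep_H_aux hq h'
    exact ⟨u, e2, e1, e3, e4.symm⟩

/-- The limit of the weights. -/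
noncomputable def wLim (R : ℕ) : ℝ := 1 / (R + 1 / 2)

theorem wLim_pos (R : ℕ) : 0 < wLim R := by rw [wLim]; positivity

theorem tendsto_w : Tendsto t.w atTop (𝓝 (wLim R)) := t.isRenewal.tendsto t.pos

theorem tendsto_sqNorm_Y (o : Fin (R + 1)) (q : ℤ) :
    ∃ κ, Tendsto (fun b => sqNorm L.Ω (t.Y o q b)) atTop (𝓝 κ) := by
  by_cases ho : (o : ℕ) < R
  · refine ⟨2 * wLim R, Tendsto.congr' ?_ ((t.tendsto_w.comp
      (tendsto_atTop_add_const_right _ (-(q - (o : ℕ))) tendsto_id)).const_mul 2)⟩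
    filter_upwards [eventually_gt_atTop (q - (o : ℕ))] with b hb
    rw [t.sqNorm_Y_of_lt ho hb]
    rfl
  · have : (o : ℕ) = R := by have := o.2; omega
    refine ⟨wLim R, Tendsto.congr (fun b => ?_) (t.tendsto_w.comp
      (tendsto_atTop_add_const_right _ (- q - 1) tendsto_id))⟩
    rw [this, sqNorm_Y_self]
    simp only [Function.comp, id]
    congr 1; ring

theorem apply_V_eq_sum {a b q₁ q₂ c d : ℤ} {x : T} (hx : x ∈ L.loc (Set.Ico c d))
    (ha : a ≤ q₁) (hq : q₁ + 2 * R + n + 2 ≤ q₂) (hb : q₂ < b) (hc : q₁ + n < c) (hd : d ≤ q₂ - R) :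
    L.Ω (star (t.V a b) * (x * t.V a b)) = ∑ s : Fin (R + 1) × Fin (R + 1),
      (t.w (q₁ - (s.1 : ℕ) - a) : ℂ) * (L.Ω (star (t.H q₁ q₂ s) * (x * t.H q₁ q₂ s)) *
        (sqNorm L.Ω (t.Y s.2 q₂ b) : ℂ)) := by
  rw [t.V_eq_sum ha hq hb, apply_sum_sum]
  · refine Finset.sum_congr rfl fun s _ => ?_
    have h1 := s.1.2
    have h2 := s.2.2
    have hE : q₂ + 1 ≤ E R s.2 q₂ := by rw [E]; omega
    rw [L.Ω_sandwich (by omega) (t.V_mem _ _) (t.H_mem hq s) (t.Y_mem (by omega) _ _)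
      (mem_Ico_of_subset hx (by omega) (by omega)), sqNorm_V]
  · intro s s' hs
    have h1 := s.1.2
    have h2 := s.2.2
    have h3 := s'.2.2
    obtain ⟨u, e1, e2, e3, e4⟩ := t.exists_sep_H hq hs
    rw [Set.mem_Ico] at e1 e2
    refine ((e4.mul_right ?_ ?_).mul_left ?_ ?_).Ω_eq_zero ?_
    · exact mem_loc_compl (t.Y_mem (by omega) _ _) (by omega)
    · exact mem_loc_compl (t.Y_mem (by omega) _ _) (by omega)
    · exact mem_loc_compl (t.V_mem _ _) (by omega)
    · exact mem_loc_compl (t.V_mem _ _) (by omega)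
    · exact mem_loc_compl hx (by omega)

/-- The vector state given by `V a b`. -/
noncomputable def ρ (a b : ℤ) (x : T) : ℂ := L.Ω (star (t.V a b) * (x * t.V a b)) / t.w (b - a)

theorem exists_tendsto_ρ {c d : ℤ} {x : T} (hx : x ∈ L.loc (Set.Ico c d)) :
    ∃ l, Tendsto (fun p : ℤ × ℤ => t.ρ p.1 p.2 x) (atBot ×ˢ atTop) (𝓝 l) := by
  set q₁ := c - n - 1 with hq₁
  set q₂ := max (d + R) (q₁ + 2 * R + n + 2) with hq₂
  choose κ hκ using fun o => t.tendsto_sqNorm_Y o q₂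
  refine ⟨(∑ s : Fin (R + 1) × Fin (R + 1), (wLim R : ℂ) *
    (L.Ω (star (t.H q₁ q₂ s) * (x * t.H q₁ q₂ s)) * (κ s.2 : ℂ))) / wLim R, ?_⟩
  have h0 : (wLim R : ℂ) ≠ 0 := by exact_mod_cast (wLim_pos R).ne'
  have hw : Tendsto (fun p : ℤ × ℤ => p.2 - p.1) (atBot ×ˢ atTop) atTop := by
    simp only [sub_eq_add_neg]
    exact tendsto_snd.atTop_add_atTop (tendsto_neg_atBot_atTop.comp tendsto_fst)
  have h1 : ∀ o : ℕ, Tendsto (fun p : ℤ × ℤ => q₁ - o - p.1) (atBot ×ˢ atTop) atTop := by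
    intro o
    simp only [sub_eq_add_neg]
    exact tendsto_atTop_add_const_left _ _ (tendsto_neg_atBot_atTop.comp tendsto_fst)
  refine Tendsto.congr' ?_ (Tendsto.div (tendsto_finsetSum _ fun s _ => Tendsto.mul
    ((Complex.continuous_ofReal.tendsto _).comp (t.tendsto_w.comp (h1 s.1)))
    (Tendsto.const_mul _ ((Complex.continuous_ofReal.tendsto _).comp ((hκ s.2).comp tendsto_snd))))
    ((Complex.continuous_ofReal.tendsto _).comp (t.tendsto_w.comp hw)) h0)
  filter_upwards [tendsto_fst.eventually (eventually_le_atBot q₁),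
    tendsto_snd.eventually (eventually_gt_atTop q₂)] with p hp1 hp2
  rw [ρ, t.apply_V_eq_sum hx hp1 (by omega) hp2 (by omega) (by omega)]
  rfl

end LocalSystem.Tile

open Filter Topology in
/-- Pointwise limits of states extend to states. -/
theorem exists_isState_of_tendsto {T : Type*} [CStarAlgebra T] {Ψ : ℕ → T →L[ℂ] ℂ}
    (h : ∀ᶠ M in atTop, IsState (Ψ M)) : ∃ ψ : T →L[ℂ] ℂ, IsState ψ ∧
      ∀ x l, Tendsto (fun M => Ψ M x) atTop (𝓝 l) → ψ x = l := by
  let U : Ultrafilter ℕ := hyperfilter ℕ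
  have hU : (U : Filter ℕ) ≤ atTop := Nat.hyperfilter_le_atTop
  let Ψ' : ℕ → WeakDual ℂ T := fun M => StrongDual.toWeakDual (Ψ M)
  have hc := WeakDual.isCompact_closedBall (𝕜 := ℂ) (E := T) 0 1
  have hmem : WeakDual.toStrongDual ⁻¹' Metric.closedBall (0 : StrongDual ℂ T) 1 ∈ U.map Ψ' := by
    rw [Ultrafilter.mem_map]
    filter_upwards [hU h] with M hM
    simp only [Set.mem_preimage, Metric.mem_closedBall, dist_zero_right]
    exact hM.2.le
  obtain ⟨ψ, -, hψ⟩ := hc.ultrafilter_le_nhds' (U.map Ψ') hmem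
  have hlim : ∀ x, Tendsto (fun M => Ψ M x) U (𝓝 (WeakDual.toStrongDual ψ x)) := fun x =>
    ((WeakDual.eval_continuous x).tendsto ψ).comp hψ
  refine ⟨WeakDual.toStrongDual ψ, isState_iff.mpr ⟨fun x => ?_, ?_⟩, fun x l hl =>
    tendsto_nhds_unique (hlim x) (hl.mono_left hU)⟩
  · refine ge_of_tendsto (hlim _) ?_
    filter_upwards [hU h] with M hM
    exact hM.pos x
  · refine tendsto_nhds_unique (hlim 1) (tendsto_const_nhds.congr' ?_)
    filter_upwards [hU h] with M hM
    exact hM.map_one.symm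

namespace LocalSystem.Tile
open Filter Topology
variable {T : Type*} [CStarAlgebra T] {L : LocalSystem T} {mk : L.Marker} {n R : ℕ}
  (t : Tile mk n R)

theorem ρ_sh (c a b : ℤ) (x : T) : t.ρ a b (L.sh c x) = t.ρ (a - c) (b - c) x := by
  have e := t.sh_V c (a - c) (b - c)
  rw [sub_add_cancel, sub_add_cancel] at e
  rw [ρ, ρ, ← e, ← map_star, ← _root_.map_mul, ← _root_.map_mul, L.Ω_sh]
  congr 3; ring

/-- The vector state given by `V (-M) M` as a functional. -/
noncomputable def Ψ (M : ℕ) : T →L[ℂ] ℂ :=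
  ((t.w (M - -M) : ℂ))⁻¹ •
    L.Ω.comp (ContinuousLinearMap.mulLeftRight ℂ T (star (t.V (-M) M)) (t.V (-M) M))

theorem Ψ_apply (M : ℕ) (x : T) : t.Ψ M x = t.ρ (-M) M x := by
  simp only [Ψ, ρ, FunLike.coe_smul, Pi.smul_apply, ContinuousLinearMap.comp_apply,
    ContinuousLinearMap.mulLeftRight_apply, smul_eq_mul, mul_assoc]
  rw [div_eq_inv_mul]

theorem eventually_w_pos : ∀ᶠ k in atTop, 0 < t.w k :=
  t.tendsto_w.eventually_const_lt (wLim_pos R)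

theorem tendsto_neg_prod :
    Tendsto (fun M : ℕ => ((-(M : ℤ), (M : ℤ)) : ℤ × ℤ)) atTop (atBot ×ˢ atTop) :=
  (tendsto_neg_atTop_atBot.comp tendsto_natCast_atTop_atTop).prodMk tendsto_natCast_atTop_atTop

theorem eventually_isState_Ψ : ∀ᶠ M in atTop, IsState (t.Ψ M) := by
  have h : Tendsto (fun M : ℕ => (M : ℤ) - -M) atTop atTop := by
    simp only [sub_neg_eq_add]
    exact tendsto_natCast_atTop_atTop.atTop_add_atTop tendsto_natCast_atTop_atTop
  filter_upwards [h.eventually t.eventually_w_pos] with M hM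
  refine isState_iff.mpr ⟨fun x => ?_, ?_⟩
  · rw [Ψ_apply, ρ]
    have e : star (t.V (-M) M) * (star x * x * t.V (-M) M) =
        star (x * t.V (-M) M) * (x * t.V (-M) M) := by simp only [star_mul, mul_assoc]
    rw [e, ← L.isState.pos.coe_sqNorm, ← Complex.ofReal_div]
    exact_mod_cast div_nonneg (L.isState.pos.sqNorm_nonneg _) hM.le
  · rw [Ψ_apply, ρ, one_mul, ← L.isState.pos.coe_sqNorm, sqNorm_V]
    exact div_self (by exact_mod_cast hM.ne')

theorem exists_state : ∃ ψ : T →L[ℂ] ℂ, IsState ψ ∧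
    (∀ x, ψ (L.sh 1 x) = ψ x) ∧
    (∀ x ∈ L.loc Set.univ, Tendsto (fun p : ℤ × ℤ => t.ρ p.1 p.2 x) (atBot ×ˢ atTop) (𝓝 (ψ x))) ∧
    ∀ x l, Tendsto (fun M : ℕ => t.ρ (-M) M x) atTop (𝓝 l) → ψ x = l := by
  obtain ⟨ψ, hψ, hlim⟩ := exists_isState_of_tendsto t.eventually_isState_Ψ
  simp only [Ψ_apply] at hlim
  have h1 : ∀ x ∈ L.loc Set.univ,
      Tendsto (fun p : ℤ × ℤ => t.ρ p.1 p.2 x) (atBot ×ˢ atTop) (𝓝 (ψ x)) := by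
    intro x hx
    obtain ⟨N, hN⟩ := L.exists_Ico hx
    obtain ⟨l, hl⟩ := t.exists_tendsto_ρ hN
    have hl' : Tendsto (fun M : ℕ => t.ρ (-M) M x) atTop (𝓝 l) := by
      have h0 := tendsto_neg_prod
      have h1 := hl.comp h0
      exact h1
    rwa [hlim x l hl']
  refine ⟨ψ, hψ, fun x => ?_, h1, hlim⟩
  have h2 : ∀ x ∈ L.loc Set.univ, ψ (L.sh 1 x) = ψ x := by
    intro x hx
    refine hlim _ _ ?_
    simp only [ρ_sh, sub_eq_add_neg]
    have h0 : Tendsto (fun M : ℕ => ((-(M : ℤ) + -1, (M : ℤ) + -1) : ℤ × ℤ)) atTop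
        (atBot ×ˢ atTop) :=
      (tendsto_atBot_add_const_right _ (-1)
        (tendsto_neg_atTop_atBot.comp tendsto_natCast_atTop_atTop)).prodMk
        (tendsto_atTop_add_const_right _ (-1) tendsto_natCast_atTop_atTop)
    have h3 := (h1 x hx).comp h0
    exact h3
  have h3 : Continuous fun x => ψ (L.sh 1 x) :=
    ψ.continuous.comp (StarAlgEquiv.isometry (L.sh 1)).continuous
  exact congrFun (Continuous.ext_on L.dense h3 ψ.continuous h2) x

end LocalSystem.Tile

namespace LocalSystem.Tile
open Filter Topology
variable {T : Type*} [CStarAlgebra T] {L : LocalSystem T} {mk : L.Marker} {n R : ℕ}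
  (t : Tile mk n R)

theorem exists_apply_H_eq {q₁ q₂ : ℤ} (hq : q₁ + 2 * R + n + 2 ≤ q₂)
    (s : Fin (R + 1) × Fin (R + 1)) :
    ∃ (p : ℤ) (κ : ℝ), 0 < κ ∧ q₁ - R ≤ p ∧ p ≤ q₁ + 1 ∧
      ∀ x ∈ L.loc (Set.Ico (q₁ + R) (q₂ - R)), L.Ω (star (t.H q₁ q₂ s) * (x * t.H q₁ q₂ s)) =
        κ * L.Ω (star (t.V p (q₂ - (s.2 : ℕ))) * (x * t.V p (q₂ - (s.2 : ℕ)))) := by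
  have h1 := s.1.2
  have h2 := s.2.2
  have h3 := t.pos
  have hE : q₁ + 1 ≤ E R s.1 q₁ ∧ q₁ - (s.1 : ℕ) + R ≤ E R s.1 q₁ ∧ E R s.1 q₁ ≤ q₁ + R := by
    rw [E]; omega
  have e : ∀ x ∈ L.loc (Set.Ico (q₁ + R) (q₂ - R)),
      L.Ω (star (t.H q₁ q₂ s) * (x * t.H q₁ q₂ s)) = (1 / 4 : ℝ) *
        L.Ω (star (t.Y s.1 q₁ (q₂ - (s.2 : ℕ))) * (x * t.Y s.1 q₁ (q₂ - (s.2 : ℕ)))) := by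
    intro x hx
    rw [H, L.Ω_sandwich (p := q₁ - (s.1 : ℕ)) (q := E R s.1 q₁) (r := q₂ - (s.2 : ℕ)) (by omega)
      (mem_Ico_of_subset (t.mem _) le_rfl (by omega)) (t.Y_mem (by omega) _ _) (t.mem _)
      (mem_Ico_of_subset hx (by omega) (by omega)), t.sqNorm_τ, t.sqNorm_τ]
    push_cast
    ring
  by_cases ho : (s.1 : ℕ) < R
  · refine ⟨q₁ - (s.1 : ℕ), 1 / 2, by norm_num, by omega, by omega, fun x hx => ?_⟩
    have e2 : t.V (q₁ - (s.1 : ℕ)) (q₂ - (s.2 : ℕ)) =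
        t.τ (q₁ - (s.1 : ℕ)) * (t.Y s.1 q₁ (q₂ - (s.2 : ℕ)) * 1) := by
      rw [V_of_lt t (by omega), Y, if_pos ho, mul_one]
    rw [e x hx, e2, L.Ω_sandwich (p := q₁ - (s.1 : ℕ)) (q := E R s.1 q₁) (r := q₂ - (s.2 : ℕ))
      (s := q₂) (by omega)
      (mem_Ico_of_subset (t.mem _) le_rfl (by omega)) (t.Y_mem (by omega) _ _) (one_mem _)
      (mem_Ico_of_subset hx (by omega) (by omega)), t.sqNorm_τ, L.isState.sqNorm_one]
    push_cast
    ring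
  · refine ⟨q₁ + 1, 1 / 4, by norm_num, by omega, le_rfl, fun x hx => ?_⟩
    rw [e x hx, Y, if_neg ho]

theorem mul_H_eq {x h z q qB : T} {w : ℂ} (h1 : h * x = x * h) (h2 : star h * x = x * star h)
    (h3 : q * x = x * q) (h4 : z * q = q * z) (hB : q * qB = qB)
    (hw : q * (star h * h) * q = w • q) :
    h * q * star h * (x * (h * z)) * qB = w • (x * (h * z) * qB) := by
  calc _ = h * q * (star h * x) * h * z * qB := by simp only [mul_assoc]
    _ = h * (q * x) * (star h * h) * z * (q * qB) := by rw [h2, hB]; simp only [mul_assoc]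
    _ = h * x * (q * (star h * h) * (z * q)) * qB := by rw [h3]; simp only [mul_assoc]
    _ = h * x * (q * (star h * h) * q) * z * qB := by rw [h4]; simp only [mul_assoc]
    _ = w • (h * x * (q * z) * qB) := by
      rw [hw]; simp only [mul_smul_comm, smul_mul_assoc, mul_assoc]
    _ = _ := by rw [← h4, h1]; simp only [mul_assoc, hB]

/-- The projections onto the components of `V` with prescribed tiles over `q₁` and `q₂`. -/
noncomputable def proj (q₁ q₂ : ℤ) (m : ℕ) (s : Fin (R + 1) × Fin (R + 1)) : T :=
  ((sqNorm L.Ω (t.H q₁ q₂ s))⁻¹ : ℂ) • (t.H q₁ q₂ s *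
    L.Q (Finset.Ico (q₁ - (s.1 : ℕ)) (E R s.2 q₂)) m * star (t.H q₁ q₂ s))

/-- The conditions on `m` ensuring that `proj` is a family of projections that diagonalizes `x`. -/
structure Excises (q₁ q₂ : ℤ) (m : ℕ) (x : T) : Prop where
  one : ∀ s, L.Q (Finset.Ico (q₁ - (s.1 : ℕ)) (E R s.2 q₂)) m *
    (star (t.H q₁ q₂ s) * t.H q₁ q₂ s) * L.Q (Finset.Ico (q₁ - (s.1 : ℕ)) (E R s.2 q₂)) m =
    (sqNorm L.Ω (t.H q₁ q₂ s) : ℂ) • L.Q (Finset.Ico (q₁ - (s.1 : ℕ)) (E R s.2 q₂)) m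
  apply : ∀ s, L.Q (Finset.Ico (q₁ - (s.1 : ℕ)) (E R s.2 q₂)) m *
    (star (t.H q₁ q₂ s) * (x * t.H q₁ q₂ s)) *
      L.Q (Finset.Ico (q₁ - (s.1 : ℕ)) (E R s.2 q₂)) m =
    L.Ω (star (t.H q₁ q₂ s) * (x * t.H q₁ q₂ s)) •
      L.Q (Finset.Ico (q₁ - (s.1 : ℕ)) (E R s.2 q₂)) m
  marker : ∀ u ∈ Finset.Ico (q₁ - R) (q₂ + R + 1), L.Q {u} m * mk.v u * L.Q {u} m = 0

variable {t} {q₁ q₂ : ℤ} {m : ℕ} {x : T}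

theorem exists_excises (hq : q₁ + 2 * R + n + 2 ≤ q₂)
    (hx : x ∈ L.loc (Set.Ico (q₁ + R) (q₂ - R))) : ∃ m, t.Excises q₁ q₂ m x := by
  have hH : ∀ s, t.H q₁ q₂ s ∈ L.loc (Finset.Ico (q₁ - (s.1 : ℕ)) (E R s.2 q₂) : Finset ℤ) := by
    intro s
    rw [Finset.coe_Ico]
    exact t.H_mem hq s
  have hx' : ∀ s : Fin (R + 1) × Fin (R + 1),
      x ∈ L.loc (Finset.Ico (q₁ - (s.1 : ℕ)) (E R s.2 q₂) : Finset ℤ) := by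
    intro s
    rw [Finset.coe_Ico]
    have : q₂ + 1 ≤ E R s.2 q₂ := by rw [E]; omega
    exact mem_Ico_of_subset hx (by omega) (by omega)
  have h1 := eventually_all.mpr fun s => L.excise (mul_mem (star_mem (hH s)) (hH s))
  have h2 := eventually_all.mpr fun s =>
    L.excise (mul_mem (star_mem (hH s)) (mul_mem (hx' s) (hH s)))
  have h3 := (eventually_all_finset (Finset.Ico (q₁ - R) (q₂ + R + 1))).mpr fun u _ =>
    L.excise (J := {u}) (x := mk.v u) (by simpa using mk.v_mem u)
  obtain ⟨m, h1, h2, h3⟩ := (h1.and (h2.and h3)).exists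
  refine ⟨m, ⟨fun s => ?_, h2, fun u hu => ?_⟩⟩
  · rw [L.isState.pos.coe_sqNorm]; exact h1 s
  · rw [h3 u hu, mk.Ω_v, zero_smul]

theorem Excises.compress_eq_zero (h : t.Excises q₁ q₂ m x) (hq : q₁ + 2 * R + n + 2 ≤ q₂)
    {s s' : Fin (R + 1) × Fin (R + 1)} (hs : s ≠ s') {a b : ℤ} {y y' z : T} (hy : y ∈ L.loc (Set.Ico (q₁ + R) (q₂ - R)))
    (hy' : y' ∈ L.loc (Set.Ico a (q₁ - (s'.1 : ℕ)))) (hz : z ∈ L.loc (Set.Ico (E R s'.2 q₂) b))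
    {J : Finset ℤ} (hJ : Finset.Ico (q₁ - (s'.1 : ℕ)) (E R s'.2 q₂) ⊆ J) :
    L.Q (Finset.Ico (q₁ - (s.1 : ℕ)) (E R s.2 q₂)) m *
      (star (t.H q₁ q₂ s) * (y * (y' * (t.H q₁ q₂ s' * z)))) * L.Q J m = 0 := by
  obtain ⟨u, e1, e2, e3, e4⟩ := t.exists_sep_H hq hs
  have h1 := s.1.2
  have h2 := s.2.2
  have h3 := t.lt
  have hE : E R s.2 q₂ ≤ q₂ + R := by rw [E]; omega
  have e5 := (e4.mul_right (one_mem _) (mem_loc_compl hz (by rw [Set.mem_Ico] at e2; omega))).mul_left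
    (one_mem _) (mem_loc_compl hy' (by rw [Set.mem_Ico] at e2; omega))
  rw [mul_one, one_mul] at e5
  refine e5.compress_eq_zero (mem_loc_compl hy (by omega)) (h.marker u ?_) ?_ (hJ ?_)
  · rw [Set.mem_Ico] at e1
    rw [Finset.mem_Ico]
    omega
  · rwa [← Finset.mem_coe, Finset.coe_Ico]
  · rwa [← Finset.mem_coe, Finset.coe_Ico]

end LocalSystem.Tile

namespace LocalSystem.Tile
open Filter Topology
variable {T : Type*} [CStarAlgebra T] {L : LocalSystem T} {mk : L.Marker} {n R : ℕ}
  {t : Tile mk n R} {q₁ q₂ : ℤ} {m : ℕ} {x : T}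

theorem star_proj (s : Fin (R + 1) × Fin (R + 1)) : star (t.proj q₁ q₂ m s) = t.proj q₁ q₂ m s := by
  rw [proj, star_smul, star_mul, star_mul, star_star, L.Q_star, ← Complex.ofReal_inv,
    Complex.star_def, Complex.conj_ofReal, mul_assoc]

theorem Excises.proj_mul_eq_zero (h : t.Excises q₁ q₂ m x) (hq : q₁ + 2 * R + n + 2 ≤ q₂)
    {s s' : Fin (R + 1) × Fin (R + 1)} (hs : s ≠ s') {y : T}
    (hy : y ∈ L.loc (Set.Ico (q₁ + R) (q₂ - R))) :
    t.proj q₁ q₂ m s * (y * t.proj q₁ q₂ m s') = 0 := by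
  have e := h.compress_eq_zero hq hs (a := 0) (b := 0) hy (one_mem _) (one_mem _) le_rfl
  rw [one_mul, mul_one] at e
  rw [proj, proj, smul_mul_assoc, mul_smul_comm, mul_smul_comm]
  set q := L.Q (Finset.Ico (q₁ - (s.1 : ℕ)) (E R s.2 q₂)) m
  set q' := L.Q (Finset.Ico (q₁ - (s'.1 : ℕ)) (E R s'.2 q₂)) m
  have e2 : t.H q₁ q₂ s * q * star (t.H q₁ q₂ s) * (y * (t.H q₁ q₂ s' * q' * star (t.H q₁ q₂ s'))) =
      t.H q₁ q₂ s * (q * (star (t.H q₁ q₂ s) * (y * t.H q₁ q₂ s')) * q') * star (t.H q₁ q₂ s') := by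
    simp only [mul_assoc]
  rw [e2, e, mul_zero, zero_mul, smul_zero, smul_zero]

theorem Excises.proj_mul_proj (h : t.Excises q₁ q₂ m x) (s : Fin (R + 1) × Fin (R + 1)) :
    t.proj q₁ q₂ m s * (x * t.proj q₁ q₂ m s) =
      (L.Ω (star (t.H q₁ q₂ s) * (x * t.H q₁ q₂ s)) / sqNorm L.Ω (t.H q₁ q₂ s)) •
        t.proj q₁ q₂ m s := by
  have e := h.apply s
  rw [proj, smul_mul_assoc, mul_smul_comm, mul_smul_comm]
  set q := L.Q (Finset.Ico (q₁ - (s.1 : ℕ)) (E R s.2 q₂)) m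
  have e2 : t.H q₁ q₂ s * q * star (t.H q₁ q₂ s) * (x * (t.H q₁ q₂ s * q * star (t.H q₁ q₂ s))) =
      t.H q₁ q₂ s * (q * (star (t.H q₁ q₂ s) * (x * t.H q₁ q₂ s)) * q) * star (t.H q₁ q₂ s) := by
    simp only [mul_assoc]
  rw [e2, e, mul_smul_comm, smul_mul_assoc, smul_smul, smul_smul, smul_smul]
  congr 1
  ring

theorem Excises.proj_mul_self (h : t.Excises q₁ q₂ m x) {s : Fin (R + 1) × Fin (R + 1)}
    (hs : sqNorm L.Ω (t.H q₁ q₂ s) ≠ 0) :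
    t.proj q₁ q₂ m s * t.proj q₁ q₂ m s = t.proj q₁ q₂ m s := by
  have h' : t.Excises q₁ q₂ m 1 := ⟨h.one, fun s => by
    rw [one_mul, h.one s, L.isState.pos.coe_sqNorm], h.marker⟩
  have e := h'.proj_mul_proj s
  rwa [one_mul, one_mul, ← L.isState.pos.coe_sqNorm, div_self (by exact_mod_cast hs),
    one_smul] at e

theorem Excises.sum_proj_mul_V (h : t.Excises q₁ q₂ m x) (hq : q₁ + 2 * R + n + 2 ≤ q₂)
    (hs : ∀ s, sqNorm L.Ω (t.H q₁ q₂ s) ≠ 0) {a b : ℤ} (ha : a ≤ q₁ - R) (hb : q₂ + R < b) :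
    (∑ s, t.proj q₁ q₂ m s) * (t.V a b * L.Q (Finset.Ico a b) m) =
      t.V a b * L.Q (Finset.Ico a b) m := by
  have hE : ∀ s : Fin (R + 1) × Fin (R + 1), E R s.2 q₂ ≤ b := fun s => by
    have := s.2.2; rw [E]; omega
  have hE' : ∀ s : Fin (R + 1) × Fin (R + 1), q₁ - (s.1 : ℕ) ≤ E R s.2 q₂ := fun s => by
    have := s.2.2; rw [E]; omega
  have hJ : ∀ s : Fin (R + 1) × Fin (R + 1),
      Finset.Ico (q₁ - (s.1 : ℕ)) (E R s.2 q₂) ⊆ Finset.Ico a b := fun s =>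
    Finset.Ico_subset_Ico (by have := s.1.2; omega) (hE s)
  rw [t.V_eq_sum (by omega) hq (by omega), Finset.sum_mul, Finset.sum_mul]
  refine Finset.sum_congr rfl fun s _ => ?_
  rw [Finset.mul_sum, Finset.sum_eq_single s]
  · rw [proj, smul_mul_assoc, ← mul_assoc (_ * _ * _)]
    have h1 := t.V_mem a (q₁ - (s.1 : ℕ))
    have h2 := t.Y_mem (show (s.2 : ℕ) ≤ R by have := s.2.2; omega) q₂ b
    have h3 := t.H_mem hq s
    have h4 : L.Q (Finset.Ico (q₁ - (s.1 : ℕ)) (E R s.2 q₂)) m ∈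
        L.loc (Set.Ico (q₁ - (s.1 : ℕ)) (E R s.2 q₂)) := by
      have := L.Q_mem (Finset.Ico (q₁ - (s.1 : ℕ)) (E R s.2 q₂)) m
      rwa [Finset.coe_Ico] at this
    rw [mul_H_eq (L.commute (disjoint_Ico le_rfl).symm h3 h1)
      (L.commute (disjoint_Ico le_rfl).symm (star_mem h3) h1)
      (L.commute (disjoint_Ico le_rfl).symm h4 h1)
      (L.commute (disjoint_Ico le_rfl).symm h2 h4) (L.Q_mul (hJ s) m) (h.one s), smul_smul,
      inv_mul_cancel₀ (by exact_mod_cast hs s), one_smul]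
  · intro s' _ hss
    have e := h.compress_eq_zero hq hss.symm (one_mem _) (t.V_mem a (q₁ - (s'.1 : ℕ)))
      (t.Y_mem (show (s'.2 : ℕ) ≤ R by have := s'.2.2; omega) q₂ b) (hJ s')
    rw [one_mul] at e
    rw [proj, smul_mul_assoc]
    set q := L.Q (Finset.Ico (q₁ - (s.1 : ℕ)) (E R s.2 q₂)) m
    set z := t.V a (q₁ - (s'.1 : ℕ)) * (t.H q₁ q₂ s' * t.Y s'.2 q₂ b)
    have e2 : t.H q₁ q₂ s * q * star (t.H q₁ q₂ s) * (z * L.Q (Finset.Ico a b) m) =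
        t.H q₁ q₂ s * (q * (star (t.H q₁ q₂ s) * z) * L.Q (Finset.Ico a b) m) := by
      simp only [mul_assoc]
    rw [e2, e, mul_zero, smul_zero]
  · intro hs
    exact absurd (Finset.mem_univ s) hs

theorem Excises.ρ_sum_proj (h : t.Excises q₁ q₂ m x) (hq : q₁ + 2 * R + n + 2 ≤ q₂)
    (hs : ∀ s, sqNorm L.Ω (t.H q₁ q₂ s) ≠ 0) {a b : ℤ} (ha : a ≤ q₁ - R) (hb : q₂ + R < b)
    (hw : 0 < t.w (b - a)) : t.ρ a b (∑ s, t.proj q₁ q₂ m s) = 1 := by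
  set q := L.Q (Finset.Ico a b) m
  have hc : ∀ y, L.Ω (y * q) = L.Ω y := fun y =>
    (L.isState.compress (L.Q_star _ m) (L.Q_mul le_rfl m) (L.Ω_Q _ m) y).1
  rw [ρ, ← hc, mul_assoc, mul_assoc, h.sum_proj_mul_V hq hs ha hb, ← mul_assoc, hc,
    ← L.isState.pos.coe_sqNorm, sqNorm_V]
  exact div_self (by exact_mod_cast hw.ne')

theorem isPureState_of_tendsto (t : Tile mk n R) {ψ : T →L[ℂ] ℂ} (hψ : IsState ψ)
    (h : ∀ x ∈ L.loc Set.univ,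
      Tendsto (fun p : ℤ × ℤ => t.ρ p.1 p.2 x) (atBot ×ˢ atTop) (𝓝 (ψ x)))
    (h' : ∀ x l, Tendsto (fun M : ℕ => t.ρ (-M) M x) atTop (𝓝 l) → ψ x = l) :
    IsPureState ψ := by
  refine isPureState_of_diagonalizes (ι := Fin (R + 1) × Fin (R + 1)) hψ L.dense fun x hx ε hε => ?_
  obtain ⟨N, hN⟩ := L.exists_Ico hx
  obtain ⟨A, B, hAB⟩ : ∃ A B : ℤ, ∀ i ≤ A, ∀ j ≥ B, ‖t.ρ i j x - ψ x‖ ≤ ε := by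
    have := (h x hx).eventually (Metric.closedBall_mem_nhds (ψ x) hε)
    obtain ⟨pa, h1, pb, h2, h3⟩ := eventually_prod_iff.mp this
    obtain ⟨A, hA⟩ := eventually_atBot.mp h1
    obtain ⟨B, hB⟩ := eventually_atTop.mp h2
    refine ⟨A, B, fun i hi j hj => ?_⟩
    have := h3 (hA i hi) (hB j hj)
    exact dist_eq_norm (t.ρ i j x) (ψ x) ▸ this
  obtain ⟨K, hK⟩ := eventually_atTop.mp t.eventually_w_pos
  set q₁ : ℤ := min (A - 1) (-N - R) with hq₁
  set q₂ : ℤ := max (max (N + R) (B + R)) (max (q₁ + 2 * R + n + 2) (q₁ + 1 + R + K)) with hq₂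
  have hq : q₁ + 2 * R + n + 2 ≤ q₂ := by omega
  have hx' : x ∈ L.loc (Set.Ico (q₁ + R) (q₂ - R)) := mem_Ico_of_subset hN (by omega) (by omega)
  obtain ⟨m, hm⟩ := t.exists_excises hq hx'
  choose p κ hκ hp hp' hH using fun s => t.exists_apply_H_eq hq s
  have hw : ∀ s : Fin (R + 1) × Fin (R + 1), 0 < t.w (q₂ - (s.2 : ℕ) - p s) := fun s =>
    hK _ (by have := s.2.2; have := hp' s; omega)
  have hn : ∀ s, sqNorm L.Ω (t.H q₁ q₂ s) = κ s * t.w (q₂ - (s.2 : ℕ) - p s) := by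
    intro s
    have := hH s 1 (one_mem _)
    rw [one_mul, one_mul, ← L.isState.pos.coe_sqNorm, ← L.isState.pos.coe_sqNorm, sqNorm_V] at this
    exact_mod_cast this
  have hs : ∀ s, sqNorm L.Ω (t.H q₁ q₂ s) ≠ 0 := fun s => by
    rw [hn]; exact (mul_pos (hκ s) (hw s)).ne'
  refine ⟨t.proj q₁ q₂ m, ⟨fun s => star_proj s, fun s => hm.proj_mul_self (hs s),
    fun s s' hss => ?_, ?_, fun s s' hss => hm.proj_mul_eq_zero hq hss hx',
    fun s => ⟨_, hm.proj_mul_proj s, ?_⟩⟩⟩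
  · simpa only [one_mul] using hm.proj_mul_eq_zero hq hss (one_mem _)
  · refine h' _ _ (tendsto_const_nhds.congr' ?_)
    filter_upwards [eventually_ge_atTop ((q₁ - R).natAbs + (q₂ + R).natAbs + K.natAbs + 1)]
      with M hM
    exact (hm.ρ_sum_proj hq hs (by omega) (by omega) (hK _ (by omega))).symm
  · rw [hH s x hx', hn s]
    have e : (κ s : ℂ) ≠ 0 := by exact_mod_cast (hκ s).ne'
    rw [Complex.ofReal_mul, mul_div_mul_left _ _ e]
    exact hAB _ (by have := hp' s; omega) _ (by have := s.2.2; omega)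

end LocalSystem.Tile

namespace LocalSystem.Tile
open Filter Topology
variable {T : Type*} [CStarAlgebra T] {L : LocalSystem T} {mk : L.Marker} {n R : ℕ}
  (t : Tile mk n R)

/-- The part of `V a b` whose tile covering the origin starts at `-o`. -/
noncomputable def X (a b : ℤ) (o : ℕ) : T := t.V a (-o) * (t.τ (-o) * t.Y o 0 b)

theorem V_eq_sum_X {a b : ℤ} (ha : a ≤ 0) (hb : 0 < b) :
    t.V a b = ∑ o ∈ Finset.range (R + 1), t.X a b o := by
  rw [t.V_decomp ha hb]
  simp only [zero_sub, X]

theorem Ω_X_eq_zero {a b : ℤ} {o o' : ℕ} (h : o ≠ o') (ho : o ≤ R) (ho' : o' ≤ R) {x : T}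
    (hx : ∀ u : ℤ, (u ≤ -o + n ∨ u ≤ -o' + n) → x ∈ L.loc {u}ᶜ) :
    L.Ω (star (t.X a b o) * (x * t.X a b o')) = 0 := by
  have hn := t.lt
  have key : ∀ o o' : ℕ, o' < o → o ≤ R → o' ≤ R → ∃ u : ℤ, u ≤ -o' + n ∧
      mk.Sep u (t.X a b o) (t.X a b o') := by
    intro o o' h ho ho'
    obtain ⟨u, h1, h2, h3, h4⟩ := t.exists_sep h ho 0
    rw [zero_sub] at h1 h2 h4
    have h5 : u < E R o' 0 := by
      have : -(o' : ℤ) + R ≤ E R o' 0 ∧ 1 ≤ E R o' 0 := by rw [E]; omega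
      omega
    refine ⟨u, h2, Marker.Sep.mul_left (Marker.Sep.mul_right (Or.inl ⟨h4, t.τ_marked h1 h2⟩) ?_ ?_)
      ?_ ?_⟩
    · exact mem_loc_compl (t.Y_mem ho 0 b) (Or.inl h3)
    · exact mem_loc_compl (t.Y_mem ho' 0 b) (Or.inl h5)
    · exact mem_loc_compl (t.V_mem _ _) (by omega)
    · exact mem_loc_compl (t.V_mem _ _) (by omega)
  rcases lt_or_gt_of_ne h with h1 | h1
  · obtain ⟨u, h2, h3⟩ := key o' o h1 ho' ho
    exact h3.symm.Ω_eq_zero (hx u (Or.inl h2))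
  · obtain ⟨u, h2, h3⟩ := key o o' h1 ho ho'
    exact h3.Ω_eq_zero (hx u (Or.inr h2))

theorem Ω_X_self {a b : ℤ} {o : ℕ} (ho : o < R) (hb : 0 < b) {x : T}
    (hx : x ∈ L.loc (Set.Ico (-o : ℤ) (-o + R))) :
    L.Ω (star (t.X a b o) * (x * t.X a b o)) = (t.w (-o - a) * t.w (b + o) : ℝ) *
      (2 * L.Ω (star (t.τ (-o)) * (x * t.τ (-o)))) := by
  have hE : -(o : ℤ) + R ≤ E R o 0 ∧ 1 ≤ E R o 0 := by rw [E]; omega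
  have h1 := t.sqNorm_Y_of_lt ho (q := 0) (b := b) (by omega)
  rw [zero_sub, sub_neg_eq_add] at h1
  rw [X, L.Ω_sandwich (p := a) (q := -o) (r := E R o 0) (s := b) (by omega) (t.V_mem _ _)
    (mem_Ico_of_subset (t.mem _) le_rfl hE.1) (t.Y_mem ho.le 0 b)
    (mem_Ico_of_subset hx le_rfl hE.1), sqNorm_V, h1]
  push_cast
  ring

theorem sqNorm_X {a b : ℤ} {o : ℕ} (ho : o < R) (hb : 0 < b) :
    sqNorm L.Ω (t.X a b o) = t.w (-o - a) * t.w (b + o) := by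
  have h := t.Ω_X_self (a := a) ho hb (one_mem _)
  rw [one_mul, one_mul, ← L.isState.pos.coe_sqNorm, ← L.isState.pos.coe_sqNorm, t.sqNorm_τ] at h
  have h' : (sqNorm L.Ω (t.X a b o) : ℂ) = (t.w (-o - a) * t.w (b + o) : ℝ) := by
    rw [h]; push_cast; ring
  exact_mod_cast h'

theorem apply_finset_sum {ι : Type*} (s : Finset ι) (φ : T →L[ℂ] ℂ) (x : T) (X : ι → T)
    (h : ∀ i ∈ s, ∀ j ∈ s, i ≠ j → φ (star (X i) * (x * X j)) = 0) :
    φ (star (∑ i ∈ s, X i) * (x * ∑ i ∈ s, X i)) = ∑ i ∈ s, φ (star (X i) * (x * X i)) := by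
  rw [← Finset.sum_coe_sort s, ← Finset.sum_coe_sort s fun i => φ (star (X i) * (x * X i))]
  exact apply_sum_sum φ x (fun i : s => X i) fun i j hij =>
    h i i.2 j j.2 fun e => hij (Subtype.ext e)

/-- The vector state of `V a b` is approximated by the contribution of the tilings where the
origin is covered by a prescribed part of a tile. -/
theorem norm_Ω_V_sub_le {a b : ℤ} (ha : a ≤ 0) (hb : 0 < b) {l : ℕ} {x : T}
    (hx : x ∈ L.loc (Set.Ico 0 l)) {O : Finset ℕ} (hO : ∀ o ∈ O, n < o ∧ o < R ∧ o + l ≤ R) :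
    ‖L.Ω (star (t.V a b) * (x * t.V a b)) - ∑ o ∈ O, (t.w (-o - a) * t.w (b + o) : ℝ) *
      (2 * L.Ω (star (t.τ (-o)) * (x * t.τ (-o))))‖ ≤
    2 * ‖x‖ * (√(t.w (b - a) - ∑ o ∈ O, t.w (-o - a) * t.w (b + o)) * √(t.w (b - a))) := by
  set G := ∑ o ∈ O, t.X a b o with hG
  set B := ∑ o ∈ Finset.range (R + 1) \ O, t.X a b o with hB
  have hOR : O ⊆ Finset.range (R + 1) := fun o ho => Finset.mem_range.mpr (by have := hO o ho; omega)
  have hV : t.V a b = G + B := by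
    rw [V_eq_sum_X t ha hb, hG, hB, add_comm (∑ o ∈ O, _), Finset.sum_sdiff hOR]
  have hp := L.isState.pos
  have hGB : L.Ω (star G * B) = 0 := by
    rw [hG, hB, star_sum, Finset.sum_mul_sum, map_sum]
    refine Finset.sum_eq_zero fun o ho => ?_
    rw [map_sum]
    refine Finset.sum_eq_zero fun o' ho' => ?_
    rw [Finset.mem_sdiff, Finset.mem_range] at ho'
    rw [← one_mul (t.X a b o')]
    exact t.Ω_X_eq_zero (ne_of_mem_of_not_mem ho ho'.2) (hO o ho).2.1.le (by omega)
      fun _ _ => one_mem _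
  have hGx : L.Ω (star G * (x * G)) = ∑ o ∈ O, (t.w (-o - a) * t.w (b + o) : ℝ) *
      (2 * L.Ω (star (t.τ (-o)) * (x * t.τ (-o)))) := by
    rw [hG, apply_finset_sum]
    · refine Finset.sum_congr rfl fun o ho => t.Ω_X_self (hO o ho).2.1 hb ?_
      have := hO o ho
      exact mem_Ico_of_subset hx (by omega) (by omega)
    · intro o ho o' ho' h
      have h1 := hO o ho
      have h2 := hO o' ho'
      exact t.Ω_X_eq_zero h h1.2.1.le h2.2.1.le fun u hu => mem_loc_compl hx (by omega)
  have hG1 : sqNorm L.Ω G = ∑ o ∈ O, t.w (-o - a) * t.w (b + o) := by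
    have : (sqNorm L.Ω G : ℂ) = ∑ o ∈ O, (sqNorm L.Ω (t.X a b o) : ℂ) := by
      have h1 := apply_finset_sum O L.Ω 1 (t.X a b) fun o ho o' ho' h =>
        t.Ω_X_eq_zero h (hO o ho).2.1.le (hO o' ho').2.1.le fun _ _ => one_mem _
      simpa only [one_mul, ← hp.coe_sqNorm] using h1
    rw [← Finset.sum_congr rfl fun o ho => t.sqNorm_X (hO o ho).2.1 hb]
    exact_mod_cast this
  have hB1 : sqNorm L.Ω B = t.w (b - a) - ∑ o ∈ O, t.w (-o - a) * t.w (b + o) := by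
    rw [← t.sqNorm_V, hV, sqNorm_add hp hGB, hG1]; ring
  rw [← hB1, ← hGx, ← t.sqNorm_V]
  have e : L.Ω (star (t.V a b) * (x * t.V a b)) - L.Ω (star G * (x * G)) =
      L.Ω (star G * (x * B)) + L.Ω (star B * (x * t.V a b)) := by
    rw [← map_sub, ← map_add, hV]
    congr 1
    rw [star_add]
    noncomm_ring
  rw [e]
  have hGV : √(sqNorm L.Ω G) ≤ √(sqNorm L.Ω (t.V a b)) := by
    refine Real.sqrt_le_sqrt ?_
    rw [hV, sqNorm_add hp hGB]
    linarith [hp.sqNorm_nonneg B]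
  have h1 := hp.norm_mul_le x G B
  have h2 := hp.norm_mul_le x B (t.V a b)
  have h3 : ‖x‖ * √(sqNorm L.Ω G) * √(sqNorm L.Ω B) ≤
      ‖x‖ * √(sqNorm L.Ω (t.V a b)) * √(sqNorm L.Ω B) := by gcongr
  refine (norm_add_le _ _).trans ((add_le_add (h1.trans h3) h2).trans_eq ?_)
  ring

end LocalSystem.Tile

namespace LocalSystem.Tile
open Filter Topology
variable {T : Type*} [CStarAlgebra T] {L : LocalSystem T} {mk : L.Marker} {n R : ℕ}
  (t : Tile mk n R)

theorem norm_sub_sum_le {ψ : T →L[ℂ] ℂ}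
    (h : ∀ x ∈ L.loc Set.univ,
      Tendsto (fun p : ℤ × ℤ => t.ρ p.1 p.2 x) (atBot ×ˢ atTop) (𝓝 (ψ x)))
    {l : ℕ} {x : T} (hx : x ∈ L.loc (Set.Ico 0 l)) {O : Finset ℕ}
    (hO : ∀ o ∈ O, n < o ∧ o < R ∧ o + l ≤ R) :
    ‖ψ x - wLim R * ∑ o ∈ O, 2 * L.Ω (star (t.τ (-o)) * (x * t.τ (-o)))‖ ≤
      2 * ‖x‖ * √(1 - O.card * wLim R) := by
  set c : ℕ → ℂ := fun o => 2 * L.Ω (star (t.τ (-o)) * (x * t.τ (-o)))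
  have hw0 := wLim_pos R
  have hcast : Tendsto (fun M : ℕ => (M : ℤ)) atTop atTop := tendsto_natCast_atTop_atTop
  have hW : Tendsto (fun M : ℕ => t.w (M - -M)) atTop (𝓝 (wLim R)) := by
    have h0 : Tendsto (fun M : ℕ => (M : ℤ) - -M) atTop atTop := by
      simp only [sub_neg_eq_add]
      exact hcast.atTop_add_atTop hcast
    have h1 := t.tendsto_w.comp h0
    exact h1
  have hp : ∀ o : ℕ, Tendsto (fun M : ℕ => t.w (-o - -M) * t.w (M + o)) atTop
      (𝓝 (wLim R * wLim R)) := by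
    intro o
    have h0 : Tendsto (fun M : ℕ => -(o : ℤ) - -M) atTop atTop := by
      simp only [sub_neg_eq_add]
      exact tendsto_atTop_add_const_left _ _ hcast
    have h1 := t.tendsto_w.comp h0
    have h2 := t.tendsto_w.comp (tendsto_atTop_add_const_right _ (o : ℤ) hcast)
    exact h1.mul h2
  have hρ : Tendsto (fun M : ℕ => t.ρ (-M) M x) atTop (𝓝 (ψ x)) := by
    have h0 := tendsto_neg_prod
    have h1 := (h x (L.mono (Set.subset_univ _) hx)).comp h0
    exact h1
  have hl : Tendsto (fun M : ℕ => t.ρ (-M) M x -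
      (∑ o ∈ O, (t.w (-o - -M) * t.w (M + o) : ℝ) * c o) / (t.w (M - -M) : ℝ)) atTop
      (𝓝 (ψ x - (∑ o ∈ O, (wLim R * wLim R : ℝ) * c o) / (wLim R : ℝ))) := by
    refine hρ.sub (Tendsto.div (tendsto_finsetSum _ fun o _ => ?_) ?_ (by exact_mod_cast hw0.ne'))
    · exact ((Complex.continuous_ofReal.tendsto _).comp (hp o)).mul_const _
    · exact (Complex.continuous_ofReal.tendsto _).comp hW
  have hr : Tendsto (fun M : ℕ => 2 * ‖x‖ * (√(t.w (M - -M) -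
      ∑ o ∈ O, t.w (-o - -M) * t.w (M + o)) * √(t.w (M - -M))) / t.w (M - -M)) atTop
      (𝓝 (2 * ‖x‖ * (√(wLim R - ∑ o ∈ O, wLim R * wLim R) * √(wLim R)) / wLim R)) := by
    refine Tendsto.div (Tendsto.const_mul _ (Tendsto.mul ?_ hW.sqrt)) hW hw0.ne'
    exact (hW.sub (tendsto_finsetSum _ fun o _ => hp o)).sqrt
  have hle := le_of_tendsto_of_tendsto hl.norm hr (by
    filter_upwards [eventually_gt_atTop 0, hW.eventually_const_lt hw0] with M hM hM'
    have h1 := t.norm_Ω_V_sub_le (a := -M) (b := M) (by omega) (by omega) hx hO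
    rw [ρ, ← sub_div, norm_div, Complex.norm_real, Real.norm_of_nonneg hM'.le]
    gcongr)
  have e1 : (∑ o ∈ O, ((wLim R * wLim R : ℝ) : ℂ) * c o) / (wLim R : ℝ) =
      wLim R * ∑ o ∈ O, c o := by
    have : (wLim R : ℂ) ≠ 0 := by exact_mod_cast hw0.ne'
    rw [← Finset.mul_sum]
    push_cast
    field_simp
  have e2 : √(wLim R - ∑ o ∈ O, wLim R * wLim R) * √(wLim R) / wLim R =
      √(1 - O.card * wLim R) := by
    rw [Finset.sum_const, nsmul_eq_mul,
      show wLim R - O.card * (wLim R * wLim R) = wLim R * (1 - O.card * wLim R) by ring,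
      Real.sqrt_mul hw0.le, mul_right_comm, Real.mul_self_sqrt hw0.le, mul_div_cancel_left₀ _ hw0.ne']
  rw [e1, mul_div_assoc, e2] at hle
  exact hle

end LocalSystem.Tile

namespace LocalSystem
open Filter Topology
variable {T : Type*} [CStarAlgebra T] {L : LocalSystem T} {mk : L.Marker}

theorem ratio_bound {l n K : ℕ} (hl : l ≤ n) (hK : 0 < K) :
    0 ≤ 1 - ((K * (n - l + 1) : ℕ) : ℝ) * Tile.wLim ((K + 1) * (n + 1) + 1) ∧
    1 - ((K * (n - l + 1) : ℕ) : ℝ) * Tile.wLim ((K + 1) * (n + 1) + 1) ≤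
      3 / K + l / (n + 1) := by
  obtain ⟨d, rfl⟩ := Nat.exists_eq_add_of_le hl
  rw [Nat.add_sub_cancel_left, Tile.wLim]
  push_cast
  have hK' : (1 : ℝ) ≤ K := by exact_mod_cast hK
  have hd : (0 : ℝ) ≤ d := by positivity
  have hl : (0 : ℝ) ≤ l := by positivity
  have hD : 0 < ((K : ℝ) + 1) * (l + d + 1) + 1 + 1 / 2 := by positivity
  have hp : 0 ≤ (K : ℝ) * l := by positivity
  have e : 1 - (K : ℝ) * (d + 1) * (1 / ((K + 1) * (l + d + 1) + 1 + 1 / 2)) =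
      (K * l + (l + d + 1) + 3 / 2) / ((K + 1) * (l + d + 1) + 1 + 1 / 2) := by
    field_simp
    ring
  rw [e]
  refine ⟨by positivity, ?_⟩
  have e2 : 3 / (K : ℝ) + l / (l + d + 1) = (3 * (l + d + 1) + K * l) / (K * (l + d + 1)) := by
    field_simp
  rw [e2]
  have h1 : (K : ℝ) * l + (l + d + 1) + 3 / 2 ≤ 3 * (l + d + 1) + K * l := by linarith
  have h2 : (K : ℝ) * (l + d + 1) ≤ (K + 1) * (l + d + 1) + 1 + 1 / 2 := by nlinarith
  gcongr

end LocalSystem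

namespace LocalSystem
open Filter Topology
variable {T : Type*} [CStarAlgebra T] {L : LocalSystem T} {mk : L.Marker}

theorem Tile.two_mul_Ω_τ {n R : ℕ} (t : Tile mk n R) {i : ℤ} {j l : ℕ} (hj : j + l ≤ n) {x y z : T}
    (hx : x ∈ L.loc (Set.Ico 0 l)) (hy : y ∈ L.loc (Set.Ico 0 n)) (hy1 : sqNorm L.Ω y = 1)
    (hz : z ∈ L.loc (Set.Ico (-j : ℤ) (-j + n))ᶜ) (e : t.τ i = L.sh (-j) y * z) :
    2 * L.Ω (star (t.τ i) * (x * t.τ i)) = L.Ω (star y * (L.sh j x * y)) := by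
  have hy' : L.sh (-j) y ∈ L.loc (Set.Ico (-j : ℤ) (-j + n)) := by
    refine L.sh_mem _ (fun i hi => ?_) hy
    rw [Set.mem_Ico] at hi ⊢
    omega
  have hx' : x ∈ L.loc (Set.Ico (-j : ℤ) (-j + n)) := mem_Ico_of_subset hx (by omega) (by omega)
  have h1 := t.sqNorm_τ i
  rw [e, L.sqNorm_mul disjoint_compl_right hy' hz, L.sqNorm_sh, hy1, one_mul] at h1
  have e1 : star (L.sh (-j) y * z) * (x * (L.sh (-j) y * z)) =
      star (L.sh (-j) y) * (x * L.sh (-j) y) * (star z * z) := by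
    have hc := L.commute disjoint_compl_left (star_mem hz)
      (mul_mem (star_mem hy') (mul_mem hx' hy'))
    calc _ = star z * (star (L.sh (-j) y) * (x * L.sh (-j) y)) * z := by
          simp only [star_mul, mul_assoc]
      _ = _ := by rw [hc]; simp only [mul_assoc]
  have e2 : L.Ω (star (L.sh (-j) y) * (x * L.sh (-j) y)) = L.Ω (star y * (L.sh j x * y)) := by
    rw [← L.Ω_sh j, _root_.map_mul (L.sh j), _root_.map_mul (L.sh j), map_star, ← L.sh_add]
    rw [add_neg_cancel, L.sh_zero]
  rw [e, e1, L.map_mul disjoint_compl_right (mul_mem (star_mem hy') (mul_mem hx' hy'))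
    (mul_mem (star_mem hz) hz), ← L.isState.pos.coe_sqNorm z, h1, e2]
  push_cast
  ring

theorem injOn_tile_position {n K m : ℕ} (hm : m ≤ n + 1) :
    Set.InjOn (fun p : ℕ × ℕ => (p.1 + 1) * (n + 1) + 1 + p.2)
      ((Finset.range K ×ˢ Finset.range m : Finset (ℕ × ℕ)) : Set (ℕ × ℕ)) := by
  rintro ⟨k, j⟩ h ⟨k', j'⟩ h' e
  simp only [Finset.coe_product, Set.mem_prod, Finset.mem_coe, Finset.mem_range] at h h' e
  have h1 : k = k' := by
    rcases lt_trichotomy k k' with h2 | h2 | h2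
    · have := Nat.mul_le_mul_right (n + 1) (show k + 1 + 1 ≤ k' + 1 by omega)
      rw [Nat.add_mul (k + 1), one_mul] at this
      omega
    · exact h2
    · have := Nat.mul_le_mul_right (n + 1) (show k' + 1 + 1 ≤ k + 1 by omega)
      rw [Nat.add_mul (k' + 1), one_mul] at this
      omega
  subst h1
  rw [Prod.mk.injEq]
  omega

/-- An invariant state can be approximated on finitely many local elements by an invariant pure
state. -/
theorem exists_isPureState_near (mk : L.Marker) {φ : T →L[ℂ] ℂ} (hφ : IsState φ)
    (hinv : ∀ (c : ℤ) x, φ (L.sh c x) = φ x) {ι : Type*} [Fintype ι] {l : ℕ} {x : ι → T}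
    (hx : ∀ i, x i ∈ L.loc (Set.Ico 0 l)) {ε : ℝ} (hε : 0 < ε) :
    ∃ ψ : T →L[ℂ] ℂ, IsPureState ψ ∧ (∀ y, ψ (L.sh 1 y) = ψ y) ∧ ∀ i, ‖ψ (x i) - φ (x i)‖ ≤ ε := by
  set C : ℝ := 1 + ∑ i, ‖x i‖ with hC
  have hCx : ∀ i, ‖x i‖ ≤ C := fun i => by
    have := Finset.single_le_sum (f := fun i => ‖x i‖) (fun i _ => norm_nonneg _)
      (Finset.mem_univ i)
    rw [hC]
    linarith
  have hC1 : 1 ≤ C := le_add_of_nonneg_right (Finset.sum_nonneg fun i _ => norm_nonneg _)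
  have hC0 : 0 < C := by linarith
  set δ : ℝ := (ε / (6 * C)) ^ 2 with hδ
  have hδ0 : 0 < δ := by positivity
  obtain ⟨n₀, hn₀⟩ := exists_nat_gt ((l : ℝ) / (δ / 2))
  set n := n₀ + l with hn
  have hnl : (l : ℝ) / (n + 1) ≤ δ / 2 := by
    rw [div_lt_iff₀ (by positivity)] at hn₀
    rw [div_le_iff₀ (by positivity), hn]
    push_cast
    nlinarith [show (0 : ℝ) ≤ l by positivity]
  obtain ⟨K₀, hK₀⟩ := exists_nat_gt (3 / (δ / 2))
  have hln : l ≤ n := by omega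
  have hJ : ∀ p : ι × Fin (n - l + 1), L.sh (p.2 : ℕ) (x p.1) ∈
      L.loc ((Finset.Ico (0 : ℤ) n : Finset ℤ) : Set ℤ) := by
    intro p
    have := p.2.2
    refine L.sh_mem _ (fun i hi => ?_) (hx p.1)
    rw [Finset.coe_Ico, Set.mem_Ico]
    rw [Set.mem_Ico] at hi
    omega
  obtain ⟨K, hKK, hK, ξ, hξ, hav⟩ := L.exists_average hJ hφ (half_pos hε) K₀
  rw [Finset.coe_Ico] at hξ
  set ξ' : ℕ → T := fun k => if h : k < K then ξ ⟨k, h⟩ else 1 with hξ'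
  have hm : ∀ k, ξ' k ∈ L.loc (Set.Ico 0 n) ∧ sqNorm L.Ω (ξ' k) = 1 := by
    intro k
    by_cases h : k < K
    · simp only [hξ', dif_pos h]
      exact hξ _
    · simp only [hξ', dif_neg h]
      exact ⟨one_mem _, L.isState.sqNorm_one⟩
  obtain ⟨t, ht⟩ := exists_tile mk n K (fun k => (hm k).1) fun k => (hm k).2
  obtain ⟨ψ, hψ, hψs, h1, h2⟩ := t.exists_state
  refine ⟨ψ, t.isPureState_of_tendsto hψ h1 h2, hψs, fun i => ?_⟩
  set O := (Finset.range K ×ˢ Finset.range (n - l + 1)).image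
    fun p : ℕ × ℕ => (p.1 + 1) * (n + 1) + 1 + p.2 with hO
  have hinj := injOn_tile_position (n := n) (K := K) (m := n - l + 1) (by omega)
  have hOb : ∀ o ∈ O, n < o ∧ o < (K + 1) * (n + 1) + 1 ∧ o + l ≤ (K + 1) * (n + 1) + 1 := by
    intro o ho
    simp only [hO, Finset.mem_image, Finset.mem_product, Finset.mem_range, Prod.exists] at ho
    obtain ⟨k, j, ⟨hk, hj⟩, rfl⟩ := ho
    have e1 := Nat.mul_le_mul_right (n + 1) (show k + 1 ≤ K by omega)
    have e2 : n + 1 ≤ (k + 1) * (n + 1) := Nat.le_mul_of_pos_left _ (by omega)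
    have e3 : (K + 1) * (n + 1) = K * (n + 1) + (n + 1) := by ring
    omega
  have hOc : O.card = K * (n - l + 1) := by
    rw [hO, Finset.card_image_of_injOn hinj, Finset.card_product, Finset.card_range,
      Finset.card_range]
  have hmain := t.norm_sub_sum_le h1 (hx i) hOb
  have hsum : ∑ o ∈ O, 2 * L.Ω (star (t.τ (-o)) * (x i * t.τ (-o))) =
      ∑ j ∈ Finset.range (n - l + 1), ∑ k ∈ Finset.range K,
        L.Ω (star (ξ' k) * (L.sh j (x i) * ξ' k)) := by
    rw [hO, Finset.sum_image hinj, Finset.sum_product_right]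
    refine Finset.sum_congr rfl fun j hj => Finset.sum_congr rfl fun k hk => ?_
    rw [Finset.mem_range] at hj hk
    obtain ⟨z, hz, e⟩ := ht k hk (-(((k + 1) * (n + 1) + 1 + j : ℕ) : ℤ))
    have e0 : -(((k + 1) * (n + 1) + 1 + j : ℕ) : ℤ) + ((k + 1) * (n + 1) + 1) = -j := by
      push_cast; ring
    rw [e0] at hz e
    exact t.two_mul_Ω_τ (by omega) (hx i) (hm k).1 (hm k).2 hz e
  rw [hsum, hOc] at hmain
  have hj : ∀ j ∈ Finset.range (n - l + 1), ‖∑ k ∈ Finset.range K,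
      L.Ω (star (ξ' k) * (L.sh j (x i) * ξ' k)) - K * φ (x i)‖ ≤ K * (ε / 2) := by
    intro j hj
    rw [Finset.mem_range] at hj
    have h3 := (hav (i, ⟨j, hj⟩)).le
    simp only [hinv] at h3
    have h4 : ∑ k ∈ Finset.range K, L.Ω (star (ξ' k) * (L.sh j (x i) * ξ' k)) =
        ∑ k, L.Ω (star (ξ k) * (L.sh j (x i) * ξ k)) := by
      rw [Finset.sum_range]
      refine Finset.sum_congr rfl fun k _ => ?_
      simp only [hξ', dif_pos k.2]
    have hK' : (0 : ℝ) < K := by exact_mod_cast hK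
    have hK'' : (K : ℂ) ≠ 0 := by exact_mod_cast hK.ne'
    rw [h4]
    have h5 : ∑ k, L.Ω (star (ξ k) * (L.sh j (x i) * ξ k)) - K * φ (x i) =
        K * (((K : ℝ)⁻¹ : ℝ) • ∑ k, L.Ω (star (ξ k) * (L.sh j (x i) * ξ k)) - φ (x i)) := by
      rw [Complex.real_smul]
      push_cast
      field_simp
    rw [h5, norm_mul, Complex.norm_natCast]
    gcongr
  set S := ∑ j ∈ Finset.range (n - l + 1), ∑ k ∈ Finset.range K,
        L.Ω (star (ξ' k) * (L.sh j (x i) * ξ' k)) with hS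
  set N : ℕ := K * (n - l + 1) with hN
  have hSN : ‖S - N * φ (x i)‖ ≤ N * (ε / 2) := by
    have e : S - N * φ (x i) = ∑ j ∈ Finset.range (n - l + 1), (∑ k ∈ Finset.range K,
        L.Ω (star (ξ' k) * (L.sh j (x i) * ξ' k)) - K * φ (x i)) := by
      rw [Finset.sum_sub_distrib, Finset.sum_const, Finset.card_range, nsmul_eq_mul, hN]
      push_cast
      ring
    rw [e]
    refine (norm_sum_le_of_le _ hj).trans_eq ?_
    rw [Finset.sum_const, Finset.card_range, nsmul_eq_mul, hN]
    push_cast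
    ring
  obtain ⟨hb0, hb1⟩ := ratio_bound hln hK
  rw [← hN] at hb0 hb1
  set ω := Tile.wLim ((K + 1) * (n + 1) + 1) with hω
  have hω0 : 0 < ω := Tile.wLim_pos _
  set β := 1 - (N : ℝ) * ω with hβ
  have hβδ : β ≤ δ := by
    have hK' : (0 : ℝ) < K := by exact_mod_cast hK
    have : 3 / (K : ℝ) ≤ δ / 2 := by
      rw [div_lt_iff₀ (by positivity)] at hK₀
      rw [div_le_iff₀ hK']
      have : (K₀ : ℝ) ≤ K := by exact_mod_cast hKK
      nlinarith
    linarith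
  have hβ1 : β ≤ 1 := by rw [hβ]; linarith [show 0 ≤ (N : ℝ) * ω by positivity]
  have hβs : β ≤ √β := by
    rw [← Real.sqrt_sq hb0]
    refine Real.sqrt_le_sqrt ?_
    rw [Real.sqrt_sq hb0]
    nlinarith
  have hβ' : √β ≤ ε / (6 * C) := by
    rw [← Real.sqrt_sq (show 0 ≤ ε / (6 * C) by positivity)]
    exact Real.sqrt_le_sqrt hβδ
  have e : ψ (x i) - φ (x i) = (ψ (x i) - ω * S) + ω * (S - N * φ (x i)) - β * φ (x i) := by
    rw [hβ]; push_cast; ring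
  have n1 : ‖(ω : ℂ) * (S - N * φ (x i))‖ ≤ ε / 2 := by
    rw [norm_mul, Complex.norm_real, Real.norm_of_nonneg hω0.le]
    calc ω * ‖S - N * φ (x i)‖ ≤ ω * (N * (ε / 2)) := by gcongr
      _ = (1 - β) * (ε / 2) := by rw [hβ]; ring
      _ ≤ ε / 2 := by nlinarith
  have n2 : ‖(β : ℂ) * φ (x i)‖ ≤ √β * C := by
    rw [norm_mul, Complex.norm_real, Real.norm_of_nonneg hb0]
    have := (hφ.norm_apply_le (x i)).trans (hCx i)
    gcongr
  have n3 : ‖ψ (x i) - ω * S‖ ≤ 2 * C * √β := by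
    refine hmain.trans ?_
    have := hCx i
    gcongr
  have n4 : 3 * C * √β ≤ ε / 2 := by
    calc 3 * C * √β ≤ 3 * C * (ε / (6 * C)) := by gcongr
      _ = ε / 2 := by field_simp; norm_num
  rw [e]
  refine (norm_sub_le _ _).trans ?_
  linarith [norm_add_le (ψ (x i) - ω * S) (ω * (S - N * φ (x i)))]

end LocalSystem

namespace LocalSystem
variable {T : Type*} [CStarAlgebra T] {L : LocalSystem T}

theorem apply_sh_of_apply_sh_one {φ : T →L[ℂ] ℂ} (h : ∀ x, φ (L.sh 1 x) = φ x) (c : ℤ) (x : T) :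
    φ (L.sh c x) = φ x := by
  induction c using Int.induction_on generalizing x with
  | zero => rw [L.sh_zero]
  | succ c ih => rw [L.sh_add, ih, h]
  | pred c ih => rw [sub_eq_add_neg, L.sh_add, ih, ← h, ← L.sh_add, add_neg_cancel, L.sh_zero]

theorem exists_isPureState_near_of_finite (mk : L.Marker) {φ : T →L[ℂ] ℂ} (hφ : IsState φ)
    (hinv : ∀ x, φ (L.sh 1 x) = φ x) (F : Finset T) {ε : ℝ} (hε : 0 < ε) :
    ∃ ψ : T →L[ℂ] ℂ, IsPureState ψ ∧ (∀ y, ψ (L.sh 1 y) = ψ y) ∧ ∀ x ∈ F, ‖ψ x - φ x‖ ≤ ε := by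
  have hφs := apply_sh_of_apply_sh_one hinv
  have hy : ∀ x : T, ∃ y ∈ L.loc Set.univ, ‖x - y‖ < ε / 3 := by
    intro x
    obtain ⟨y, hy, hd⟩ := L.dense.exists_dist_lt x (show 0 < ε / 3 by positivity)
    exact ⟨y, hy, by rwa [dist_eq_norm] at hd⟩
  choose y hy hxy using hy
  choose N hN using fun x => L.exists_Ico (hy x)
  set B : ℕ := F.sup N
  have hBN : ∀ x : F, N x ≤ B := fun x =>
    Finset.le_sup (f := N) x.2
  have hmem : ∀ x : F, L.sh B (y x) ∈ L.loc (Set.Ico 0 (2 * B : ℕ)) := by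
    intro x
    have := hBN x
    refine L.sh_mem _ (fun i hi => ?_) (hN x)
    rw [Set.mem_Ico] at hi ⊢
    omega
  obtain ⟨ψ, hψ, hψi, hle⟩ := exists_isPureState_near mk hφ hφs hmem (show 0 < ε / 3 by positivity)
  refine ⟨ψ, hψ, hψi, fun x hx => ?_⟩
  have h1 := hle ⟨x, hx⟩
  simp only [hφs, apply_sh_of_apply_sh_one hψi] at h1
  have h2 := (hψ.1.norm_apply_le (x - y x)).trans (hxy x).le
  have h3 := (hφ.norm_apply_le (x - y x)).trans (hxy x).le
  have e : ψ x - φ x = ψ (x - y x) + (ψ (y x) - φ (y x)) - φ (x - y x) := by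
    rw [map_sub, map_sub]; ring
  rw [e]
  refine (norm_sub_le _ _).trans ?_
  linarith [norm_add_le (ψ (x - y x)) (ψ (y x) - φ (y x))]

end LocalSystem

/-- Approximation on finite sets gives density in the topology of pointwise convergence. -/
theorem mem_closure_of_forall_finset {T : Type*} {P : Set (T → ℂ)} {f : T → ℂ}
    (h : ∀ (F : Finset T) (ε : ℝ), 0 < ε → ∃ g ∈ P, ∀ x ∈ F, ‖g x - f x‖ ≤ ε) : f ∈ closure P := by
  rw [mem_closure_iff_nhds]
  intro U hU
  rw [nhds_pi, Filter.mem_pi'] at hU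
  obtain ⟨F, V, hV, hsub⟩ := hU
  have hr : ∀ x, ∃ r > 0, Metric.closedBall (f x) r ⊆ V x := fun x =>
    Metric.nhds_basis_closedBall.mem_iff.mp (hV x)
  choose r hr hrV using hr
  obtain ⟨ε, hε, hle⟩ : ∃ ε > 0, ∀ x ∈ F, ε ≤ r x := by
    rcases F.eq_empty_or_nonempty with rfl | hF
    · exact ⟨1, one_pos, by simp⟩
    · obtain ⟨x₀, -, h₀⟩ := F.exists_min_image r hF
      exact ⟨r x₀, hr x₀, h₀⟩
  obtain ⟨g, hg, hgF⟩ := h F ε hε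
  refine ⟨g, hsub fun x hx => hrV x ?_, hg⟩
  rw [Metric.mem_closedBall, dist_eq_norm]
  exact (hgF x hx).trans (hle x hx)

/-- **Proposition 4.2**: for the shift automorphism on the two-sided infinite (minimal) tensor
product of a unital prime AF-algebra, the invariant pure states are weak*-dense in the
invariant states. -/
theorem shift_invariant_pure_states_dense_of_prime_AF
    {A : Type*} [CStarAlgebra A] (hprime : IsPrimeCStar A) (hAF : IsAF A)
    {T : Type*} [CStarAlgebra T] (M : ShiftTensorModel A T) :
    {f : T → ℂ | ∃ φ : T →L[ℂ] ℂ, IsState φ ∧ (∀ x, φ (M.shift x) = φ x) ∧ f = ⇑φ} ⊆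
      closure {f : T → ℂ | ∃ φ : T →L[ℂ] ℂ, IsPureState φ ∧ (∀ x, φ (M.shift x) = φ x) ∧
        f = ⇑φ} := by
  rintro _ ⟨φ, hφ, hinv, rfl⟩
  have hT : Nontrivial T := hφ.nontrivial
  have hA : Nontrivial A := by
    refine ⟨0, 1, fun h => zero_ne_one (α := T) ?_⟩
    rw [← map_zero (M.e 0), h, map_one]
  obtain ⟨E⟩ := exists_excisedState hprime hAF
  by_cases h : ∀ v ∈ E.D, E.ω v = 0 → E.ω (star v * v) ≠ 1
  · exact subset_closure ⟨φ, M.isPureState_of_trivial E h hφ, hinv, rfl⟩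
  · push Not at h
    obtain ⟨v, hv, h0, h1⟩ := h
    obtain ⟨Ω, hΩ⟩ := M.exists_isProd fun _ => E.isState
    refine mem_closure_of_forall_finset fun F ε hε => ?_
    obtain ⟨ψ, hψ, hψi, hle⟩ := LocalSystem.exists_isPureState_near_of_finite
      (M.marker E hΩ hv h0 h1) hφ (fun x => (congrArg φ (M.sh_one x)).trans (hinv x)) F hε
    exact ⟨ψ, ⟨ψ, hψ, fun x => (congrArg ψ (M.sh_one x)).symm.trans (hψi x), rfl⟩, hle⟩
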